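/- arXiv:1012.3541 — 2 statements merged into one kernel-verified Lean document; each statement's English description precedes it below -/
import Mathlib

section
/- Let P be a simple closed 5-gon in ℝ². Then the closed region cl(int P) = P ∪ int P is star-shaped with respect to some vertex of P; equivalently, there is a vertex q of P such that for every x ∈ P ∪ int P the segment [q,x] is contained in P ∪ int P. -/
open Set Metric

abbrev Plane := EuclideanSpace ℝ (Fin 2)

/-- The `i`-th edge of the closed polygon with vertex cycle `p`. -/
def polyEdge {n : ℕ} (p : ZMod n → Plane) (i : ZMod n) : Set Plane :=
  segment ℝ (p i) (p (i + 1))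

/-- The union of the edges of the closed polygon with vertex cycle `p`. -/
def polyBody {n : ℕ} (p : ZMod n → Plane) : Set Plane :=
  ⋃ i, polyEdge p i

/-- `p` is the vertex cycle of a simple closed `n`-gon: distinct vertices,
consecutive edges meet exactly in their common endpoint, non-consecutive edges
are disjoint. -/
structure IsSimplePolygon {n : ℕ} (p : ZMod n → Plane) : Prop where
  three_le : 3 ≤ n
  inj : Function.Injective p
  consec : ∀ i : ZMod n, polyEdge p i ∩ polyEdge p (i + 1) = {p (i + 1)}
  nonconsec : ∀ i j : ZMod n, j ≠ i → j ≠ i + 1 → i ≠ j + 1 →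
    polyEdge p i ∩ polyEdge p j = ∅

/-- The union of the bounded connected components of the complement of `P`
(the Jordan interior of `P`). -/
def intP (P : Set Plane) : Set Plane :=
  {x | x ∉ P ∧ Bornology.IsBounded (connectedComponentIn Pᶜ x)}

/-- The union of the unbounded connected components of the complement of `P`
(the Jordan exterior of `P`). -/
def extP (P : Set Plane) : Set Plane :=
  {x | x ∉ P ∧ ¬ Bornology.IsBounded (connectedComponentIn Pᶜ x)}

/-- There is a polygonal path of `k` segments from `a` to `b` inside `S`. -/
def PolyPath (S : Set Plane) (a b : Plane) (k : ℕ) : Prop :=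
  ∃ x : Fin (k + 1) → Plane, x 0 = a ∧ x (Fin.last k) = b ∧
    ∀ i : Fin k, segment ℝ (x i.castSucc) (x i.succ) ⊆ S

/-- The minimal number of segments of a polygonal path from `a` to `b` in `S`. -/
noncomputable def polyDist (S : Set Plane) (a b : Plane) : ℕ :=
  sInf {k | PolyPath S a b k}
/-- Twice the signed area of the triangle `A B C`. -/
noncomputable def cr (A B C : Plane) : ℝ :=
  (B 0 - A 0) * (C 1 - A 1) - (B 1 - A 1) * (C 0 - A 0)

/-- Closed triangle, via half planes. -/
def Tri (A B C : Plane) : Set Plane :=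
  {x | 0 ≤ cr A B x ∧ 0 ≤ cr B C x ∧ 0 ≤ cr C A x}

lemma plane_ext {x y : Plane} (h0 : x 0 = y 0) (h1 : x 1 = y 1) : x = y := by
  ext i; fin_cases i
  · exact h0
  · exact h1

lemma cr_cont (A B : Plane) : Continuous (fun x : Plane => cr A B x) := by
  unfold cr; fun_prop

lemma cr_comb (A B x y : Plane) (a b : ℝ) (h : a + b = 1) :
    cr A B (a • x + b • y) = a * cr A B x + b * cr A B y := by
  have : a = 1 - b := by linarith
  subst this
  simp [cr]; ring

lemma cr_half_convex (A B : Plane) : Convex ℝ {x : Plane | 0 ≤ cr A B x} := by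
  intro x hx y hy a b ha hb hab
  simp only [mem_ofPred_eq] at *
  rw [cr_comb _ _ _ _ _ _ hab]; positivity

lemma tri_convex (A B C : Plane) : Convex ℝ (Tri A B C) :=
  (cr_half_convex A B).inter ((cr_half_convex B C).inter (cr_half_convex C A))

lemma tri_closed (A B C : Plane) : IsClosed (Tri A B C) :=
  (isClosed_le continuous_const (cr_cont A B)).inter
    ((isClosed_le continuous_const (cr_cont B C)).inter
      (isClosed_le continuous_const (cr_cont C A)))

lemma cr_cyc (A B C : Plane) : cr B C A = cr A B C := by simp only [cr]; ring
lemma cr_cyc' (A B C : Plane) : cr C A B = cr A B C := by simp only [cr]; ring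
lemma cr_swap (A B C : Plane) : cr A C B = - cr A B C := by simp only [cr]; ring
lemma cr_l (A B : Plane) : cr A B A = 0 := by simp only [cr]; ring
lemma cr_r (A B : Plane) : cr A B B = 0 := by simp only [cr]; ring

lemma tri_mem1 {A B C : Plane} (h : 0 < cr A B C) : A ∈ Tri A B C := by
  refine ⟨(cr_l A B).ge, ?_, (cr_r C A).ge⟩
  rw [cr_cyc]; exact h.le
lemma tri_mem2 {A B C : Plane} (h : 0 < cr A B C) : B ∈ Tri A B C := by
  refine ⟨(cr_r A B).ge, (cr_l B C).ge, ?_⟩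
  rw [cr_cyc']; exact h.le
lemma tri_mem3 {A B C : Plane} (h : 0 < cr A B C) : C ∈ Tri A B C :=
  ⟨h.le, (cr_r B C).ge, (cr_l C A).ge⟩

lemma tri_edge {A B C x : Plane} (h : 0 < cr A B C) (hx : x ∈ Tri A B C) (h0 : cr A B x = 0) :
    ∃ s : ℝ, 0 ≤ s ∧ s ≤ 1 ∧ x = (1 - s) • A + s • B := by
  obtain ⟨_, h2, h3⟩ := hx
  have hs : cr A B x + cr B C x + cr C A x = cr A B C := by simp only [cr]; ring
  refine ⟨cr C A x / cr A B C, by positivity, ?_, ?_⟩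
  · rw [div_le_one h]; linarith
  · have e : cr C A x / cr A B C * cr A B C = cr C A x := by field_simp
    set s := cr C A x / cr A B C
    have hne := h.ne'
    apply plane_ext
    · apply mul_left_cancel₀ hne
      simp only [PiLp.add_apply, PiLp.smul_apply, smul_eq_mul]
      simp only [cr] at *
      linear_combination (A 0 - B 0) * e + (C 0 - A 0) * h0
    · apply mul_left_cancel₀ hne
      simp only [PiLp.add_apply, PiLp.smul_apply, smul_eq_mul]
      simp only [cr] at *
      linear_combination (A 1 - B 1) * e + (C 1 - A 1) * h0

lemma mem_seg_of {A B x : Plane} {s : ℝ} (h0 : 0 ≤ s) (h1 : s ≤ 1)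
    (e : x = (1 - s) • A + s • B) : x ∈ segment ℝ A B :=
  ⟨1 - s, s, by linarith, h0, by ring, e.symm⟩

lemma tri_edge_seg {A B C x : Plane} (h : 0 < cr A B C) (hx : x ∈ Tri A B C)
    (h0 : cr A B x = 0) : x ∈ segment ℝ A B := by
  obtain ⟨s, h1, h2, e⟩ := tri_edge h hx h0
  exact mem_seg_of h1 h2 e

lemma tri_rot {A B C x : Plane} (hx : x ∈ Tri A B C) : x ∈ Tri B C A :=
  ⟨hx.2.1, hx.2.2, hx.1⟩

lemma tri_bdd {A B C : Plane} (h : 0 < cr A B C) : Bornology.IsBounded (Tri A B C) := by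
  refine (isBounded_iff_forall_norm_le).2 ⟨‖A‖ + ‖B‖ + ‖C‖, ?_⟩
  rintro x ⟨h1, h2, h3⟩
  have hs : cr A B x + cr B C x + cr C A x = cr A B C := by simp only [cr]; ring
  have e : x = (cr B C x / cr A B C) • A + (cr C A x / cr A B C) • B
      + (cr A B x / cr A B C) • C := by
    have hne := h.ne'
    apply plane_ext
    · simp only [PiLp.add_apply, PiLp.smul_apply, smul_eq_mul]
      field_simp
      simp only [cr]; ring
    · simp only [PiLp.add_apply, PiLp.smul_apply, smul_eq_mul]
      field_simp
      simp only [cr]; ring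
  have key : ∀ (c : ℝ) (v : Plane), 0 ≤ c → c ≤ cr A B C → ‖(c / cr A B C) • v‖ ≤ ‖v‖ := by
    intro c v hc hc'
    rw [norm_smul, Real.norm_of_nonneg (by positivity)]
    exact mul_le_of_le_one_left (norm_nonneg _) ((div_le_one h).2 hc')
  calc ‖x‖ = ‖(cr B C x / cr A B C) • A + (cr C A x / cr A B C) • B
      + (cr A B x / cr A B C) • C‖ := by rw [← e]
    _ ≤ _ := norm_add₃_le
    _ ≤ _ := by
      gcongr <;> apply key <;> linarith

lemma tri_int {A B C x : Plane} (h1 : 0 < cr A B x) (h2 : 0 < cr B C x) (h3 : 0 < cr C A x) :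
    x ∈ interior (Tri A B C) := by
  rw [mem_interior]
  refine ⟨{x | 0 < cr A B x} ∩ ({x | 0 < cr B C x} ∩ {x | 0 < cr C A x}), ?_, ?_, h1, h2, h3⟩
  · rintro y ⟨a, b, c⟩; exact ⟨le_of_lt a, le_of_lt b, le_of_lt c⟩
  · exact (isOpen_lt continuous_const (cr_cont A B)).inter
      ((isOpen_lt continuous_const (cr_cont B C)).inter
        (isOpen_lt continuous_const (cr_cont C A)))

/-- Points of the open common edge are interior to the union of the two triangles. -/
lemma two_tri {q a b c x : Plane} (h1 : 0 < cr q a b) (h2 : 0 < cr q b c) {s : ℝ}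
    (h0 : 0 < s) (hs : s < 1) (e : x = (1 - s) • q + s • b) :
    x ∈ interior (Tri q a b ∪ Tri q b c) := by
  have hs' : 0 < 1 - s := by linarith
  rw [mem_interior]
  refine ⟨({x | 0 < cr q a x} ∩ {x | 0 < cr a b x}) ∩ ({x | 0 < cr b c x} ∩ {x | 0 < cr c q x}),
    ?_, ?_, ?_⟩
  · rintro y ⟨⟨y1, y2⟩, y3, y4⟩
    simp only [mem_ofPred_eq] at y1 y2 y3 y4
    have hsw : cr b q y = - cr q b y := by simp only [cr]; ring
    rcases le_total 0 (cr q b y) with hy | hy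
    · exact Or.inr ⟨hy, y3.le, y4.le⟩
    · exact Or.inl ⟨y1.le, y2.le, by linarith⟩
  · exact ((isOpen_lt continuous_const (cr_cont _ _)).inter
      (isOpen_lt continuous_const (cr_cont _ _))).inter
      ((isOpen_lt continuous_const (cr_cont _ _)).inter
      (isOpen_lt continuous_const (cr_cont _ _)))
  · subst e
    have hh : (1 - s) + s = 1 := by ring
    simp only [mem_inter_iff, mem_ofPred_eq, cr_comb _ _ _ _ _ _ hh, cr_l, cr_r, mul_zero,
      add_zero, zero_add]
    refine ⟨⟨by positivity, ?_⟩, ?_, ?_⟩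
    · rw [cr_cyc]; positivity
    · rw [cr_cyc]; positivity
    · rw [cr_cyc']; positivity

/-- The topological core. -/
lemma region_eq {P T : Set Plane} {q : Plane} (hT : Bornology.IsBounded T) (hc : IsClosed T)
    (hq : q ∈ T) (hstar : ∀ x ∈ T, segment ℝ q x ⊆ T) (hPT : P ⊆ T)
    (hint : ∀ x ∈ T, x ∉ P → x ∈ interior T) : P ∪ intP P = T := by
  apply Subset.antisymm
  · apply union_subset hPT
    rintro x ⟨hxP, hb⟩
    by_contra hxT
    have hne : x - q ≠ 0 := by
      intro h; rw [sub_eq_zero] at h; exact hxT (h ▸ hq)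
    have hray : (fun t : ℝ => q + t • (x - q)) '' Ici 1 ⊆ connectedComponentIn Pᶜ x := by
      apply IsPreconnected.subset_connectedComponentIn
      · exact isPreconnected_Ici.image _ (by fun_prop)
      · exact ⟨1, by simp, by simp⟩
      · rintro _ ⟨t, ht, rfl⟩ hm
        apply hxT
        have ht' : (1 : ℝ) ≤ t := ht
        have ht0 : (0 : ℝ) < t := by linarith
        apply hstar _ (hPT hm)
        refine ⟨1 - t⁻¹, t⁻¹, ?_, by positivity, by ring, ?_⟩
        · rw [sub_nonneg]; exact inv_le_one_of_one_le₀ ht'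
        · simp only [smul_add, smul_smul, inv_mul_cancel₀ ht0.ne', one_smul]
          module
    have hb' := hb.subset hray
    obtain ⟨R, hR⟩ := isBounded_iff_forall_norm_le.1 hb'
    have hpos : 0 < ‖x - q‖ := norm_pos_iff.2 hne
    have h1 := hR _ ⟨1 + (|R| + ‖q‖) / ‖x - q‖, by
      show (1 : ℝ) ≤ _
      have : 0 ≤ (|R| + ‖q‖) / ‖x - q‖ := by positivity
      linarith, rfl⟩
    have h2 : ‖(1 + (|R| + ‖q‖) / ‖x - q‖) • (x - q)‖ = ‖x - q‖ + (|R| + ‖q‖) := by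
      rw [norm_smul, Real.norm_of_nonneg (by positivity)]
      field_simp
    have h3 := norm_sub_le (q + (1 + (|R| + ‖q‖) / ‖x - q‖) • (x - q)) q
    rw [add_sub_cancel_left, h2] at h3
    simp only at h1
    have := le_abs_self R
    linarith
  · intro x hx
    by_cases hxP : x ∈ P
    · exact Or.inl hxP
    refine Or.inr ⟨hxP, hT.subset ?_⟩
    have hsub : connectedComponentIn Pᶜ x ⊆ interior T := by
      apply IsPreconnected.subset_left_of_subset_union isOpen_interior hc.isOpen_compl
      · exact disjoint_compl_right.mono_left interior_subset
      · intro y hy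
        have hyP := connectedComponentIn_subset _ _ hy
        by_cases hyT : y ∈ T
        · exact Or.inl (hint y hyT hyP)
        · exact Or.inr hyT
      · exact ⟨x, mem_connectedComponentIn hxP, hint x hx hxP⟩
      · exact isPreconnected_connectedComponentIn
    exact hsub.trans interior_subset

lemma fan_pos {P : Set Plane} {q a b c d : Plane}
    (hP : P = segment ℝ q a ∪ segment ℝ a b ∪ segment ℝ b c ∪ segment ℝ c d ∪ segment ℝ d q)
    (h1 : 0 < cr q a b) (h2 : 0 < cr q b c) (h3 : 0 < cr q c d) :
    ∀ x ∈ P ∪ intP P, segment ℝ q x ⊆ P ∪ intP P := by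
  have sub1 : Tri q a b ⊆ Tri q a b ∪ Tri q b c ∪ Tri q c d := fun x hx => Or.inl (Or.inl hx)
  have sub2 : Tri q b c ⊆ Tri q a b ∪ Tri q b c ∪ Tri q c d := fun x hx => Or.inl (Or.inr hx)
  have sub3 : Tri q c d ⊆ Tri q a b ∪ Tri q b c ∪ Tri q c d := fun x hx => Or.inr hx
  have hstar : ∀ x ∈ Tri q a b ∪ Tri q b c ∪ Tri q c d,
      segment ℝ q x ⊆ Tri q a b ∪ Tri q b c ∪ Tri q c d := by
    rintro x ((hx | hx) | hx)
    · exact ((tri_convex _ _ _).segment_subset (tri_mem1 h1) hx).trans sub1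
    · exact ((tri_convex _ _ _).segment_subset (tri_mem1 h2) hx).trans sub2
    · exact ((tri_convex _ _ _).segment_subset (tri_mem1 h3) hx).trans sub3
  have mqa : segment ℝ q a ⊆ P := by rw [hP]; intro x hx; simp [hx]
  have mab : segment ℝ a b ⊆ P := by rw [hP]; intro x hx; simp [hx]
  have mbc : segment ℝ b c ⊆ P := by rw [hP]; intro x hx; simp [hx]
  have mcd : segment ℝ c d ⊆ P := by rw [hP]; intro x hx; simp [hx]
  have mdq : segment ℝ d q ⊆ P := by rw [hP]; intro x hx; simp [hx]
  have hqP : q ∈ P := mqa (left_mem_segment ℝ q a)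
  have hbP : b ∈ P := mbc (left_mem_segment ℝ b c)
  have hcP : c ∈ P := mcd (left_mem_segment ℝ c d)
  have open_s : ∀ {s : ℝ} {x y : Plane}, y ∈ P → x ∉ P → 0 ≤ s → s ≤ 1 →
      x = (1 - s) • q + s • y → 0 < s ∧ s < 1 := by
    intro s x y hy hx hs0 hs1 e
    constructor
    · apply lt_of_le_of_ne hs0
      rintro rfl
      apply hx; rw [e]; simpa using hqP
    · apply lt_of_le_of_ne hs1
      rintro rfl
      apply hx; rw [e]; simpa using hy
  have dgb : ∀ x, x ∉ P → ∀ s : ℝ, 0 ≤ s → s ≤ 1 → x = (1 - s) • q + s • b →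
      x ∈ interior (Tri q a b ∪ Tri q b c ∪ Tri q c d) := by
    intro x hx s hs0 hs1 e
    obtain ⟨u, v⟩ := open_s hbP hx hs0 hs1 e
    exact interior_mono subset_union_left (two_tri h1 h2 u v e)
  have dgc : ∀ x, x ∉ P → ∀ s : ℝ, 0 ≤ s → s ≤ 1 → x = (1 - s) • q + s • c →
      x ∈ interior (Tri q a b ∪ Tri q b c ∪ Tri q c d) := by
    intro x hx s hs0 hs1 e
    obtain ⟨u, v⟩ := open_s hcP hx hs0 hs1 e
    exact interior_mono (union_subset sub2 sub3) (two_tri h2 h3 u v e)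
  have flip : ∀ {A B x : Plane}, (∃ s : ℝ, 0 ≤ s ∧ s ≤ 1 ∧ x = (1 - s) • A + s • B) →
      ∃ s : ℝ, 0 ≤ s ∧ s ≤ 1 ∧ x = (1 - s) • B + s • A := by
    rintro A B x ⟨s, s0, s1, e⟩
    exact ⟨1 - s, by linarith, by linarith, by rw [e]; module⟩
  have rot1 : ∀ {A B C : Plane}, 0 < cr A B C → 0 < cr B C A := by
    intro A B C h; rw [cr_cyc]; exact h
  rw [region_eq (P := P) (T := Tri q a b ∪ Tri q b c ∪ Tri q c d) (q := q)]
  · exact hstar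
  · exact ((tri_bdd h1).union (tri_bdd h2)).union (tri_bdd h3)
  · exact ((tri_closed _ _ _).union (tri_closed _ _ _)).union (tri_closed _ _ _)
  · exact sub1 (tri_mem1 h1)
  · exact hstar
  · rw [hP]
    refine union_subset (union_subset (union_subset (union_subset ?_ ?_) ?_) ?_) ?_
    · exact ((tri_convex _ _ _).segment_subset (tri_mem1 h1) (tri_mem2 h1)).trans sub1
    · exact ((tri_convex _ _ _).segment_subset (tri_mem2 h1) (tri_mem3 h1)).trans sub1
    · exact ((tri_convex _ _ _).segment_subset (tri_mem2 h2) (tri_mem3 h2)).trans sub2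
    · exact ((tri_convex _ _ _).segment_subset (tri_mem2 h3) (tri_mem3 h3)).trans sub3
    · exact ((tri_convex _ _ _).segment_subset (tri_mem3 h3) (tri_mem1 h3)).trans sub3
  · rintro x ((hx | hx) | hx) hxP
    · rcases hx.1.eq_or_lt with h | g1
      · exact absurd (mqa (tri_edge_seg h1 hx h.symm)) hxP
      rcases hx.2.1.eq_or_lt with h | g2
      · exact absurd (mab (tri_edge_seg (rot1 h1) (tri_rot hx) h.symm)) hxP
      rcases hx.2.2.eq_or_lt with h | g3
      · obtain ⟨s, s0, s1, e⟩ := flip (tri_edge (rot1 (rot1 h1)) (tri_rot (tri_rot hx)) h.symm)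
        exact dgb x hxP s s0 s1 e
      exact interior_mono sub1 (tri_int g1 g2 g3)
    · rcases hx.1.eq_or_lt with h | g1
      · obtain ⟨s, s0, s1, e⟩ := tri_edge h2 hx h.symm
        exact dgb x hxP s s0 s1 e
      rcases hx.2.1.eq_or_lt with h | g2
      · exact absurd (mbc (tri_edge_seg (rot1 h2) (tri_rot hx) h.symm)) hxP
      rcases hx.2.2.eq_or_lt with h | g3
      · obtain ⟨s, s0, s1, e⟩ := flip (tri_edge (rot1 (rot1 h2)) (tri_rot (tri_rot hx)) h.symm)
        exact dgc x hxP s s0 s1 e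
      exact interior_mono sub2 (tri_int g1 g2 g3)
    · rcases hx.1.eq_or_lt with h | g1
      · obtain ⟨s, s0, s1, e⟩ := tri_edge h3 hx h.symm
        exact dgc x hxP s s0 s1 e
      rcases hx.2.1.eq_or_lt with h | g2
      · exact absurd (mcd (tri_edge_seg (rot1 h3) (tri_rot hx) h.symm)) hxP
      rcases hx.2.2.eq_or_lt with h | g3
      · exact absurd (mdq (tri_edge_seg (rot1 (rot1 h3)) (tri_rot (tri_rot hx)) h.symm)) hxP
      exact interior_mono sub3 (tri_int g1 g2 g3)

lemma fan_neg {P : Set Plane} {q a b c d : Plane}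
    (hP : P = segment ℝ q a ∪ segment ℝ a b ∪ segment ℝ b c ∪ segment ℝ c d ∪ segment ℝ d q)
    (h1 : cr q a b < 0) (h2 : cr q b c < 0) (h3 : cr q c d < 0) :
    ∀ x ∈ P ∪ intP P, segment ℝ q x ⊆ P ∪ intP P := by
  apply fan_pos (a := d) (b := c) (c := b) (d := a)
  · rw [hP, segment_symm ℝ q d, segment_symm ℝ d c, segment_symm ℝ c b, segment_symm ℝ b a,
      segment_symm ℝ a q]
    ext x; simp only [mem_union]; tauto
  · rw [cr_swap]; linarith
  · rw [cr_swap]; linarith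
  · rw [cr_swap]; linarith

/-- Two closed segments cross when endpoints weakly separate each other. -/
lemma crossing {A B C D : Plane} (h : segment ℝ A B ∩ segment ℝ C D = ∅)
    (h1 : cr A B C * cr A B D ≤ 0) (h2 : cr C D A * cr B C D ≤ 0) :
    cr A B C = 0 ∧ cr A B D = 0 ∧ cr C D A = 0 ∧ cr B C D = 0 := by
  have lin : cr C D A - cr B C D = cr A B D - cr A B C := by simp only [cr]; ring
  by_cases e : cr A B C = cr A B D
  · have e1 : cr A B D = 0 := by nlinarith
    have e2 : cr B C D = 0 := by nlinarith
    exact ⟨by linarith, e1, by linarith, e2⟩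
  · exfalso
    have wt : ∀ α β : ℝ, α * β ≤ 0 → α ≠ β → 0 ≤ α / (α - β) ∧ 0 ≤ -β / (α - β) := by
      intro α β hab hne
      rcases lt_or_gt_of_ne hne with hlt | hlt
      · have u1 : α ≤ 0 := by by_contra hh; push Not at hh; nlinarith
        have u2 : 0 ≤ β := by by_contra hh; push Not at hh; nlinarith
        exact ⟨div_nonneg_of_nonpos u1 (by linarith), div_nonneg_of_nonpos (by linarith)
          (by linarith)⟩
      · have u1 : 0 ≤ α := by by_contra hh; push Not at hh; nlinarith
        have u2 : β ≤ 0 := by by_contra hh; push Not at hh; nlinarith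
        exact ⟨div_nonneg u1 (by linarith), div_nonneg (by linarith) (by linarith)⟩
    have hne1 : cr A B C - cr A B D ≠ 0 := sub_ne_zero.2 e
    have hne2 : cr C D A - cr B C D ≠ 0 := by rw [lin]; intro hh; apply hne1; linarith
    obtain ⟨w1, w2⟩ := wt _ _ h1 e
    obtain ⟨w3, w4⟩ := wt _ _ h2 (sub_ne_zero.1 hne2)
    have hm : (-cr A B D / (cr A B C - cr A B D)) • C + (cr A B C / (cr A B C - cr A B D)) • D
        ∈ segment ℝ A B ∩ segment ℝ C D := by
      constructor
      · refine ⟨_, _, w4, w3, by field_simp; ring, ?_⟩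
        have lin' : cr C D A - cr B C D = - (cr A B C - cr A B D) := by rw [lin]; ring
        rw [lin']
        apply plane_ext <;>
        · simp only [PiLp.add_apply, PiLp.smul_apply, smul_eq_mul]
          field_simp
          simp only [cr]; ring
      · exact ⟨_, _, w2, w1, by field_simp; ring, rfl⟩
    rw [h] at hm; exact hm

/-- A flat vertex lies strictly between its neighbours. -/
lemma flat {A B C : Plane} (hAB : A ≠ B) (h : segment ℝ A B ∩ segment ℝ B C = {B})
    (hBC : B ≠ C) (h0 : cr A B C = 0) :
    ∃ s : ℝ, 0 < s ∧ C 0 - B 0 = s * (B 0 - A 0) ∧ C 1 - B 1 = s * (B 1 - A 1) := by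
  have hn : 0 < (B 0 - A 0) ^ 2 + (B 1 - A 1) ^ 2 := by
    by_contra hh
    push Not at hh
    apply hAB
    apply plane_ext
    · nlinarith [sq_nonneg (B 0 - A 0), sq_nonneg (B 1 - A 1)]
    · nlinarith [sq_nonneg (B 0 - A 0), sq_nonneg (B 1 - A 1)]
  obtain ⟨s, hs⟩ : ∃ s : ℝ, s = ((C 0 - B 0) * (B 0 - A 0) + (C 1 - B 1) * (B 1 - A 1)) /
    ((B 0 - A 0) ^ 2 + (B 1 - A 1) ^ 2) := ⟨_, rfl⟩
  rw [eq_div_iff hn.ne'] at hs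
  simp only [cr] at h0
  have e0 : C 0 - B 0 = s * (B 0 - A 0) := by
    apply mul_left_cancel₀ hn.ne'
    linear_combination (- (B 0 - A 0)) * hs - (B 1 - A 1) * h0
  have e1 : C 1 - B 1 = s * (B 1 - A 1) := by
    apply mul_left_cancel₀ hn.ne'
    linear_combination (- (B 1 - A 1)) * hs + (B 0 - A 0) * h0
  refine ⟨s, ?_, e0, e1⟩
  by_contra hneg
  push Not at hneg
  rcases hneg.eq_or_lt with rfl | hneg
  · apply hBC; apply plane_ext <;> linarith
  -- a common point other than `B`
  obtain ⟨m, m0, m1, m2⟩ : ∃ m : ℝ, 0 < m ∧ m ≤ 1 ∧ m ≤ -s := by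
    refine ⟨min 1 (-s), lt_min one_pos (by linarith), min_le_left _ _, min_le_right _ _⟩
  have hm : m • A + (1 - m) • B ∈ segment ℝ A B ∩ segment ℝ B C := by
    constructor
    · exact ⟨m, 1 - m, m0.le, by linarith, by ring, rfl⟩
    · have hs0 : 0 < -s := by linarith
      refine ⟨1 - m / (-s), m / (-s), ?_, by positivity, by ring, ?_⟩
      · rw [sub_nonneg, div_le_one hs0]; exact m2
      · have k : m / (-s) * s = -m := by
          have := hneg.ne
          field_simp
        apply plane_ext
        · simp only [PiLp.add_apply, PiLp.smul_apply, smul_eq_mul]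
          linear_combination (m / (-s)) * e0 + (B 0 - A 0) * k
        · simp only [PiLp.add_apply, PiLp.smul_apply, smul_eq_mul]
          linear_combination (m / (-s)) * e1 + (B 1 - A 1) * k
  rw [h] at hm
  have hm' : m • A + (1 - m) • B = B := hm
  apply hAB
  apply plane_ext
  · have := congrArg (fun v : Plane => v 0) hm'
    simp only [PiLp.add_apply, PiLp.smul_apply, smul_eq_mul] at this
    apply mul_left_cancel₀ m0.ne'; linarith
  · have := congrArg (fun v : Plane => v 1) hm'
    simp only [PiLp.add_apply, PiLp.smul_apply, smul_eq_mul] at this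
    apply mul_left_cancel₀ m0.ne'; linarith

/-- Sign consistency of `x + y = z`. -/
def sumOK : SignType → SignType → SignType → Bool
  | .zero, y, z => y == z
  | x, .zero, z => x == z
  | .pos, .pos, z => z == .pos
  | .neg, .neg, z => z == .neg
  | _, _, _ => true

lemma sumOK_of {x y z : ℝ} (h : x + y = z) :
    sumOK (SignType.sign x) (SignType.sign y) (SignType.sign z) = true := by
  subst h
  rcases lt_trichotomy x 0 with hx | hx | hx <;> rcases lt_trichotomy y 0 with hy | hy | hy
  · rw [sign_neg hx, sign_neg hy, sign_neg (add_neg hx hy)]; rfl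
  · subst hy; rw [add_zero, sign_neg hx, sign_zero]; rfl
  · rw [sign_neg hx, sign_pos hy]; rfl
  · subst hx; rw [zero_add, sign_neg hy, sign_zero]; rfl
  · subst hx hy; simp; rfl
  · subst hx; rw [zero_add, sign_pos hy, sign_zero]; rfl
  · rw [sign_pos hx, sign_neg hy]; rfl
  · subst hy; rw [add_zero, sign_pos hx, sign_zero]; rfl
  · rw [sign_pos hx, sign_pos hy, sign_pos (add_pos hx hy)]; rfl

/-- Multiplication of signs, by pattern matching (reduces quickly). -/
def sMul : SignType → SignType → SignType
  | .zero, _ => .zero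
  | .pos, y => y
  | .neg, .zero => .zero
  | .neg, .pos => .neg
  | .neg, .neg => .pos

lemma sMul_eq : ∀ x y : SignType, sMul x y = x * y := by decide

def sEq : SignType → SignType → Bool
  | .zero, .zero => true
  | .pos, .pos => true
  | .neg, .neg => true
  | _, _ => false

lemma sEq_eq : ∀ x y : SignType, sEq x y = (x == y) := by decide

def gpOK (t0 t1 t4 b0 b2 b4 : SignType) : Bool := sumOK (sMul t1 t4) (sMul t0 b2) (sMul b0 b4)

/-- Non-crossing condition for a quadruple. -/
def ncOK (t1 b0 t2 b2 : SignType) : Bool :=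
  (sEq (sMul t1 b0) .pos) || (sEq (sMul t2 b2) .pos) ||
    (sEq t1 .zero && sEq b0 .zero && sEq t2 .zero && sEq b2 .zero)

def flOK (t1 b0 t2 t0 b1 : SignType) : Bool :=
  !(sEq t1 .zero) || (sEq b0 t2 && sEq t0 b1)

def fan (t4 t1 b2 : SignType) : Bool := !(sEq t4 .zero) && sEq t4 t1 && sEq t1 b2

def all3 (f : SignType → Bool) : Bool := f .neg && (f .zero && f .pos)

lemma all3_spec {f : SignType → Bool} (h : all3 f = true) (s : SignType) : f s = true := by
  simp only [all3, Bool.and_eq_true] at h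
  cases s
  · exact h.2.1
  · exact h.1
  · exact h.2.2

def bimp : Bool → Bool → Bool
  | true, b => b
  | false, _ => true

lemma bimp_spec {a b : Bool} (h : bimp a b = true) (ha : a = true) : b = true := by
  subst ha; exact h

def lastCheck (t0 t1 t2 t3 t4 b0 b1 b2 b3 b4 : SignType) : Bool :=
  fan t4 t1 b2 || fan t0 t2 b3 || fan t1 t3 b4 || fan t2 t4 b0 || fan t3 t0 b1
    || (sEq t0 .zero && sEq t1 .zero && sEq t2 .zero && sEq t3 .zero && sEq t4 .zero)

def signCheck : Bool :=
  all3 fun t1 => all3 fun t2 => all3 fun b0 => all3 fun b2 => bimp (ncOK t1 b0 t2 b2) <|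
  all3 fun t0 => all3 fun b1 => bimp (flOK t1 b0 t2 t0 b1) <|
  all3 fun t3 => bimp (flOK t2 b1 t3 t1 b2) <|
  all3 fun b3 => bimp (ncOK t2 b1 t3 b3) <| bimp (gpOK t1 t2 t0 b1 b3 b0) <|
  all3 fun b4 => bimp (ncOK t0 b4 t1 b1) <| bimp (gpOK t2 t3 t1 b2 b4 b1) <|
  all3 fun t4 => bimp (flOK t3 b2 t4 t2 b3) <| bimp (flOK t4 b3 t0 t3 b4) <|
  bimp (flOK t0 b4 t1 t4 b0) <| bimp (ncOK t3 b2 t4 b4) <| bimp (ncOK t4 b3 t0 b0) <|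
  bimp (gpOK t0 t1 t4 b0 b2 b4) <| bimp (gpOK t3 t4 t2 b3 b0 b2) <|
  bimp (gpOK t4 t0 t3 b4 b1 b3) <| lastCheck t0 t1 t2 t3 t4 b0 b1 b2 b3 b4

lemma signCheck_true : signCheck = true := by decide +kernel

lemma sign_core (t0 t1 t2 t3 t4 b0 b1 : SignType)
    (f0 : flOK t1 b0 t2 t0 b1 = true) (b2 : SignType) (f1 : flOK t2 b1 t3 t1 b2 = true)
    (n0 : ncOK t1 b0 t2 b2 = true) (b3 : SignType) (f2 : flOK t3 b2 t4 t2 b3 = true)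
    (n1 : ncOK t2 b1 t3 b3 = true) (g3 : gpOK t3 t4 t2 b3 b0 b2 = true)
    (b4 : SignType) (f3 : flOK t4 b3 t0 t3 b4 = true) (f4 : flOK t0 b4 t1 t4 b0 = true)
    (n2 : ncOK t3 b2 t4 b4 = true) (n3 : ncOK t4 b3 t0 b0 = true) (n4 : ncOK t0 b4 t1 b1 = true)
    (g0 : gpOK t0 t1 t4 b0 b2 b4 = true) (g1 : gpOK t1 t2 t0 b1 b3 b0 = true)
    (g2 : gpOK t2 t3 t1 b2 b4 b1 = true) (g4 : gpOK t4 t0 t3 b4 b1 b3 = true) :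
    lastCheck t0 t1 t2 t3 t4 b0 b1 b2 b3 b4 = true := by
  have h := signCheck_true
  have h := bimp_spec (all3_spec (all3_spec (all3_spec (all3_spec h t1) t2) b0) b2) n0
  have h := bimp_spec (all3_spec (all3_spec h t0) b1) f0
  have h := bimp_spec (all3_spec h t3) f1
  have h := bimp_spec (bimp_spec (all3_spec h b3) n1) g1
  have h := bimp_spec (bimp_spec (all3_spec h b4) n4) g2
  have h := bimp_spec (bimp_spec (all3_spec h t4) f2) f3
  have h := bimp_spec (bimp_spec (bimp_spec h f4) n2) n3
  exact bimp_spec (bimp_spec (bimp_spec h g0) g3) g4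

lemma nc_of {A B C D : Plane} (h : segment ℝ A B ∩ segment ℝ C D = ∅) :
    ncOK (SignType.sign (cr A B C)) (SignType.sign (cr A B D)) (SignType.sign (cr B C D))
      (SignType.sign (cr C D A)) = true := by
  by_cases h1 : cr A B C * cr A B D ≤ 0
  · by_cases h2 : cr C D A * cr B C D ≤ 0
    · obtain ⟨e1, e2, e3, e4⟩ := crossing h h1 h2
      rw [e1, e2, e3, e4, sign_zero]; rfl
    · push Not at h2
      have : SignType.sign (cr B C D) * SignType.sign (cr C D A) = .pos := by
        rw [← sign_mul, mul_comm]; exact sign_pos h2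
      simp [ncOK, sMul_eq, sEq_eq, this]
  · push Not at h1
    have : SignType.sign (cr A B C) * SignType.sign (cr A B D) = .pos := by
      rw [← sign_mul]; exact sign_pos h1
    simp [ncOK, sMul_eq, sEq_eq, this]

lemma gp_of (A B C D E : Plane) :
    gpOK (SignType.sign (cr E A B)) (SignType.sign (cr A B C)) (SignType.sign (cr D E A))
      (SignType.sign (cr A B D)) (SignType.sign (cr C D A)) (SignType.sign (cr E A C)) = true := by
  unfold gpOK
  simp only [sMul_eq]
  rw [← sign_mul, ← sign_mul, ← sign_mul]
  apply sumOK_of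
  simp only [cr]; ring

lemma fl_of {A B C D E : Plane} (hAB : A ≠ B) (h : segment ℝ A B ∩ segment ℝ B C = {B})
    (hBC : B ≠ C) :
    flOK (SignType.sign (cr A B C)) (SignType.sign (cr A B D)) (SignType.sign (cr B C D))
      (SignType.sign (cr E A B)) (SignType.sign (cr B C E)) = true := by
  by_cases h0 : cr A B C = 0
  · obtain ⟨s, hs, e0, e1⟩ := flat hAB h hBC h0
    have f1 : cr B C D = s * cr A B D := by
      simp only [cr]; rw [e0, e1]; ring
    have f2 : cr B C E = s * cr E A B := by
      simp only [cr]; rw [e0, e1]; ring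
    rw [f1, f2, sign_mul, sign_mul, sign_pos hs, one_mul, one_mul]
    simp [flOK, sEq_eq]
  · have : SignType.sign (cr A B C) ≠ .zero := fun hh => h0 (sign_eq_zero_iff.1 hh)
    simp [flOK, sEq_eq, h0]

lemma fan_sign {x y z : ℝ}
    (h : fan (SignType.sign x) (SignType.sign y) (SignType.sign z) = true) :
    (0 < x ∧ 0 < y ∧ 0 < z) ∨ (x < 0 ∧ y < 0 ∧ z < 0) := by
  simp only [fan, sEq_eq, Bool.and_eq_true, beq_iff_eq, Bool.not_eq_true', beq_eq_false_iff_ne] at h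
  obtain ⟨⟨h1, h2⟩, h3⟩ := h
  rcases lt_trichotomy x 0 with hx | hx | hx
  · right
    rw [sign_neg hx] at h2
    rw [← h2] at h3
    exact ⟨hx, sign_eq_neg_one_iff.1 h2.symm, sign_eq_neg_one_iff.1 h3.symm⟩
  · exact absurd (sign_eq_zero_iff.2 hx) h1
  · left
    rw [sign_pos hx] at h2
    rw [← h2] at h3
    exact ⟨hx, sign_eq_one_iff.1 h2.symm, sign_eq_one_iff.1 h3.symm⟩

/-- From sign agreement to star-shapedness from `q`. -/
lemma fan_concl {P : Set Plane} {q a b c d : Plane}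
    (hP : P = segment ℝ q a ∪ segment ℝ a b ∪ segment ℝ b c ∪ segment ℝ c d ∪ segment ℝ d q)
    (h : fan (SignType.sign (cr c d q)) (SignType.sign (cr q a b))
      (SignType.sign (cr b c q)) = true) :
    ∀ x ∈ P ∪ intP P, segment ℝ q x ⊆ P ∪ intP P := by
  rw [cr_cyc q c d, cr_cyc q b c] at h
  rcases fan_sign h with ⟨h3, h1, h2⟩ | ⟨h3, h1, h2⟩
  · exact fan_pos hP h1 h2 h3
  · exact fan_neg hP h1 h2 h3

lemma no_all_flat {d0 d1 d2 d3 d4 s0 s1 s2 s3 : ℝ} (h0 : 0 < s0) (h1 : 0 < s1) (h2 : 0 < s2)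
    (h3 : 0 < s3) (e0 : d1 = s0 * d0) (e1 : d2 = s1 * d1) (e2 : d3 = s2 * d2) (e3 : d4 = s3 * d3)
    (hs : d0 + d1 + d2 + d3 + d4 = 0) : d0 = 0 := by
  have : (1 + s0 + s1 * s0 + s2 * (s1 * s0) + s3 * (s2 * (s1 * s0))) * d0 = 0 := by
    subst e0 e1 e2 e3; linarith
  rcases mul_eq_zero.1 this with h | h
  · exfalso
    have : 0 < 1 + s0 + s1 * s0 + s2 * (s1 * s0) + s3 * (s2 * (s1 * s0)) := by positivity
    linarith
  · exact h

theorem stmt14 (p : ZMod 5 → Plane) (hP : IsSimplePolygon p) :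
    ∃ i : ZMod 5, ∀ x ∈ polyBody p ∪ intP (polyBody p),
      segment ℝ (p i) x ⊆ polyBody p ∪ intP (polyBody p) := by
  have c0 : segment ℝ (p 0) (p 1) ∩ segment ℝ (p 1) (p 2) = {p 1} := hP.consec 0
  have c1 : segment ℝ (p 1) (p 2) ∩ segment ℝ (p 2) (p 3) = {p 2} := hP.consec 1
  have c2 : segment ℝ (p 2) (p 3) ∩ segment ℝ (p 3) (p 4) = {p 3} := hP.consec 2
  have c3 : segment ℝ (p 3) (p 4) ∩ segment ℝ (p 4) (p 0) = {p 4} := hP.consec 3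
  have c4 : segment ℝ (p 4) (p 0) ∩ segment ℝ (p 0) (p 1) = {p 0} := hP.consec 4
  have n0 : segment ℝ (p 0) (p 1) ∩ segment ℝ (p 2) (p 3) = ∅ :=
    hP.nonconsec 0 2 (by decide) (by decide) (by decide)
  have n1 : segment ℝ (p 1) (p 2) ∩ segment ℝ (p 3) (p 4) = ∅ :=
    hP.nonconsec 1 3 (by decide) (by decide) (by decide)
  have n2 : segment ℝ (p 2) (p 3) ∩ segment ℝ (p 4) (p 0) = ∅ :=
    hP.nonconsec 2 4 (by decide) (by decide) (by decide)
  have n3 : segment ℝ (p 3) (p 4) ∩ segment ℝ (p 0) (p 1) = ∅ :=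
    hP.nonconsec 3 0 (by decide) (by decide) (by decide)
  have n4 : segment ℝ (p 4) (p 0) ∩ segment ℝ (p 1) (p 2) = ∅ :=
    hP.nonconsec 4 1 (by decide) (by decide) (by decide)
  have d0 : p 0 ≠ p 1 := hP.inj.ne (by decide)
  have d1 : p 1 ≠ p 2 := hP.inj.ne (by decide)
  have d2 : p 2 ≠ p 3 := hP.inj.ne (by decide)
  have d3 : p 3 ≠ p 4 := hP.inj.ne (by decide)
  have d4 : p 4 ≠ p 0 := hP.inj.ne (by decide)
  have body : polyBody p = segment ℝ (p 0) (p 1) ∪ segment ℝ (p 1) (p 2) ∪ segment ℝ (p 2) (p 3)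
      ∪ segment ℝ (p 3) (p 4) ∪ segment ℝ (p 4) (p 0) := by
    ext x
    simp only [polyBody, mem_iUnion, mem_union]
    constructor
    · rintro ⟨i, hi⟩
      have hcase : i = 0 ∨ i = 1 ∨ i = 2 ∨ i = 3 ∨ i = 4 := by
        clear hi; revert i; decide
      rcases hcase with rfl | rfl | rfl | rfl | rfl
      · exact Or.inl (Or.inl (Or.inl (Or.inl hi)))
      · exact Or.inl (Or.inl (Or.inl (Or.inr hi)))
      · exact Or.inl (Or.inl (Or.inr hi))
      · exact Or.inl (Or.inr hi)
      · exact Or.inr hi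
    · rintro ((((h | h) | h) | h) | h)
      · exact ⟨0, h⟩
      · exact ⟨1, h⟩
      · exact ⟨2, h⟩
      · exact ⟨3, h⟩
      · exact ⟨4, h⟩
  have key := sign_core _ _ _ _ _ _ _ (fl_of (D := p 3) (E := p 4) d0 c0 d1)
    _ (fl_of (D := p 4) (E := p 0) d1 c1 d2) (nc_of n0)
    _ (fl_of (D := p 0) (E := p 1) d2 c2 d3) (nc_of n1) (gp_of (p 3) (p 4) (p 0) (p 1) (p 2))
    _ (fl_of (D := p 1) (E := p 2) d3 c3 d4) (fl_of (D := p 2) (E := p 3) d4 c4 d0)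
    (nc_of n2) (nc_of n3) (nc_of n4)
    (gp_of (p 0) (p 1) (p 2) (p 3) (p 4)) (gp_of (p 1) (p 2) (p 3) (p 4) (p 0))
    (gp_of (p 2) (p 3) (p 4) (p 0) (p 1)) (gp_of (p 4) (p 0) (p 1) (p 2) (p 3))
  simp only [lastCheck, sEq_eq, Bool.or_eq_true, Bool.and_eq_true, beq_iff_eq] at key
  rcases key with ((((h | h) | h) | h) | h) | ⟨⟨⟨⟨h0, h1⟩, h2⟩, h3⟩, h4⟩
  · exact ⟨0, fan_concl body h⟩
  · refine ⟨1, fan_concl ?_ h⟩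
    rw [body]; ext x; simp only [mem_union]; tauto
  · refine ⟨2, fan_concl ?_ h⟩
    rw [body]; ext x; simp only [mem_union]; tauto
  · refine ⟨3, fan_concl ?_ h⟩
    rw [body]; ext x; simp only [mem_union]; tauto
  · refine ⟨4, fan_concl ?_ h⟩
    rw [body]; ext x; simp only [mem_union]; tauto
  · exfalso
    obtain ⟨s0, q0, u0, v0⟩ := flat d0 c0 d1 (sign_eq_zero_iff.1 h1)
    obtain ⟨s1, q1, u1, v1⟩ := flat d1 c1 d2 (sign_eq_zero_iff.1 h2)
    obtain ⟨s2, q2, u2, v2⟩ := flat d2 c2 d3 (sign_eq_zero_iff.1 h3)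
    obtain ⟨s3, q3, u3, v3⟩ := flat d3 c3 d4 (sign_eq_zero_iff.1 h4)
    have r0 := no_all_flat q0 q1 q2 q3 u0 u1 u2 u3 (by ring)
    have r1 := no_all_flat q0 q1 q2 q3 v0 v1 v2 v3 (by ring)
    exact d0 (plane_ext (by linarith) (by linarith))
end

section
/- Let P be a simple closed n-gon in ℝ² with n ≥ 3. Then the polygonal diameter of int P is at most ⌊n/2⌋: any two points of the bounded component of ℝ² \ P can be joined inside it by a polygonal path with at most ⌊n/2⌋ segments. -/
open Set Metric

open Set Metric
namespace PD
open Filter Topology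

/-- planar cross product -/
def cr (x y : ℂ) : ℝ := x.re * y.im - x.im * y.re

def E {n : ℕ} (p : ZMod n → ℂ) (i : ZMod n) : Set ℂ := segment ℝ (p i) (p (i + 1))

def Bd {n : ℕ} (p : ZMod n → ℂ) : Set ℂ := ⋃ i, E p i

def dv {n : ℕ} (p : ZMod n → ℂ) (i : ZMod n) : ℂ := p (i + 1) - p i

structure Simple {n : ℕ} (p : ZMod n → ℂ) : Prop where
  three_le : 3 ≤ n
  inj : Function.Injective p
  consec : ∀ i : ZMod n, E p i ∩ E p (i + 1) = {p (i + 1)}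
  nonconsec : ∀ i j : ZMod n, j ≠ i → j ≠ i + 1 → i ≠ j + 1 → E p i ∩ E p j = ∅

lemma cr_add (x y z : ℂ) : cr x (y + z) = cr x y + cr x z := by simp [cr]; ring
lemma cr_smul (x y : ℂ) (t : ℝ) : cr x (t • y) = t * cr x y := by simp [cr]; ring
lemma cr_neg (x y : ℂ) : cr x (-y) = - cr x y := by simp [cr]; ring
lemma cr_neg_left (x y : ℂ) : cr (-x) y = - cr x y := by simp [cr]; ring
lemma cr_self (x : ℂ) : cr x x = 0 := by simp [cr]; ring
lemma cr_anti (x y : ℂ) : cr x y = - cr y x := by simp [cr]; ring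
lemma cr_sub (x y z : ℂ) : cr x (y - z) = cr x y - cr x z := by simp [cr]; ring

lemma cr_par {x y : ℂ} (hx : x ≠ 0) (h : cr x y = 0) : ∃ t : ℝ, y = t • x := by
  have hn : 0 < x.re ^ 2 + x.im ^ 2 := by
    by_contra hh
    apply hx
    apply Complex.ext <;> simp <;> nlinarith [sq_nonneg x.re, sq_nonneg x.im]
  refine ⟨(x.re * y.re + x.im * y.im) / (x.re ^ 2 + x.im ^ 2), ?_⟩
  unfold cr at h
  apply Complex.ext
  · simp only [Complex.smul_re, smul_eq_mul]
    field_simp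
    linear_combination (-x.im) * h
  · simp only [Complex.smul_im, smul_eq_mul]
    field_simp
    linear_combination (x.re) * h

section
variable {n : ℕ} {p : ZMod n → ℂ}

lemma Simple.one_ne (h : Simple p) : (1 : ZMod n) ≠ 0 := by
  have := h.three_le
  have : Fact (1 < n) := ⟨by omega⟩
  exact one_ne_zero

lemma Simple.two_ne (h : Simple p) : (2 : ZMod n) ≠ 0 := by
  have h3 := h.three_le
  intro h2
  have : ((2 : ℕ) : ZMod n) = 0 := by exact_mod_cast h2
  rw [ZMod.natCast_eq_zero_iff] at this
  exact absurd (Nat.le_of_dvd (by norm_num) this) (by omega)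

lemma Simple.dv_ne (h : Simple p) (i : ZMod n) : dv p i ≠ 0 := by
  intro h0
  have := h.inj (sub_eq_zero.1 h0)
  exact h.one_ne (by simpa using this)

lemma mem_E {i : ZMod n} {z : ℂ} : z ∈ E p i ↔ ∃ t : ℝ, 0 ≤ t ∧ t ≤ 1 ∧ z = p i + t • dv p i := by
  unfold E dv
  rw [segment_eq_image']
  constructor
  · rintro ⟨t, ⟨h0, h1⟩, rfl⟩; exact ⟨t, h0, h1, rfl⟩
  · rintro ⟨t, h0, h1, rfl⟩; exact ⟨t, ⟨h0, h1⟩, rfl⟩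

lemma mem_E' {i : ZMod n} {z : ℂ} :
    z ∈ E p (i - 1) ↔ ∃ t : ℝ, 0 ≤ t ∧ t ≤ 1 ∧ z = p i + t • (- dv p (i - 1)) := by
  unfold E dv
  rw [segment_symm, segment_eq_image', sub_add_cancel]
  constructor
  · rintro ⟨t, ⟨h0, h1⟩, rfl⟩; exact ⟨t, h0, h1, by simp⟩
  · rintro ⟨t, h0, h1, rfl⟩; exact ⟨t, ⟨h0, h1⟩, by simp⟩

lemma vert_mem (i : ZMod n) : p i ∈ E p i := left_mem_segment _ _ _
lemma vert_mem' (i : ZMod n) : p (i + 1) ∈ E p i := right_mem_segment _ _ _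
lemma E_sub (i : ZMod n) : E p i ⊆ Bd p := subset_iUnion _ i
lemma vert_Bd (i : ZMod n) : p i ∈ Bd p := E_sub i (vert_mem i)

lemma E_compact (i : ZMod n) : IsCompact (E p i) := by
  unfold E; rw [segment_eq_image]
  exact isCompact_Icc.image (by fun_prop)

lemma Bd_compact [NeZero n] : IsCompact (Bd p) := isCompact_iUnion fun i => E_compact i

lemma Simple.vert_in (h : Simple p) {i j : ZMod n} (hj : p j ∈ E p i) : j = i ∨ j = i + 1 := by
  by_contra hc
  push Not at hc
  by_cases h1 : i = j + 1
  · subst h1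
    have : p j ∈ E p j ∩ E p (j + 1) := ⟨vert_mem j, hj⟩
    rw [h.consec] at this
    exact hc.1 (h.inj this)
  · have : p j ∈ E p i ∩ E p j := ⟨hj, vert_mem j⟩
    rw [h.nonconsec i j hc.1 hc.2 h1] at this
    exact this

lemma Simple.not_anti (h : Simple p) (i : ZMod n) {s t : ℝ} (hs : 0 ≤ s) (ht : 0 ≤ t)
    (he : s • dv p i = t • (- dv p (i - 1))) : s = 0 ∧ t = 0 := by
  by_contra hc
  have hpos : 0 < s + t := by
    rcases hs.lt_or_eq with h1 | h1
    · linarith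
    · rcases ht.lt_or_eq with h2 | h2
      · linarith
      · exact absurd ⟨h1.symm, h2.symm⟩ hc
  have h1 : p i + (s / (s + t)) • dv p i ∈ E p i :=
    mem_E.2 ⟨_, by positivity, by rw [div_le_one hpos]; linarith, rfl⟩
  have h2 : p i + (s / (s + t)) • dv p i ∈ E p (i - 1) := by
    refine mem_E'.2 ⟨t / (s + t), by positivity, by rw [div_le_one hpos]; linarith, ?_⟩
    rw [div_eq_inv_mul, div_eq_inv_mul, mul_smul, mul_smul, he]
  have h3 := h.consec (i - 1)
  rw [sub_add_cancel] at h3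
  have h4 : p i + (s / (s + t)) • dv p i ∈ ({p i} : Set ℂ) := by rw [← h3]; exact ⟨h2, h1⟩
  have h5 : (s / (s + t)) • dv p i = 0 := by simpa using h4
  rcases smul_eq_zero.1 h5 with h6 | h6
  · have hs0 : s = 0 := by
      rcases div_eq_zero_iff.1 h6 with h7 | h7
      · exact h7
      · linarith
    subst hs0
    rw [zero_smul] at he
    rcases smul_eq_zero.1 he.symm with h7 | h7
    · exact hc ⟨rfl, h7⟩
    · exact h.dv_ne (i - 1) (by simpa using h7)
  · exact h.dv_ne i h6

end

/-- cone spanned by `d` and `u` avoids the rays spanned by `B` and `-A` -/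
def Av (A B d u : ℂ) : Prop :=
  ∀ l m t : ℝ, 0 ≤ l → 0 ≤ m → 0 < l + m → 0 ≤ t → l • d + m • u ≠ t • B ∧ l • d + m • u ≠ t • (-A)

lemma AvA {σ : ℝ} {A B d u : ℂ} (hA : 0 < σ * cr A u) (hB : 0 < σ * cr B u)
    (hdA : 0 ≤ σ * cr A d) (hdB : 0 ≤ σ * cr B d) (hd : ∀ t : ℝ, 0 ≤ t → d ≠ t • B ∧ d ≠ t • (-A)) :
    Av A B d u := by
  intro l m t hl hm hlm ht
  rcases hm.lt_or_eq with hm | hm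
  · constructor
    · intro h
      have := congrArg (fun z => σ * cr B z) h
      simp only [cr_add, cr_smul, cr_self] at this
      nlinarith [mul_nonneg hl hdB, mul_pos hm hB]
    · intro h
      have := congrArg (fun z => σ * cr A z) h
      simp only [cr_add, cr_smul, cr_self, cr_neg] at this
      nlinarith [mul_nonneg hl hdA, mul_pos hm hA]
  · subst hm
    have hl' : 0 < l := by linarith
    have := hd (t / l) (by positivity)
    simp only [zero_smul, add_zero]
    constructor
    · intro h
      apply this.1
      rw [div_eq_inv_mul, mul_smul, ← h, smul_smul, inv_mul_cancel₀ hl'.ne', one_smul]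
    · intro h
      apply this.2
      rw [div_eq_inv_mul, mul_smul, ← h, smul_smul, inv_mul_cancel₀ hl'.ne', one_smul]

lemma AvB {σ : ℝ} {A B d u : ℂ} (hAB : σ * cr A B ≤ 0) (hA : 0 < σ * cr A u) (hB : 0 < σ * cr B u)
    (hd : 0 < σ * cr A d ∨ 0 < σ * cr B d) : Av A B d u := by
  intro l m t hl hm hlm ht
  have key : ∀ x y : ℝ, 0 < x → 0 < y → 0 < l * x + m * y := by
    intro x y hx hy
    rcases hl.lt_or_eq with hl | hl
    · nlinarith [mul_pos hl hx, mul_nonneg hm hy.le]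
    · subst hl
      nlinarith
  rcases hd with hd | hd
  · have k := key _ _ hd hA
    constructor <;> intro h <;> have := congrArg (fun z => σ * cr A z) h <;>
      simp only [cr_add, cr_smul, cr_self, cr_neg] at this <;> nlinarith [mul_nonneg ht (neg_nonneg.2 hAB)]
  · have k := key _ _ hd hB
    rw [cr_anti A B] at hAB
    constructor <;> intro h <;> have := congrArg (fun z => σ * cr B z) h <;>
      simp only [cr_add, cr_smul, cr_self, cr_neg] at this <;> nlinarith [mul_nonneg ht (neg_nonneg.2 hAB)]

lemma Av_or {A B d u : ℂ} (hA : 0 < cr A u) (hB : 0 < cr B u)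
    (hd : ∀ t : ℝ, 0 ≤ t → d ≠ t • B ∧ d ≠ t • (-A)) : Av A B d u ∨ Av A B d (-u) := by
  by_cases hAB : 0 ≤ cr A B
  · by_cases h : 0 ≤ cr A d ∧ 0 ≤ cr B d
    · exact .inl (AvA (σ := 1) (by simpa) (by simpa) (by simpa using h.1) (by simpa using h.2) hd)
    · refine .inr (AvB (σ := -1) (by linarith) (by simpa [cr_neg]) (by simpa [cr_neg]) ?_)
      by_contra hc
      push Not at hc
      exact h ⟨by linarith, by linarith⟩
  · by_cases h : cr A d ≤ 0 ∧ cr B d ≤ 0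
    · exact .inr (AvA (σ := -1) (by simpa [cr_neg]) (by simpa [cr_neg]) (by linarith) (by linarith) hd)
    · refine .inl (AvB (σ := 1) (by linarith) (by simpa) (by simpa) ?_)
      by_contra hc
      push Not at hc
      exact h ⟨by linarith, by linarith⟩

lemma ev_pos {a b : ℝ} (ha : 0 < a) : ∀ᶠ e : ℝ in 𝓝[>] 0, 0 < a + e * b := by
  have : Tendsto (fun e : ℝ => a + e * b) (𝓝 0) (𝓝 (a + 0 * b)) := by
    apply Continuous.tendsto; fun_prop
  rw [zero_mul, add_zero] at this
  exact (this.eventually (lt_mem_nhds ha)).filter_mono nhdsWithin_le_nhds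

lemma ev_gt : ∀ᶠ e : ℝ in 𝓝[>] 0, 0 < e := eventually_mem_nhdsWithin

lemma Av_near {σ : ℝ} {A B u v : ℂ} {s : ℝ} (hs : 0 < s) (hA : 0 < σ * cr A u) (hB : 0 < σ * cr B u)
    (hv : 0 < σ * cr B v) : ∀ᶠ e : ℝ in 𝓝[>] 0, Av A B (s • B + e • v) u := by
  by_cases hAB : σ * cr A B ≤ 0
  · filter_upwards [ev_gt] with e he
    refine AvB hAB hA hB (.inr ?_)
    rw [cr_add, cr_smul, cr_smul, cr_self]
    nlinarith [mul_pos he hv]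
  · push Not at hAB
    filter_upwards [ev_gt, ev_pos (b := σ * cr A v) (mul_pos hs hAB)] with e he h2
    have h3 : 0 < σ * cr B (s • B + e • v) := by
      rw [cr_add, cr_smul, cr_smul, cr_self]; nlinarith [mul_pos he hv]
    have h4 : 0 < σ * cr A (s • B + e • v) := by
      rw [cr_add, cr_smul, cr_smul]; linarith
    refine AvA hA hB h4.le h3.le ?_
    intro t ht
    constructor
    · intro h; rw [h, cr_smul, cr_self] at h3; simp at h3
    · intro h; rw [h, cr_smul, cr_neg, cr_self] at h4; simp at h4

lemma Av_near' {σ : ℝ} {A B u v : ℂ} (hA : 0 < σ * cr A u) (hB : 0 < σ * cr B u)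
    (hv : 0 < σ * cr A v) : ∀ᶠ e : ℝ in 𝓝[>] 0, Av A B (-A + e • v) u := by
  by_cases hAB : σ * cr A B ≤ 0
  · filter_upwards [ev_gt] with e he
    refine AvB hAB hA hB (.inl ?_)
    rw [cr_add, cr_smul, cr_neg, cr_self]
    nlinarith [mul_pos he hv]
  · push Not at hAB
    filter_upwards [ev_gt, ev_pos (b := σ * cr B v) hAB] with e he h2
    have h3 : 0 < σ * cr A (-A + e • v) := by
      rw [cr_add, cr_smul, cr_neg, cr_self]; nlinarith [mul_pos he hv]
    have h4 : 0 < σ * cr B (-A + e • v) := by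
      rw [cr_add, cr_smul, cr_neg, cr_anti B A]; linarith
    refine AvA hA hB h3.le h4.le ?_
    intro t ht
    constructor
    · intro h; rw [h, cr_smul, cr_self] at h4; simp at h4
    · intro h; rw [h, cr_smul, cr_neg, cr_self] at h3; simp at h3

lemma exists_off {A B : ℂ} (hA : A ≠ 0) (hB : B ≠ 0)
    (h : ∀ s t : ℝ, 0 ≤ s → 0 ≤ t → s • B = t • (-A) → s = 0 ∧ t = 0) :
    ∃ u, 0 < cr A u ∧ 0 < cr B u := by
  rcases lt_trichotomy (cr A B) 0 with h1 | h1 | h1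
  · refine ⟨A - B, ?_, ?_⟩
    · rw [cr_sub, cr_self]; linarith
    · rw [cr_sub, cr_self, cr_anti]; linarith
  · obtain ⟨t, rfl⟩ := cr_par hA h1
    have ht : 0 < t := by
      by_contra hc
      have := h 1 (-t) (by norm_num) (by linarith) (by simp)
      norm_num at this
    have hp : 0 < cr A (Complex.I * A) := by
      have : cr A (Complex.I * A) = A.re ^ 2 + A.im ^ 2 := by simp [cr]; ring
      rw [this]
      by_contra hh
      apply hA
      apply Complex.ext <;> simp <;> nlinarith [sq_nonneg A.re, sq_nonneg A.im]
    refine ⟨Complex.I * A, hp, ?_⟩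
    rw [cr_anti, cr_smul, cr_anti]
    nlinarith [mul_pos ht hp]
  · refine ⟨B - A, ?_, ?_⟩
    · rw [cr_sub, cr_self]; linarith
    · rw [cr_sub, cr_self, cr_anti]; linarith

end PD

open Set Metric
namespace PD
open Filter Topology

lemma ev_seg {K : Set ℂ} (hK : IsClosed K) {c e : ℂ} (h : Disjoint (segment ℝ c e) K) (v w : ℂ) :
    ∀ᶠ t : ℝ in 𝓝[>] 0, Disjoint (segment ℝ (c + t • v) (e + t • w)) K := by
  have key : ∀ᶠ t : ℝ in 𝓝 0, ∀ s ∈ Icc (0:ℝ) 1,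
      (c + t • v) + s • ((e + t • w) - (c + t • v)) ∈ Kᶜ := by
    apply IsCompact.eventually_forall_of_forall_eventually isCompact_Icc
    intro s hs
    have hc : Continuous (fun q : ℝ × ℝ => (c + q.1 • v) + q.2 • ((e + q.1 • w) - (c + q.1 • v))) := by
      fun_prop
    apply hc.continuousAt.eventually_mem
    apply hK.isOpen_compl.mem_nhds
    intro hm
    refine Set.disjoint_left.1 h ?_ hm
    rw [segment_eq_image']
    exact ⟨s, hs, by simp⟩
  filter_upwards [key.filter_mono nhdsWithin_le_nhds] with t ht
  rw [Set.disjoint_left]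
  intro z hz hzK
  rw [segment_eq_image'] at hz
  obtain ⟨s, hs, rfl⟩ := hz
  exact ht s hs hzK

lemma ray_closed {r : ℂ} (hr : r ≠ 0) : IsClosed {z : ℂ | ∃ t : ℝ, 0 ≤ t ∧ z = t • r} := by
  have : {z : ℂ | ∃ t : ℝ, 0 ≤ t ∧ z = t • r} = {z | cr r z = 0 ∧ 0 ≤ r.re * z.re + r.im * z.im} := by
    have hn : 0 < r.re ^ 2 + r.im ^ 2 := by
      by_contra hh
      apply hr
      apply Complex.ext <;> simp <;> nlinarith [sq_nonneg r.re, sq_nonneg r.im]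
    ext z
    constructor
    · rintro ⟨t, ht, rfl⟩
      refine ⟨by rw [cr_smul, cr_self, mul_zero], ?_⟩
      simp only [Complex.smul_re, Complex.smul_im, smul_eq_mul]
      nlinarith
    · rintro ⟨h1, h2⟩
      obtain ⟨t, rfl⟩ := cr_par hr h1
      refine ⟨t, ?_, rfl⟩
      simp only [Complex.smul_re, Complex.smul_im, smul_eq_mul] at h2
      by_contra hc
      push Not at hc
      nlinarith
  rw [this]
  apply IsClosed.inter
  · exact isClosed_eq (f := fun z => cr r z) (g := fun _ => 0) (by unfold cr; fun_prop) continuous_const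
  · exact isClosed_le (f := fun _ => 0) (g := fun z : ℂ => r.re * z.re + r.im * z.im)
      continuous_const (by fun_prop)

section
variable {n : ℕ} {p : ZMod n → ℂ}

/-- the half-open segment from `c` to the vertex `p i` avoids the polygon -/
def Sees (p : ZMod n → ℂ) (c : ℂ) (i : ZMod n) : Prop :=
  ∀ s : ℝ, 0 < s → s ≤ 1 → p i + s • (c - p i) ∉ Bd p

/-- partial version for a single edge -/
def SeesE (p : ZMod n → ℂ) (c : ℂ) (i k : ZMod n) : Prop :=
  ∀ s : ℝ, 0 < s → s ≤ 1 → p i + s • (c - p i) ∉ E p k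

def Off (σ : ℝ) (p : ZMod n → ℂ) (u : ZMod n → ℂ) : Prop :=
  ∀ i, 0 < σ * cr (dv p (i - 1)) (u i) ∧ 0 < σ * cr (dv p i) (u i)

lemma Sees_iff {c : ℂ} {i : ZMod n} : Sees p c i ↔ ∀ k, SeesE p c i k := by
  unfold Sees SeesE Bd
  simp only [mem_iUnion, not_exists]
  tauto

lemma Sees.mono {c : ℂ} {i : ZMod n} (h : Sees p c i) {s : ℝ} (h0 : 0 < s) (h1 : s ≤ 1) :
    Sees p (p i + s • (c - p i)) i := by
  intro t ht ht1
  have := h (t * s) (by positivity) (by nlinarith)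
  simpa [mul_smul] using this

lemma Sees.not_mem {c : ℂ} {i : ZMod n} (h : Sees p c i) : c ∉ Bd p := by
  have := h 1 one_pos le_rfl
  simpa using this

lemma Sees.off_ray {c : ℂ} {i : ZMod n} (h : Sees p c i) (t : ℝ) (ht : 0 ≤ t) :
    c - p i ≠ t • dv p i ∧ c - p i ≠ t • (-dv p (i-1)) := by
  have hp : 0 < 1 / (1 + t) := by positivity
  have hp1 : 1 / (1 + t) ≤ 1 := by rw [div_le_one (by linarith)]; linarith
  have hp2 : 1 / (1 + t) * t ≤ 1 := by rw [div_mul_eq_mul_div, div_le_one (by linarith)]; linarith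
  constructor
  · intro he
    apply h (1 / (1 + t)) hp hp1
    rw [he]
    exact E_sub i (mem_E.2 ⟨1/(1+t) * t, by positivity, hp2, by rw [mul_smul]⟩)
  · intro he
    apply h (1 / (1 + t)) hp hp1
    rw [he]
    exact E_sub (i-1) (mem_E'.2 ⟨1/(1+t) * t, by positivity, hp2, by rw [mul_smul]⟩)

lemma seesE_far {c : ℂ} {i k : ZMod n} (h : Disjoint (segment ℝ c (p i)) (E p k)) (w : ℂ) :
    ∀ᶠ e : ℝ in 𝓝[>] 0, SeesE p (c + e • w) i k := by
  filter_upwards [ev_seg (E_compact k).isClosed h w 0] with e he s hs hs1 hm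
  refine Set.disjoint_left.1 he ?_ hm
  rw [segment_symm, segment_eq_image']
  exact ⟨s, ⟨hs.le, hs1⟩, by simp⟩

lemma seesE_ii {c : ℂ} {i k : ZMod n} {r : ℂ} (hr : r ≠ 0)
    (hk : ∀ z ∈ E p k, ∃ t : ℝ, 0 ≤ t ∧ z = p i + t • r)
    (h : ∀ t : ℝ, 0 ≤ t → c - p i ≠ t • r) (w : ℂ) :
    ∀ᶠ e : ℝ in 𝓝[>] 0, SeesE p (c + e • w) i k := by
  have hc : Continuous (fun e : ℝ => c + e • w - p i) := by fun_prop
  have : ∀ᶠ e : ℝ in 𝓝 0, c + e • w - p i ∈ {z : ℂ | ∃ t : ℝ, 0 ≤ t ∧ z = t • r}ᶜ := by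
    apply hc.continuousAt.eventually_mem
    apply (ray_closed hr).isOpen_compl.mem_nhds
    rintro ⟨t, ht, he⟩
    exact h t ht (by simpa using he)
  filter_upwards [this.filter_mono nhdsWithin_le_nhds] with e he s hs hs1 hm
  obtain ⟨t, ht, hz⟩ := hk _ hm
  apply he
  refine ⟨t / s, by positivity, ?_⟩
  rw [div_eq_inv_mul, mul_smul, ← add_left_cancel hz, smul_smul, inv_mul_cancel₀ hs.ne', one_smul]

lemma seesE_iii {c : ℂ} {i k : ZMod n} {r : ℂ} {s0 : ℝ}
    (hk : ∀ z ∈ E p k, ∃ t : ℝ, 0 ≤ t ∧ z = p i + t • r)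
    (h : c - p i = s0 • r) {w : ℂ} (hw : cr r w ≠ 0) :
    ∀ᶠ e : ℝ in 𝓝[>] 0, SeesE p (c + e • w) i k := by
  filter_upwards [ev_gt] with e he s hs hs1 hm
  obtain ⟨t, ht, hz⟩ := hk _ hm
  have h1 := congrArg (cr r) (add_left_cancel hz)
  have : c + e • w - p i = s0 • r + e • w := by rw [← h]; ring
  rw [this, cr_smul, cr_add, cr_smul, cr_smul, cr_smul, cr_self] at h1
  have h2 : s * (e * cr r w) = 0 := by linarith
  exact (mul_ne_zero hs.ne' (mul_ne_zero he.ne' hw)) h2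

lemma edge_i (i : ZMod n) : ∀ z ∈ E p i, ∃ t : ℝ, 0 ≤ t ∧ z = p i + t • dv p i := by
  intro z hz
  obtain ⟨t, h0, -, h⟩ := mem_E.1 hz
  exact ⟨t, h0, h⟩

lemma edge_i' (i : ZMod n) : ∀ z ∈ E p (i-1), ∃ t : ℝ, 0 ≤ t ∧ z = p i + t • (-dv p (i-1)) := by
  intro z hz
  obtain ⟨t, h0, -, h⟩ := mem_E'.1 hz
  exact ⟨t, h0, h⟩

lemma edge_i'' (i : ZMod n) : ∀ z ∈ E p i, ∃ t : ℝ, 0 ≤ t ∧ z = p (i+1) + t • (-dv p i) := by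
  intro z hz
  have := edge_i' (p := p) (i+1) z (by simpa using hz)
  simpa using this

/-- the basic local move -/
lemma ev_move [NeZero n] (hp : Simple p) {c u : ℂ} {i : ZMod n} (hs : Sees p c i)
    (ha : Av (dv p (i-1)) (dv p i) (c - p i) u) :
    ∀ᶠ e : ℝ in 𝓝[>] 0, Disjoint (segment ℝ c (p i + e • u)) (Bd p) := by
  have key : ∀ k, ∀ᶠ e : ℝ in 𝓝[>] 0, Disjoint (segment ℝ c (p i + e • u)) (E p k) := by
    intro k
    have cone : ∀ e : ℝ, 0 < e → ∀ z ∈ segment ℝ c (p i + e • u), ∃ l m : ℝ, 0 ≤ l ∧ 0 ≤ m ∧ 0 < l + m ∧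
        z = p i + (l • (c - p i) + m • u) := by
      intro e he z hz
      rw [segment_eq_image'] at hz
      obtain ⟨s, ⟨h0, h1⟩, rfl⟩ := hz
      refine ⟨1 - s, s * e, by linarith, by positivity, ?_, ?_⟩
      · rcases h0.lt_or_eq with h0 | h0
        · nlinarith [mul_pos h0 he]
        · subst h0; norm_num
      · simp only [Complex.real_smul]; push_cast; ring
    by_cases h1 : k = i
    · subst h1
      filter_upwards [ev_gt] with e he
      rw [Set.disjoint_left]
      intro z hz hz2
      obtain ⟨l, m, hl, hm, hlm, rfl⟩ := cone e he z hz
      obtain ⟨t, ht, h⟩ := edge_i k _ hz2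
      exact (ha l m t hl hm hlm ht).1 (add_left_cancel h)
    by_cases h2 : k = i - 1
    · subst h2
      filter_upwards [ev_gt] with e he
      rw [Set.disjoint_left]
      intro z hz hz2
      obtain ⟨l, m, hl, hm, hlm, rfl⟩ := cone e he z hz
      obtain ⟨t, ht, h⟩ := edge_i' i _ hz2
      exact (ha l m t hl hm hlm ht).2 (add_left_cancel h)
    have hd : Disjoint (segment ℝ c (p i)) (E p k) := by
      rw [Set.disjoint_left]
      intro z hz hz2
      rw [segment_symm, segment_eq_image'] at hz
      obtain ⟨s, ⟨h0, h1'⟩, rfl⟩ := hz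
      rcases h0.lt_or_eq with h0 | h0
      · exact hs s h0 h1' (E_sub k hz2)
      · subst h0
        rcases hp.vert_in (i := k) (j := i) (by simpa using hz2) with h | h
        · exact h1 h.symm
        · exact h2 (by rw [h]; ring)
    filter_upwards [ev_seg (E_compact k).isClosed hd 0 u] with e he
    simpa using he
  filter_upwards [eventually_all.2 key] with e he
  unfold Bd
  rw [Set.disjoint_iUnion_right]
  exact he

lemma ev_sees_all [NeZero n] {c w : ℂ} {i : ZMod n} (h : ∀ k, ∀ᶠ e : ℝ in 𝓝[>] 0, SeesE p (c + e • w) i k) :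
    ∀ᶠ e : ℝ in 𝓝[>] 0, Sees p (c + e • w) i := by
  filter_upwards [eventually_all.2 h] with e he
  exact Sees_iff.2 he

/-- cone lemma at the departing vertex -/
lemma cone_dep {i j : ZMod n} {u : ℂ} {e s : ℝ} :
    p i + s • (p j + e • u - p i) = p j + ((1 - s) • (p i - p j) + (s * e) • u) := by
  simp only [Complex.real_smul]; push_cast; ring

/-- moving off a vertex along a diagonal -/
lemma sees_diag [NeZero n] (hp : Simple p) {i j : ZMod n} (hij : i ≠ j) {u : ℂ}
    (hd : Disjoint (openSegment ℝ (p i) (p j)) (Bd p))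
    (ha : Av (dv p (j-1)) (dv p j) (p i - p j) u) :
    ∀ᶠ e : ℝ in 𝓝[>] 0, Sees p (p j + e • u) i := by
  have hop : ∀ s : ℝ, 0 < s → s < 1 → p i + s • (p j - p i) ∉ Bd p := by
    intro s h0 h1
    refine Set.disjoint_left.1 hd ?_
    rw [openSegment_eq_image']
    exact ⟨s, ⟨h0, h1⟩, rfl⟩
  have hmid := hop (1/2) (by norm_num) (by norm_num)
  have hsi : Sees p (p i + (1/2:ℝ) • (p j - p i)) i := by
    intro s h0 h1
    have := hop (s * (1/2)) (by positivity) (by linarith)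
    simpa [mul_smul] using this
  apply ev_sees_all
  intro k
  by_cases h1 : k = i
  · subst h1
    refine seesE_ii (hp.dv_ne k) (edge_i k) ?_ u
    intro t ht he
    apply (hsi.off_ray (1/2 * t) (by positivity)).1
    rw [add_sub_cancel_left, he, mul_smul]
  by_cases h2 : k = i - 1
  · subst h2
    refine seesE_ii (neg_ne_zero.2 (hp.dv_ne _)) (edge_i' i) ?_ u
    intro t ht he
    apply (hsi.off_ray (1/2 * t) (by positivity)).2
    rw [add_sub_cancel_left, he, mul_smul]
  by_cases h3 : k = j
  · subst h3
    filter_upwards [ev_gt] with e he s hs hs1 hm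
    obtain ⟨t, ht, h⟩ := edge_i k _ hm
    rw [cone_dep] at h
    refine (ha (1 - s) (s * e) t (by linarith) (by positivity) ?_ ht).1 (add_left_cancel h)
    have := mul_pos hs he
    linarith
  by_cases h4 : k = j - 1
  · subst h4
    filter_upwards [ev_gt] with e he s hs hs1 hm
    obtain ⟨t, ht, h⟩ := edge_i' j _ hm
    rw [cone_dep] at h
    refine (ha (1 - s) (s * e) t (by linarith) (by positivity) ?_ ht).2 (add_left_cancel h)
    have := mul_pos hs he
    linarith
  apply seesE_far
  rw [Set.disjoint_left]
  intro z hz hz2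
  rw [segment_symm, segment_eq_image'] at hz
  obtain ⟨s, ⟨h0, h1'⟩, rfl⟩ := hz
  rcases h0.lt_or_eq with h0 | h0
  · rcases h1'.lt_or_eq with h1' | h1'
    · exact hop s h0 h1' (E_sub k hz2)
    · subst h1'
      rcases hp.vert_in (i := k) (j := j) (by simpa using hz2) with h | h
      · exact h3 h.symm
      · exact h4 (by rw [h]; ring)
  · subst h0
    rcases hp.vert_in (i := k) (j := i) (by simpa using hz2) with h | h
    · exact h1 h.symm
    · exact h2 (by rw [h]; ring)

/-- moving off a vertex along an edge, forward -/
lemma sees_edge [NeZero n] (hp : Simple p) {j : ZMod n} {u : ℂ} {σ : ℝ}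
    (hA : 0 < σ * cr (dv p (j-1)) u) (hB : 0 < σ * cr (dv p j) u) :
    ∀ᶠ e : ℝ in 𝓝[>] 0, Sees p (p j + e • u) (j+1) := by
  have hσ : σ ≠ 0 := by rintro rfl; simp at hA
  apply ev_sees_all
  intro k
  by_cases h1 : k = j
  · subst h1
    refine seesE_iii (r := -dv p k) (s0 := 1) (edge_i'' k) (by simp [dv]) ?_
    rw [cr_neg_left, neg_ne_zero]
    intro h; rw [h] at hB; simp at hB
  by_cases h2 : k = j + 1
  · subst h2
    refine seesE_ii (hp.dv_ne (j+1)) (edge_i (j+1)) ?_ u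
    intro t ht he
    have := hp.not_anti (j+1) (s := t) (t := 1) ht zero_le_one (by rw [← he]; simp [dv])
    norm_num at this
  by_cases h3 : k = j - 1
  · subst h3
    filter_upwards [ev_gt] with e he s hs hs1 hm
    obtain ⟨t, ht, h⟩ := edge_i' j _ hm
    rw [cone_dep] at h
    have h := add_left_cancel h
    have hdj : p (j+1) - p j = dv p j := rfl
    rw [hdj] at h
    have hse := mul_pos hs he
    by_cases hAB : 0 ≤ σ * cr (dv p (j-1)) (dv p j)
    · have := congrArg (fun z => σ * cr (dv p (j-1)) z) h
      simp only [cr_add, cr_smul, cr_neg, cr_self] at this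
      nlinarith [mul_pos hse hA, mul_nonneg (sub_nonneg.2 hs1) hAB]
    · have := congrArg (fun z => σ * cr (dv p j) z) h
      rw [cr_anti] at hAB
      simp only [cr_add, cr_smul, cr_neg, cr_self] at this
      push Not at hAB
      nlinarith [mul_pos hse hB, mul_nonneg ht (neg_nonneg.2 hAB.le)]
  apply seesE_far
  rw [segment_eq_image']
  rw [← segment_eq_image']
  change Disjoint (E p j) (E p k)
  rw [Set.disjoint_iff_inter_eq_empty]
  exact hp.nonconsec j k h1 h2 (fun h => h3 (by rw [h]; ring))

/-- moving off an interior point of an edge -/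
lemma sees_relint [NeZero n] (hp : Simple p) {i : ZMod n} {w : ℂ} {s0 : ℝ} (h0 : 0 < s0) (h1 : s0 < 1)
    (hB : cr (dv p i) w ≠ 0) :
    ∀ᶠ e : ℝ in 𝓝[>] 0, Sees p (p i + s0 • dv p i + e • w) i := by
  apply ev_sees_all
  intro k
  by_cases h1 : k = i
  · subst h1
    exact seesE_iii (r := dv p k) (s0 := s0) (edge_i k) (by simp) hB
  by_cases h2 : k = i - 1
  · subst h2
    refine seesE_ii (neg_ne_zero.2 (hp.dv_ne _)) (edge_i' i) ?_ w
    intro t ht he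
    have := hp.not_anti i (s := s0) (t := t) h0.le ht (by rw [← he]; simp)
    exact h0.ne' this.1
  apply seesE_far
  rw [Set.disjoint_left]
  intro z hz hz2
  rw [segment_symm, segment_eq_image'] at hz
  obtain ⟨s, ⟨hs0, hs1⟩, rfl⟩ := hz
  have hlt : s * s0 < 1 := by nlinarith
  have hm : p i + s • (p i + s0 • dv p i - p i) ∈ E p i :=
    mem_E.2 ⟨s * s0, by positivity, hlt.le, by simp [mul_smul]⟩
  by_cases h3 : k = i + 1
  · subst h3
    have : p i + s • (p i + s0 • dv p i - p i) ∈ ({p (i+1)} : Set ℂ) := by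
      rw [← hp.consec i]; exact ⟨hm, hz2⟩
    have h4 : (s * s0 - 1) • dv p i = 0 := by
      have h5 : p i + s • (p i + s0 • dv p i - p i) = p (i+1) := this
      have h6 : p (i+1) = p i + dv p i := by simp [dv]
      rw [h6] at h5
      have h7 := add_left_cancel h5
      rw [add_sub_cancel_left] at h7
      rw [sub_smul, mul_smul, h7]; simp
    rcases smul_eq_zero.1 h4 with h | h
    · linarith
    · exact hp.dv_ne i h
  · have := hp.nonconsec i k h1 h3 (fun h => h2 (by rw [h]; ring))
    have h5 : p i + s • (p i + s0 • dv p i - p i) ∈ E p i ∩ E p k := ⟨hm, hz2⟩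
    rw [this] at h5
    exact h5

abbrev Jo (p : ZMod n → ℂ) (x y : ℂ) : Prop := JoinedIn (Bd p)ᶜ x y

lemma Jo_seg {x y : ℂ} (h : Disjoint (segment ℝ x y) (Bd p)) : Jo p x y :=
  JoinedIn.of_segment_subset (Set.subset_compl_iff_disjoint_right.2 h)

lemma ev_off_mem [NeZero n] (hp : Simple p) {i : ZMod n} {u : ℂ} {σ : ℝ}
    (hA : 0 < σ * cr (dv p (i-1)) u) (hB : 0 < σ * cr (dv p i) u) :
    ∀ᶠ e : ℝ in 𝓝[>] 0, p i + e • u ∉ Bd p := by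
  filter_upwards [sees_edge hp hA hB] with e he
  exact he.not_mem

lemma anchor0 [NeZero n] (hp : Simple p) {i : ZMod n} {u : ℂ} {σ : ℝ}
    (hA : 0 < σ * cr (dv p (i-1)) u) (hB : 0 < σ * cr (dv p i) u) :
    ∃ l, ∀ᶠ e : ℝ in 𝓝[>] 0, Jo p (p i + e • u) l := by
  have h := ev_off_mem hp hA hB
  rw [eventually_iff, mem_nhdsGT_iff_exists_Ioo_subset] at h
  obtain ⟨a, ha, hsub⟩ := h
  have ha : 0 < a := ha
  refine ⟨p i + (a/2) • u, ?_⟩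
  filter_upwards [Ioo_mem_nhdsGT ha] with e he
  apply Jo_seg
  rw [Set.disjoint_left]
  intro z hz
  rw [segment_eq_image'] at hz
  obtain ⟨s, ⟨hs0, hs1⟩, rfl⟩ := hz
  have : p i + e • u + s • (p i + (a / 2) • u - (p i + e • u)) = p i + (e + s * (a/2 - e)) • u := by
    simp only [Complex.real_smul]; push_cast; ring
  simp only [this]
  apply hsub
  obtain ⟨he1, he2⟩ := he
  constructor
  · nlinarith
  · nlinarith

lemma anchor [NeZero n] (hp : Simple p) {u : ZMod n → ℂ} {σ : ℝ} (hu : Off σ p u) :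
    ∃ l, ∀ i, ∀ᶠ e : ℝ in 𝓝[>] 0, Jo p (p i + e • u i) l := by
  choose l hl using fun i => anchor0 hp (hu i).1 (hu i).2
  have step : ∀ i, Jo p (l i) (l (i+1)) := by
    intro i
    have hv : 0 < σ * cr (dv p (i + 1 - 1)) (u i) := by simpa using (hu i).2
    have h1 := Av_near' (hu (i+1)).1 (hu (i+1)).2 hv
    obtain ⟨e, he1, he2, he3⟩ := (h1.and ((hl i).and (sees_edge hp (hu i).1 (hu i).2))).exists
    have hx : p i + e • u i - p (i+1) = - dv p (i+1-1) + e • u i := by simp [dv]; ring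
    rw [← hx] at he1
    obtain ⟨e', he4, he5⟩ := ((ev_move hp he3 he1).and (hl (i+1))).exists
    exact he2.symm.trans ((Jo_seg he4).trans he5)
  have all : ∀ m : ℕ, Jo p (l (m : ZMod n)) (l 0) := by
    intro m
    induction m with
    | zero =>
      obtain ⟨e, he⟩ := (hl 0).exists
      simpa using he.symm.trans he
    | succ m ih =>
      have := step (m : ZMod n)
      rw [Nat.cast_succ]
      exact this.symm.trans ih
  refine ⟨l 0, fun i => ?_⟩
  filter_upwards [hl i] with e he
  have := all i.val
  rw [ZMod.natCast_zmod_val] at this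
  exact he.trans this

/-- side anchor predicate -/
def Anch (p : ZMod n → ℂ) (u : ZMod n → ℂ) (l : ℂ) : Prop :=
  ∀ i, ∀ᶠ e : ℝ in 𝓝[>] 0, Jo p (p i + e • u i) l

lemma Anch.of_sees [NeZero n] (hp : Simple p) {u : ZMod n → ℂ} {l : ℂ} (hl : Anch p u l) {c : ℂ} {i : ZMod n}
    (hs : Sees p c i) (ha : Av (dv p (i-1)) (dv p i) (c - p i) (u i)) : Jo p c l := by
  obtain ⟨e, he1, he2⟩ := ((ev_move hp hs ha).and (hl i)).exists
  exact (Jo_seg he1).trans he2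

lemma Anch.relint [NeZero n] (hp : Simple p) {u : ZMod n → ℂ} {l : ℂ} (hl : Anch p u l)
    {σ : ℝ} (hu : Off σ p u) {i : ZMod n} {w : ℂ} {s0 : ℝ} (h0 : 0 < s0) (h1 : s0 < 1)
    (hw : 0 < σ * cr (dv p i) w) :
    ∀ᶠ e : ℝ in 𝓝[>] 0, Jo p (p i + s0 • dv p i + e • w) l := by
  have hne : cr (dv p i) w ≠ 0 := by intro h; rw [h] at hw; simp at hw
  filter_upwards [sees_relint hp h0 h1 hne, Av_near h0 (hu i).1 (hu i).2 hw] with e he1 he2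
  refine hl.of_sees hp he1 ?_
  convert he2 using 1
  ring

lemma Off_neg {u : ZMod n → ℂ} (hu : Off 1 p u) : Off (-1) p (fun i => - u i) := by
  intro i
  have := hu i
  simpa [cr_neg] using this

lemma exists_Off (hp : Simple p) : ∃ u, Off 1 p u := by
  have : ∀ i, ∃ u, 0 < cr (dv p (i-1)) u ∧ 0 < cr (dv p i) u := fun i =>
    exists_off (hp.dv_ne _) (hp.dv_ne _) (fun s t hs ht h => hp.not_anti i hs ht h)
  choose u hu using this
  exact ⟨u, fun i => by simpa using hu i⟩

/-- every point of the complement is joined to one of the two sides -/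
lemma two_sides [NeZero n] (hp : Simple p) {u : ZMod n → ℂ} {l r : ℂ} (hu : Off 1 p u) (hl : Anch p u l)
    (hr : Anch p (fun i => - u i) r) {x : ℂ} (hx : x ∉ Bd p) : Jo p x l ∨ Jo p x r := by
  have hne : (Bd p).Nonempty := ⟨p 0, vert_Bd 0⟩
  obtain ⟨y, hy, hyd⟩ := Bd_compact.exists_infDist_eq_dist hne x
  have hsee : ∀ s : ℝ, 0 < s → s ≤ 1 → y + s • (x - y) ∉ Bd p := by
    intro s hs hs1 hm
    have h1 : infDist x (Bd p) ≤ dist x (y + s • (x - y)) := infDist_le_dist_of_mem hm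
    rw [hyd] at h1
    have h2 : x - (y + s • (x - y)) = (1 - s) • (x - y) := by
      simp only [Complex.real_smul]; push_cast; ring
    rw [dist_eq_norm, dist_eq_norm, h2, norm_smul, Real.norm_eq_abs, abs_of_nonneg (by linarith)] at h1
    have h3 : 0 < ‖x - y‖ := by
      rw [norm_pos_iff, sub_ne_zero]; rintro rfl; exact hx hy
    nlinarith
  have vert : ∀ i, y = p i → Jo p x l ∨ Jo p x r := by
    intro i hi
    subst hi
    have hs : Sees p x i := hsee
    have hui := hu i
    simp only [one_mul] at hui
    rcases Av_or hui.1 hui.2 hs.off_ray with h | h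
    · exact .inl (hl.of_sees hp hs h)
    · exact .inr (hr.of_sees hp hs h)
  obtain ⟨i, hi⟩ := mem_iUnion.1 hy
  obtain ⟨s0, h0, h1, hys⟩ := mem_E.1 hi
  rcases h0.lt_or_eq with h0 | h0
  swap
  · subst h0; exact vert i (by simpa using hys)
  rcases h1.lt_or_eq with h1 | h1
  swap
  · subst h1; exact vert (i+1) (by rw [hys]; simp [dv])
  have hJ : ∀ e : ℝ, 0 < e → e ≤ 1 → Jo p x (y + e • (x - y)) := by
    intro e he he1
    apply Jo_seg
    rw [Set.disjoint_left]
    intro z hz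
    rw [segment_eq_image'] at hz
    obtain ⟨s, ⟨hs0, hs1⟩, rfl⟩ := hz
    have : x + s • (y + e • (x - y) - x) = y + (1 - s + s * e) • (x - y) := by
      simp only [Complex.real_smul]; push_cast; ring
    simp only [this]
    apply hsee
    · rcases hs0.lt_or_eq with h | h
      · nlinarith [mul_pos h he]
      · subst h; norm_num
    · nlinarith
  have hle : ∀ᶠ e : ℝ in 𝓝[>] 0, e ≤ 1 := by
    filter_upwards [Ioo_mem_nhdsGT (zero_lt_one (α := ℝ))] with e he using he.2.le
  rcases lt_trichotomy (cr (dv p i) (x - y)) 0 with hc | hc | hc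
  · right
    obtain ⟨e, h3, h4, h5⟩ := ((hr.relint hp (Off_neg hu) h0 h1 (w := x - y) (by linarith)).and (ev_gt.and hle)).exists
    rw [← hys] at h3
    exact (hJ e h4 h5).trans h3
  · exfalso
    obtain ⟨t, ht⟩ := cr_par (hp.dv_ne i) hc
    have h6 := ev_pos (b := t) h0
    have h7 := ev_pos (b := -t) (sub_pos.2 h1)
    obtain ⟨e, h8, h9, h10, h11⟩ := (h6.and (h7.and (ev_gt.and hle))).exists
    apply hsee e h10 h11
    apply E_sub i
    refine mem_E.2 ⟨s0 + e * t, h8.le, by linarith, ?_⟩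
    rw [ht, hys, add_smul, mul_smul, add_assoc]
  · left
    obtain ⟨e, h3, h4, h5⟩ := ((hl.relint hp hu h0 h1 (w := x - y) (by linarith)).and (ev_gt.and hle)).exists
    rw [← hys] at h3
    exact (hJ e h4 h5).trans h3

end
end PD

open Set Metric
namespace PD
open Filter Topology

/-- signed angle under which the oriented segment is seen from `x` -/
noncomputable def ang (a b x : ℂ) : ℝ := Complex.arg ((b - x) / (a - x))

lemma ang_slit {a b x : ℂ} (h : x ∉ segment ℝ a b) : (b - x) / (a - x) ∈ Complex.slitPlane := by
  have ha : a - x ≠ 0 := by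
    rw [sub_ne_zero]; rintro rfl; exact h (left_mem_segment _ _ _)
  by_contra hc
  rw [Complex.mem_slitPlane_iff] at hc
  push Not at hc
  obtain ⟨h1, h2⟩ := hc
  set r := ((b - x) / (a - x)).re with hr
  have he : (b - x) / (a - x) = (r : ℂ) := by
    apply Complex.ext <;> simp [hr, h2]
  rw [div_eq_iff ha] at he
  apply h
  have hpos : 0 < 1 - r := by linarith
  refine ⟨-r / (1 - r), 1 / (1 - r), div_nonneg (by linarith) hpos.le, by positivity, by field_simp; ring, ?_⟩
  have hne : (1 - r : ℂ) ≠ 0 := by exact_mod_cast hpos.ne'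
  simp only [Complex.real_smul]
  push_cast
  field_simp
  linear_combination he

lemma ang_cont {a b x : ℂ} (h : x ∉ segment ℝ a b) : ContinuousAt (ang a b) x := by
  have ha : a - x ≠ 0 := by
    rw [sub_ne_zero]; rintro rfl; exact h (left_mem_segment _ _ _)
  unfold ang
  have : ContinuousAt (fun x => (b - x) / (a - x)) x := by
    apply ContinuousAt.div (by fun_prop) (by fun_prop) ha
  exact ContinuousAt.comp (f := fun x => (b - x) / (a - x)) (Complex.continuousAt_arg (ang_slit h)) this

lemma ang_swap {a b x : ℂ} (h : x ∉ segment ℝ a b) : ang b a x = - ang a b x := by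
  unfold ang
  rw [← inv_div, Complex.arg_inv, if_neg (Complex.slitPlane_arg_ne_pi (ang_slit h))]

section
variable {n : ℕ} {p : ZMod n → ℂ}

lemma not_E {x : ℂ} (hx : x ∉ Bd p) (i : ZMod n) : x ∉ E p i := fun h => hx (E_sub i h)

lemma half_not_Bd {x c : ℂ} (h : ∀ i, 0 < (c * (p i - x)).re) : x ∉ Bd p := by
  intro hx
  obtain ⟨i, hi⟩ := mem_iUnion.1 hx
  obtain ⟨a, b, ha, hb, hab, rfl⟩ := hi
  have h1 := h i
  have h2 := h (i+1)
  have h3 : a * (c * (p i - (a • p i + b • p (i+1)))).re + b * (c * (p (i+1) - (a • p i + b • p (i+1)))).re = 0 := by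
    obtain rfl : b = 1 - a := by linarith
    simp only [Complex.mul_re, Complex.sub_re, Complex.sub_im, Complex.add_re, Complex.add_im, Complex.smul_re,
      Complex.smul_im, smul_eq_mul]
    ring
  rcases ha.lt_or_eq with ha | ha
  · nlinarith [mul_pos ha h1, mul_nonneg hb h2.le]
  · subst ha
    obtain rfl : b = 1 := by linarith
    linarith

end

section
variable {n : ℕ} [NeZero n] {p : ZMod n → ℂ}

/-- `2π` times the winding number -/
noncomputable def W (p : ZMod n → ℂ) (x : ℂ) : ℝ := ∑ i, ang (p i) (p (i+1)) x

lemma W_cont {x : ℂ} (hx : x ∉ Bd p) : ContinuousAt (W p) x := by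
  unfold W
  apply tendsto_finsetSum
  intro i _
  exact ang_cont (not_E hx i)

lemma tele {G : Type*} [AddCommGroup G] (g : ZMod n → G) : ∑ i, (g (i+1) - g i) = 0 := by
  rw [Finset.sum_sub_distrib, sub_eq_zero]
  exact Equiv.sum_comp (Equiv.addRight (1 : ZMod n)) g

lemma W_int {x : ℂ} (hx : x ∉ Bd p) : ∃ m : ℤ, W p x = m * (2 * Real.pi) := by
  have hne : ∀ i, p i - x ≠ 0 := by
    intro i; rw [sub_ne_zero]; rintro rfl; exact hx (vert_Bd i)
  have h : ((W p x : ℝ) : Real.Angle) = 0 := by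
    unfold W ang
    have : ∀ f : ZMod n → ℝ, ((∑ i, f i : ℝ) : Real.Angle) = ∑ i, ((f i : ℝ) : Real.Angle) := by
      intro f; exact map_sum Real.Angle.coeHom f _
    rw [this]
    rw [← tele (fun i => ((Complex.arg (p i - x) : ℝ) : Real.Angle))]
    apply Finset.sum_congr rfl
    intro i _
    exact Complex.arg_div_coe_angle (hne _) (hne _)
  rw [Real.Angle.coe_eq_zero_iff] at h
  obtain ⟨m, hm⟩ := h
  exact ⟨m, by rw [← hm]; simp⟩

lemma W_Jo {x y : ℂ} (h : Jo p x y) : W p x = W p y := by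
  obtain ⟨γ, hγ⟩ := h
  have hc : Continuous (fun t => W p (γ t)) := by
    rw [continuous_iff_continuousAt]
    intro t
    exact ContinuousAt.comp (f := γ) (W_cont (hγ t)) γ.continuous.continuousAt
  have hd : IsDiscrete (range ((↑) : ℤ → ℝ)) := by
    rw [isDiscrete_iff_discreteTopology]
    exact (Int.isClosedEmbedding_coe_real.isEmbedding.toHomeomorph).symm.isEmbedding.discreteTopology
  have hpi := Real.pi_pos
  have := IsPreconnected.constant_of_mapsTo (S := (univ : Set unitInterval)) isPreconnected_univ hd
    (f := fun t => W p (γ t) / (2 * Real.pi)) (hc.div_const _).continuousOn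
    (by
      intro t _
      obtain ⟨m, hm⟩ := W_int (hγ t)
      refine ⟨m, ?_⟩
      simp only [hm]
      field_simp) (mem_univ 0) (mem_univ 1)
  simp only [γ.source, γ.target] at this
  field_simp at this
  exact this

lemma W_half {x c : ℂ} (h : ∀ i, 0 < (c * (p i - x)).re) : W p x = 0 := by
  unfold W
  rw [← tele (fun i => Complex.arg (c * (p i - x)))]
  apply Finset.sum_congr rfl
  intro i _
  unfold ang
  have hne : ∀ i, c * (p i - x) ≠ 0 := by
    intro i h0; have := h i; rw [h0] at this; simp at this
  have hc : c ≠ 0 := left_ne_zero_of_mul (hne i)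
  have hb : ∀ i, |Complex.arg (c * (p i - x))| < Real.pi / 2 := fun i =>
    Complex.abs_arg_lt_pi_div_two_iff.2 (.inl (h i))
  have h1 := abs_lt.1 (hb i)
  have h2 := abs_lt.1 (hb (i+1))
  have hpi := Real.pi_pos
  have hinv : Complex.arg (c * (p i - x))⁻¹ = - Complex.arg (c * (p i - x)) := by
    rw [Complex.arg_inv, if_neg]; intro h; linarith
  rw [← mul_div_mul_left _ _ hc, div_eq_mul_inv, Complex.arg_mul (hne _) (inv_ne_zero (hne _)), hinv]
  · ring
  · rw [hinv]
    constructor <;> linarith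

/-- far points -/
lemma W_far (p : ZMod n → ℂ) : ∃ R : ℝ, ∀ x : ℂ, R < ‖x‖ → x ∉ Bd p ∧ W p x = 0 := by
  refine ⟨∑ i, ‖p i‖, fun x hx => ?_⟩
  have h : ∀ i, 0 < ((-(starRingEnd ℂ) x) * (p i - x)).re := by
    intro i
    have h1 : ‖p i‖ ≤ ∑ i, ‖p i‖ := Finset.single_le_sum (f := fun i => ‖p i‖) (fun _ _ => norm_nonneg _) (Finset.mem_univ i)
    have h2 : ((-(starRingEnd ℂ) x) * (p i - x)).re = ‖x‖ ^ 2 - ((starRingEnd ℂ) x * p i).re := by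
      rw [← Complex.normSq_eq_norm_sq, Complex.normSq_apply]; simp; ring
    have h3 : ((starRingEnd ℂ) x * p i).re ≤ ‖x‖ * ‖p i‖ := by
      refine (Complex.re_le_norm _).trans ?_
      rw [norm_mul, Complex.norm_conj]
    have h4 : 0 < ‖x‖ := lt_of_le_of_lt ((norm_nonneg _).trans h1) hx
    rw [h2]
    nlinarith
  exact ⟨half_not_Bd h, W_half h⟩

/-- the jump across an edge -/
lemma W_jump (hp : Simple p) (i : ZMod n) (hoff : ∀ᶠ e : ℝ in 𝓝[>] 0,
      p i + (1/2:ℝ) • dv p i + e • (Complex.I * dv p i) ∉ Bd p ∧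
      p i + (1/2:ℝ) • dv p i + e • (-(Complex.I * dv p i)) ∉ Bd p) : ∀ᶠ e : ℝ in 𝓝[>] 0,
    W p (p i + (1/2:ℝ) • dv p i + e • (Complex.I * dv p i)) -
    W p (p i + (1/2:ℝ) • dv p i + e • (-(Complex.I * dv p i))) = 2 * Real.pi := by
  set y := p i + (1/2:ℝ) • dv p i with hy
  set w := Complex.I * dv p i with hw
  have hpi := Real.pi_pos
  have hd := hp.dv_ne i
  have hyE : ∀ k, k ≠ i → y ∉ E p k := by
    intro k hk hm
    have := sees_relint hp (i := i) (w := w) (s0 := 1/2) (by norm_num) (by norm_num)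
    have hyi : y ∈ E p i := mem_E.2 ⟨1/2, by norm_num, by norm_num, rfl⟩
    by_cases h1 : k = i + 1
    · subst h1
      have : y ∈ ({p (i+1)} : Set ℂ) := by rw [← hp.consec i]; exact ⟨hyi, hm⟩
      have h2 : (1/2:ℝ) • dv p i = 0 := by
        have h3 : y = p (i+1) := this
        rw [hy] at h3
        have : p (i+1) = p i + dv p i := by simp [dv]
        rw [this] at h3
        have h4 := add_left_cancel h3
        simp only [Complex.real_smul] at h4 ⊢
        push_cast at h4 ⊢
        linear_combination -h4
      rcases smul_eq_zero.1 h2 with h | h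
      · norm_num at h
      · exact hd h
    by_cases h2 : i = k + 1
    · have h3 := hp.consec k
      rw [← h2] at h3
      have : y ∈ ({p i} : Set ℂ) := by rw [← h3]; exact ⟨hm, hyi⟩
      have h2 : (1/2:ℝ) • dv p i = 0 := by simpa [hy] using this
      rcases smul_eq_zero.1 h2 with h | h
      · norm_num at h
      · exact hd h
    have := hp.nonconsec i k hk h1 h2
    have h5 : y ∈ E p i ∩ E p k := ⟨hyi, hm⟩
    rw [this] at h5
    exact h5
  have hcw : ∀ v : ℂ, Tendsto (fun e : ℝ => y + e • v) (𝓝[>] 0) (𝓝 y) := by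
    intro v
    have : Tendsto (fun e : ℝ => y + e • v) (𝓝 0) (𝓝 (y + (0:ℝ) • v)) := by
      apply Continuous.tendsto; fun_prop
    rw [zero_smul, add_zero] at this
    exact this.mono_left nhdsWithin_le_nhds
  -- terms
  have hterm : ∀ k, Tendsto (fun e : ℝ => ang (p k) (p (k+1)) (y + e • w) - ang (p k) (p (k+1)) (y + e • (-w)))
      (𝓝[>] 0) (𝓝 (if k = i then 2 * Real.pi else 0)) := by
    intro k
    by_cases hk : k = i
    · subst hk
      rw [if_pos rfl]
      let z : ℝ → ℂ := fun e => (1/2 - e * Complex.I) / (-1/2 - e * Complex.I)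
      have hz1 : ∀ e : ℝ, ang (p k) (p (k+1)) (y + e • w) = Complex.arg (z e) := by
        intro e
        unfold ang
        have h1 : p (k+1) - (y + e • w) = dv p k * (1/2 - e * Complex.I) := by
          rw [hy, hw]; simp only [Complex.real_smul, dv]; push_cast; ring
        have h2 : p k - (y + e • w) = dv p k * (-1/2 - e * Complex.I) := by
          rw [hy, hw]; simp only [Complex.real_smul, dv]; push_cast; ring
        rw [h1, h2, mul_div_mul_left _ _ hd]
      have hz0 : ∀ e : ℝ, (z e).im = e / (1/4 + e^2) := by
        intro e
        have h3 : (1/4 + e^2 : ℝ) ≠ 0 := by positivity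
        have h4 : (z e) = (((1/2:ℝ):ℂ) - e * Complex.I) / (((-1/2:ℝ):ℂ) - e * Complex.I) := by
          simp only [z]; push_cast; rfl
        have h5 : Complex.normSq (((-1/2:ℝ):ℂ) - e * Complex.I) = 1/4 + e^2 := by
          simp only [Complex.normSq_apply, Complex.sub_re, Complex.sub_im, Complex.ofReal_re, Complex.ofReal_im,
            Complex.mul_re, Complex.mul_im, Complex.I_re, Complex.I_im]
          ring
        rw [h4, Complex.div_im, h5]
        simp only [Complex.sub_re, Complex.sub_im, Complex.ofReal_re, Complex.ofReal_im,
            Complex.mul_re, Complex.mul_im, Complex.I_re, Complex.I_im]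
        field_simp
        ring
      have hz2 : ∀ e : ℝ, 0 < e → ang (p k) (p (k+1)) (y + e • (-w)) = - Complex.arg (z e) := by
        intro e he
        have h1 : y + e • (-w) = y + (-e) • w := by simp
        rw [h1, hz1]
        have h2 : z (-e) = (starRingEnd ℂ) (z e) := by
          simp only [z, map_div₀, map_sub, map_mul, map_neg, map_one, map_ofNat, Complex.conj_I, Complex.conj_ofReal]; simp
        rw [h2, Complex.arg_conj, if_neg]
        intro h
        rw [Complex.arg_eq_pi_iff] at h
        have h3 : (z e).im = e / (1/4 + e^2) := hz0 e
        have h4 : 0 < e / (1/4 + e^2) := by positivity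
        rw [h3] at h
        linarith [h.2]
      have hzt : Tendsto z (𝓝[>] 0) (𝓝[{z : ℂ | 0 ≤ z.im}] (-1)) := by
        rw [tendsto_nhdsWithin_iff]
        constructor
        · have : ContinuousAt z 0 := by
            apply ContinuousAt.div (by fun_prop) (by fun_prop)
            norm_num
          have h2 : z 0 = -1 := by simp [z]; norm_num
          rw [ContinuousAt, h2] at this
          exact this.mono_left nhdsWithin_le_nhds
        · filter_upwards [ev_gt] with e he
          change 0 ≤ (z e).im
          have h3 : (z e).im = e / (1/4 + e^2) := hz0 e
          rw [h3]; positivity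
      have ht : Tendsto (fun e => Complex.arg (z e)) (𝓝[>] 0) (𝓝 Real.pi) := by
        have := (Complex.continuousWithinAt_arg_of_re_neg_of_im_zero (z := -1) (by simp) (by simp))
        rw [ContinuousWithinAt, Complex.arg_neg_one] at this
        exact this.comp hzt
      have h6 := ht.const_mul 2
      refine h6.congr' ?_
      filter_upwards [ev_gt] with e he
      rw [hz1, hz2 e he]; ring
    · rw [if_neg hk]
      have hc := ang_cont (hyE k hk)
      have := (hc.tendsto.comp (hcw w)).sub (hc.tendsto.comp (hcw (-w)))
      rw [sub_self] at this
      exact this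
  have hsum : Tendsto (fun e : ℝ => W p (y + e • w) - W p (y + e • (-w))) (𝓝[>] 0) (𝓝 (2 * Real.pi)) := by
    have := tendsto_finsetSum Finset.univ (fun k _ => hterm k)
    simp only [Finset.sum_ite_eq', Finset.mem_univ, if_true] at this
    refine this.congr ?_
    intro e
    rw [Finset.sum_sub_distrib]; rfl
  have hb := hsum.eventually (Ioo_mem_nhds (show Real.pi < 2 * Real.pi by linarith) (show 2 * Real.pi < 3 * Real.pi by linarith))
  filter_upwards [hoff, hb] with e ⟨he1, he2⟩ he3
  obtain ⟨a, ha⟩ := W_int he1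
  obtain ⟨b, hb⟩ := W_int he2
  rw [ha, hb] at he3 ⊢
  obtain ⟨h1, h2⟩ := he3
  have h3 : ((a - b : ℤ) : ℝ) * 2 < 3 := by
    push_cast
    by_contra hc; push Not at hc
    nlinarith
  have h4 : 1 < ((a - b : ℤ) : ℝ) * 2 := by
    push_cast
    by_contra hc; push Not at hc
    nlinarith
  have h5 : a - b = 1 := by
    have h3' : (a - b) * 2 < 3 := by exact_mod_cast h3
    have h4' : 1 < (a - b) * 2 := by exact_mod_cast h4
    omega
  have : (a : ℝ) = b + 1 := by have := congrArg (Int.cast : ℤ → ℝ) h5; push_cast at this; linarith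
  rw [this]; ring

end
end PD

open Set Metric
namespace PD
open Filter Topology

section
variable {n : ℕ} {p : ZMod n → ℂ}

/-- the reversed polygon -/
def rev (p : ZMod n → ℂ) : ZMod n → ℂ := fun i => p (-i)

lemma rev_dv (i : ZMod n) : dv (rev p) i = - dv p (-i-1) := by
  unfold dv rev
  rw [show -i - 1 + 1 = -i by ring, show -(i+1) = -i-1 by ring]; ring

lemma rev_E (i : ZMod n) : E (rev p) i = E p (-i-1) := by
  unfold E rev
  rw [show -i - 1 + 1 = -i by ring, show -(i+1) = -i-1 by ring, segment_symm]

lemma rev_Bd : Bd (rev p) = Bd p := by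
  ext x
  simp only [Bd, mem_iUnion, rev_E]
  constructor
  · rintro ⟨i, hi⟩; exact ⟨_, hi⟩
  · rintro ⟨i, hi⟩; exact ⟨-i-1, by rwa [show -(-i-1)-1 = i by ring]⟩

lemma Simple.rev (hp : Simple p) : Simple (rev p) := by
  refine ⟨hp.three_le, fun i j h => neg_injective (hp.inj h), fun i => ?_, fun i j h1 h2 h3 => ?_⟩
  · rw [rev_E, rev_E, inter_comm]
    have := hp.consec (-(i+1)-1)
    rw [show -(i+1)-1+1 = -i-1 by ring] at this
    rw [this]; unfold PD.rev; rw [show -(i+1) = -i-1 by ring]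
  · rw [rev_E, rev_E]
    apply hp.nonconsec
    · intro h; apply h1; linear_combination -h
    · intro h; apply h3; linear_combination h
    · intro h; apply h2; linear_combination h

lemma rev_Sees {c : ℂ} {i : ZMod n} (h : Sees (rev p) c i) : Sees p c (-i) := by
  unfold Sees at *
  rw [rev_Bd] at h
  exact h

lemma sees_edge' [NeZero n] (hp : Simple p) {j : ZMod n} {u : ℂ} {σ : ℝ}
    (hA : 0 < σ * cr (dv p j) u) (hB : 0 < σ * cr (dv p (j+1)) u) :
    ∀ᶠ e : ℝ in 𝓝[>] 0, Sees p (p (j+1) + e • u) j := by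
  have := sees_edge hp.rev (j := -(j+1)) (u := u) (σ := -σ)
    (by rw [rev_dv, show -(-(j+1)-1)-1 = j+1 by ring, cr_neg_left]; linarith)
    (by rw [rev_dv, show -(-(j+1))-1 = j by ring, cr_neg_left]; linarith)
  filter_upwards [this] with e he
  have := rev_Sees he
  rw [show -(-(j+1)+1) = j by ring] at this
  unfold rev at this
  rwa [neg_neg] at this

lemma Av_scale {A B d u : ℂ} {s : ℝ} (hs : 0 < s) (h : Av A B (s • d) u) : Av A B d u := by
  intro l m t hl hm hlm ht
  have := h (l / s) m t (by positivity) hm (by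
    rcases hl.lt_or_eq with h | h
    · have : 0 < l / s := by positivity
      linarith
    · subst h; simpa using hlm) ht
  rwa [smul_smul, div_mul_cancel₀ _ hs.ne'] at this

variable [NeZero n]

lemma rev_W {x : ℂ} (hx : x ∉ Bd p) : W (rev p) x = - W p x := by
  unfold W
  rw [← Finset.sum_neg_distrib]
  let e : ZMod n ≃ ZMod n := ⟨fun i => -i-1, fun i => -i-1, fun i => by ring, fun i => by ring⟩
  rw [← Equiv.sum_comp e (fun i => - ang (p i) (p (i+1)) x)]
  apply Finset.sum_congr rfl
  intro i _
  rw [← ang_swap (not_E hx (e i))]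
  simp only [e, Equiv.coe_fn_mk, rev]
  rw [show -i - 1 + 1 = -i by ring, show -(i+1) = -i-1 by ring]

/-- interior, through the winding number -/
def In (p : ZMod n → ℂ) : Set ℂ := {x | x ∉ Bd p ∧ W p x ≠ 0}

def Pos (p : ZMod n → ℂ) : Prop := ∀ x, x ∉ Bd p → W p x = 0 ∨ W p x = 2 * Real.pi

lemma core (hp : Simple p) {u : ZMod n → ℂ} (hu : Off 1 p u) :
    ∃ l r, Anch p u l ∧ Anch p (fun i => - u i) r ∧ W p l = W p r + 2 * Real.pi ∧
      (∀ x, x ∉ Bd p → Jo p x l ∨ Jo p x r) ∧ (W p l = 0 ∨ W p r = 0) := by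
  obtain ⟨l, hl⟩ := anchor hp hu
  obtain ⟨r, hr⟩ := anchor hp (Off_neg hu)
  refine ⟨l, r, hl, hr, ?_, fun x hx => two_sides hp hu hl hr hx, ?_⟩
  · have hc : 0 < cr (dv p 0) (Complex.I * dv p 0) := by
      have := Complex.normSq_pos.2 (hp.dv_ne 0)
      rw [Complex.normSq_apply] at this
      unfold cr; simp; linarith
    have h1 := Anch.relint hp hl hu (i := 0) (w := Complex.I * dv p 0) (s0 := 1/2) (by norm_num) (by norm_num)
      (by linarith)
    have h2 := Anch.relint hp hr (Off_neg hu) (i := 0) (w := -(Complex.I * dv p 0)) (s0 := 1/2) (by norm_num) (by norm_num)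
      (by rw [cr_neg]; linarith)
    have h3 := W_jump hp 0 (by
      filter_upwards [h1, h2] with e he1 he2
      exact ⟨he1.source_mem, he2.source_mem⟩)
    obtain ⟨e, ⟨he1, he2⟩, he3⟩ := ((h1.and h2).and h3).exists
    rw [W_Jo he1, W_Jo he2] at he3
    linarith
  · obtain ⟨R, hR⟩ := W_far p
    obtain ⟨hx, hx2⟩ := hR ((|R| + 1 : ℝ) : ℂ) (by
      rw [Complex.norm_real, Real.norm_eq_abs, abs_of_nonneg (by positivity)]
      linarith [le_abs_self R])
    rcases two_sides hp hu hl hr hx with h | h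
    · left; rw [← W_Jo h, hx2]
    · right; rw [← W_Jo h, hx2]

lemma pos_or (hp : Simple p) : Pos p ∨ Pos (rev p) := by
  obtain ⟨u, hu⟩ := exists_Off hp
  obtain ⟨l, r, -, -, h1, h2, h3⟩ := core hp hu
  rcases h3 with h3 | h3
  · right
    intro x hx
    rw [rev_Bd] at hx
    rw [rev_W hx]
    rcases h2 x hx with h | h
    · left; rw [W_Jo h, h3, neg_zero]
    · right; rw [W_Jo h]; linarith
  · left
    intro x hx
    rcases h2 x hx with h | h
    · right; rw [W_Jo h]; linarith
    · left; rw [W_Jo h, h3]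

lemma core_pos (hp : Simple p) (hP : Pos p) {u : ZMod n → ℂ} (hu : Off 1 p u) :
    ∃ l r, Anch p u l ∧ Anch p (fun i => - u i) r ∧ W p l = 2 * Real.pi ∧ W p r = 0 ∧
      (∀ x, x ∉ Bd p → Jo p x l ∨ Jo p x r) := by
  obtain ⟨l, r, hl, hr, h1, h2, h3⟩ := core hp hu
  have hpi := Real.pi_pos
  obtain ⟨e, he⟩ := (hr 0).exists
  have hr0 := hP r he.target_mem
  obtain ⟨e, he⟩ := (hl 0).exists
  have hl0 := hP l he.target_mem
  refine ⟨l, r, hl, hr, ?_, ?_, h2⟩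
  · rcases hl0 with h | h
    · rcases hr0 with h' | h' <;> linarith
    · exact h
  · rcases hr0 with h | h
    · exact h
    · rcases hl0 with h' | h' <;> linarith

lemma In_of_eq {x : ℂ} (hx : x ∉ Bd p) (h : W p x = 2 * Real.pi) : x ∈ In p :=
  ⟨hx, by rw [h]; have := Real.pi_pos; positivity⟩

lemma In_W (hP : Pos p) {x : ℂ} (hx : x ∈ In p) : W p x = 2 * Real.pi :=
  (hP x hx.1).resolve_left hx.2

lemma In_seg {x y : ℂ} (hx : x ∈ In p) (h : Disjoint (segment ℝ x y) (Bd p)) : y ∈ In p :=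
  ⟨fun hy => disjoint_left.1 h (right_mem_segment _ _ _) hy, by rw [← W_Jo (Jo_seg h)]; exact hx.2⟩

lemma In_seg_sub {x y : ℂ} (hx : x ∈ In p) (h : Disjoint (segment ℝ x y) (Bd p)) : segment ℝ x y ⊆ In p := by
  intro z hz
  refine In_seg hx (h.mono_left ?_)
  exact (convex_segment x y).segment_subset (left_mem_segment _ _ _) hz

lemma ev_left (hp : Simple p) (hP : Pos p) {u : ZMod n → ℂ} (hu : Off 1 p u) (i : ZMod n) :
    ∀ᶠ e : ℝ in 𝓝[>] 0, p i + e • u i ∈ In p := by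
  obtain ⟨l, r, hl, hr, h1, h2, -⟩ := core_pos hp hP hu
  filter_upwards [hl i] with e he
  exact In_of_eq he.source_mem (by rw [W_Jo he, h1])

lemma ev_rel_left (hp : Simple p) (hP : Pos p) {i : ZMod n} {s : ℝ} (h0 : 0 < s) (h1 : s < 1) {w : ℂ}
    (hw : 0 < cr (dv p i) w) : ∀ᶠ e : ℝ in 𝓝[>] 0, p i + s • dv p i + e • w ∈ In p := by
  obtain ⟨u, hu⟩ := exists_Off hp
  obtain ⟨l, r, hl, hr, h1', h2, -⟩ := core_pos hp hP hu
  filter_upwards [Anch.relint hp hl hu h0 h1 (by linarith)] with e he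
  exact In_of_eq he.source_mem (by rw [W_Jo he, h1'])

lemma ev_rel_right (hp : Simple p) (hP : Pos p) {i : ZMod n} {s : ℝ} (h0 : 0 < s) (h1 : s < 1) {w : ℂ}
    (hw : cr (dv p i) w < 0) : ∀ᶠ e : ℝ in 𝓝[>] 0, p i + s • dv p i + e • w ∉ Bd p ∧
      W p (p i + s • dv p i + e • w) = 0 := by
  obtain ⟨u, hu⟩ := exists_Off hp
  obtain ⟨l, r, hl, hr, h1', h2, -⟩ := core_pos hp hP hu
  filter_upwards [Anch.relint hp hr (Off_neg hu) h0 h1 (by linarith)] with e he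
  exact ⟨he.source_mem, by rw [W_Jo he, h2]⟩

lemma Jo_of_W (hp : Simple p) (hP : Pos p) {x y : ℂ} (hx : x ∉ Bd p) (hy : y ∉ Bd p)
    (h : W p x = W p y) : Jo p x y := by
  obtain ⟨u, hu⟩ := exists_Off hp
  obtain ⟨l, r, hl, hr, h1, h2, h3⟩ := core_pos hp hP hu
  have hpi := Real.pi_pos
  rcases h3 x hx with a | a <;> rcases h3 y hy with b | b
  · exact a.trans b.symm
  · have := W_Jo a; have := W_Jo b; linarith
  · have := W_Jo a; have := W_Jo b; linarith
  · exact a.trans b.symm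

/-- interior points see with their inner side -/
lemma In_av (hp : Simple p) (hP : Pos p) {u : ZMod n → ℂ} (hu : Off 1 p u) {c : ℂ} {i : ZMod n}
    (hc : c ∈ In p) (hs : Sees p c i) : Av (dv p (i-1)) (dv p i) (c - p i) (u i) := by
  obtain ⟨l, r, hl, hr, h1, h2, h3⟩ := core_pos hp hP hu
  have hui := hu i
  rw [one_mul, one_mul] at hui
  rcases Av_or hui.1 hui.2 hs.off_ray with h | h
  · exact h
  · exact absurd (by rw [W_Jo (hr.of_sees hp hs h), h2]) hc.2

lemma In_move (hp : Simple p) (hP : Pos p) {u : ZMod n → ℂ} (hu : Off 1 p u) {c : ℂ} {i : ZMod n}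
    (hc : c ∈ In p) (hs : Sees p c i) :
    ∀ᶠ e : ℝ in 𝓝[>] 0, segment ℝ c (p i + e • u i) ⊆ In p := by
  filter_upwards [ev_move hp hs (In_av hp hP hu hc hs)] with e he
  exact In_seg_sub hc he

/-- good side, on indices -/
def GSi (p : ZMod n → ℂ) (i j : ZMod n) : Prop :=
  j = i + 1 ∨ i = j + 1 ∨ openSegment ℝ (p i) (p j) ⊆ In p

lemma GSi.sees (hp : Simple p) (hP : Pos p) {u : ZMod n → ℂ} (hu : Off 1 p u) {i j : ZMod n}
    (hij : i ≠ j) (h : GSi p i j) : ∀ᶠ e : ℝ in 𝓝[>] 0, Sees p (p j + e • u j) i := by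
  rcases h with h | h | h
  · subst h
    have := hu (i+1)
    rw [add_sub_cancel_right] at this
    exact sees_edge' hp this.1 this.2
  · subst h
    exact sees_edge hp (hu j).1 (hu j).2
  · have hd : Disjoint (openSegment ℝ (p i) (p j)) (Bd p) := by
      rw [disjoint_left]; intro x hx; exact (h hx).1
    apply sees_diag hp hij hd
    have hs : ∀ s : ℝ, 0 < s → s < 1 → p j + s • (p i - p j) ∈ openSegment ℝ (p i) (p j) := by
      intro s h0 h1
      refine ⟨s, 1 - s, h0, by linarith, by ring, ?_⟩
      simp only [Complex.real_smul]; push_cast; ring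
    have hc := h (hs (1/2) (by norm_num) (by norm_num))
    apply Av_scale (s := 1/2) (by norm_num)
    have := In_av hp hP hu hc (i := j) (by
      intro s h0 h1
      rw [add_sub_cancel_left, smul_smul]
      exact (h (hs _ (by linarith) (by linarith))).1)
    rwa [add_sub_cancel_left] at this

end
end PD

open Set Metric
namespace PD
open Filter Topology

section
variable {n : ℕ} [NeZero n] {p : ZMod n → ℂ}

lemma cr_decomp (A B u : ℂ) : (cr A B) • u = (-cr B u) • A + (cr A u) • B := by
  apply Complex.ext <;> simp [cr] <;> ring

/-- a convex vertex -/
lemma exists_convex (hp : Simple p) (hP : Pos p) : ∃ i, 0 < cr (dv p (i-1)) (dv p i) := by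
  obtain ⟨i, -, hi⟩ := Finset.exists_max_image (Finset.univ : Finset (ZMod n)) (fun i => ‖p i‖) ⟨0, Finset.mem_univ _⟩
  refine ⟨i, ?_⟩
  let f : ℂ → ℝ := fun z => (p i).re * z.re + (p i).im * z.im
  have hf : ∀ j, j ≠ i → f (p j) < f (p i) := by
    intro j hj
    have h1 := hi j (Finset.mem_univ _)
    have h2 : ‖p j‖ ^ 2 ≤ ‖p i‖ ^ 2 := by gcongr
    rw [← Complex.normSq_eq_norm_sq, ← Complex.normSq_eq_norm_sq, Complex.normSq_apply, Complex.normSq_apply] at h2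
    have h3 := Complex.normSq_pos.2 (sub_ne_zero.2 (hp.inj.ne hj))
    rw [Complex.normSq_apply, Complex.sub_re, Complex.sub_im] at h3
    simp only [f]
    nlinarith
  have hone := hp.one_ne
  set A := dv p (i-1) with hA
  set B := dv p i with hB
  have fA : 0 < f A := by
    have := hf (i-1) (by simpa using hone)
    rw [hA, dv, sub_add_cancel]
    simp only [f, Complex.sub_re, Complex.sub_im] at *
    linarith
  have fB : f B < 0 := by
    have := hf (i+1) (by simpa using hone)
    rw [hB, dv]
    simp only [f, Complex.sub_re, Complex.sub_im] at *
    linarith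
  by_contra hc
  rcases (not_lt.1 hc).lt_or_eq with h | h
  · obtain ⟨u, hu⟩ := exists_Off hp
    obtain ⟨e, he, he0⟩ := ((ev_left hp hP hu i).and ev_gt).exists
    apply he.2
    have hui := hu i
    rw [one_mul, one_mul, ← hA, ← hB] at hui
    have hfu : 0 < f (u i) := by
      have h1 := congrArg f (cr_decomp A B (u i))
      have h2 : cr A B * f (u i) = (-cr B (u i)) * f A + cr A (u i) * f B := by
        simp only [f, Complex.add_re, Complex.add_im, Complex.smul_re, Complex.smul_im, smul_eq_mul] at h1 ⊢
        linarith
      by_contra hneg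
      nlinarith [mul_pos hui.2 fA, mul_neg_of_pos_of_neg hui.1 fB]
    apply W_half (c := - (starRingEnd ℂ) (p i))
    intro k
    have h3 : f (p k) ≤ f (p i) := by
      by_cases hk : k = i
      · rw [hk]
      · exact (hf k hk).le
    have h4 : ((-(starRingEnd ℂ) (p i)) * (p k - (p i + e • u i))).re = f (p i) - f (p k) + e * f (u i) := by
      simp [f]; ring
    rw [h4]
    have := mul_pos he0 hfu
    linarith
  · obtain ⟨t, ht⟩ := cr_par (hp.dv_ne (i-1)) h
    rw [← hA] at ht
    have h1 : f B = t * f A := by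
      rw [ht]; simp [f]; ring
    have ht0 : t < 0 := by
      by_contra h0
      have := mul_nonneg (not_lt.1 h0) fA.le
      linarith
    have := hp.not_anti i (s := 1) (t := -t) (by norm_num) (by linarith) (by
      rw [← hA, ← hB, one_smul, ht]; simp)
    linarith [this.1]

end
section
variable {n : ℕ} {p : ZMod n → ℂ}

/-- coordinates at a convex vertex -/
noncomputable def ca (p : ZMod n → ℂ) (i : ZMod n) (z : ℂ) : ℝ := cr (dv p i) (z - p i) / cr (dv p (i-1)) (dv p i)
noncomputable def cb (p : ZMod n → ℂ) (i : ZMod n) (z : ℂ) : ℝ := cr (dv p (i-1)) (z - p i) / cr (dv p (i-1)) (dv p i)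

lemma cab {i : ZMod n} (h : 0 < cr (dv p (i-1)) (dv p i)) (z : ℂ) :
    z = p i + ((ca p i z) • (-dv p (i-1)) + (cb p i z) • dv p i) := by
  have := cr_decomp (dv p (i-1)) (dv p i) (z - p i)
  have h2 : z - p i = (ca p i z) • (-dv p (i-1)) + (cb p i z) • dv p i := by
    apply smul_right_injective ℂ h.ne'
    change cr (dv p (i-1)) (dv p i) • (z - p i) = cr (dv p (i-1)) (dv p i) • _
    rw [this, smul_add, smul_smul, smul_smul, ca, cb, mul_div_cancel₀ _ h.ne', mul_div_cancel₀ _ h.ne']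
    simp
  rw [← h2]; ring

lemma ca_aff (i : ZMod n) (x y : ℂ) (t : ℝ) : ca p i (x + t • (y - x)) = ca p i x + t * (ca p i y - ca p i x) := by
  unfold ca cr; simp; ring
lemma cb_aff (i : ZMod n) (x y : ℂ) (t : ℝ) : cb p i (x + t • (y - x)) = cb p i x + t * (cb p i y - cb p i x) := by
  unfold cb cr; simp; ring
lemma ca_v (i : ZMod n) : ca p i (p i) = 0 := by unfold ca cr; simp
lemma cb_v (i : ZMod n) : cb p i (p i) = 0 := by unfold cb cr; simp
lemma ca_w (i : ZMod n) : ca p i (p (i+1)) = 0 := by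
  unfold ca; rw [← dv, cr_self, zero_div]
lemma cb_w {i : ZMod n} (h : 0 < cr (dv p (i-1)) (dv p i)) : cb p i (p (i+1)) = 1 := by
  unfold cb; rw [← dv, div_self h.ne']
lemma dvm (i : ZMod n) : p (i-1) - p i = - dv p (i-1) := by unfold dv; rw [sub_add_cancel]; ring
lemma cb_u (i : ZMod n) : cb p i (p (i-1)) = 0 := by
  unfold cb; rw [dvm, cr_neg, cr_self, neg_zero, zero_div]
lemma ca_u {i : ZMod n} (h : 0 < cr (dv p (i-1)) (dv p i)) : ca p i (p (i-1)) = 1 := by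
  unfold ca; rw [dvm, cr_neg, cr_anti, neg_neg, div_self h.ne']

lemma mem_E_aff {k : ZMod n} {y : ℂ} (h : y ∈ E p k) : ∃ t : ℝ, 0 ≤ t ∧ t ≤ 1 ∧ y = p k + t • (p (k+1) - p k) := mem_E.1 h

lemma E_i {i : ZMod n} {x : ℂ} (hx : x ∈ E p i) : ca p i x = 0 := by
  obtain ⟨t, -, -, rfl⟩ := mem_E_aff hx
  rw [ca_aff, ca_w, ca_v]; ring
lemma E_im {i : ZMod n} {x : ℂ} (hx : x ∈ E p (i-1)) : cb p i x = 0 := by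
  obtain ⟨t, -, -, rfl⟩ := mem_E_aff hx
  rw [sub_add_cancel, cb_aff, cb_u, cb_v]; ring

lemma mem_E_of {i : ZMod n} (h : 0 < cr (dv p (i-1)) (dv p i)) {x : ℂ} (ha : ca p i x = 0) (hb : 0 ≤ cb p i x)
    (hb1 : cb p i x ≤ 1) : x ∈ E p i := by
  rw [mem_E]
  refine ⟨_, hb, hb1, ?_⟩
  have := cab h x
  rwa [ha, zero_smul, zero_add] at this
lemma mem_E_of' {i : ZMod n} (h : 0 < cr (dv p (i-1)) (dv p i)) {x : ℂ} (ha : cb p i x = 0) (hb : 0 ≤ ca p i x)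
    (hb1 : ca p i x ≤ 1) : x ∈ E p (i-1) := by
  rw [mem_E']
  refine ⟨_, hb, hb1, ?_⟩
  have := cab h x
  rwa [ha, zero_smul, add_zero] at this

lemma E_convex {k : ZMod n} : Convex ℝ (E p k) := convex_segment _ _

lemma aff_mem {S : Set ℂ} (hS : Convex ℝ S) {x y : ℂ} (hx : x ∈ S) (hy : y ∈ S) {t : ℝ} (h0 : 0 ≤ t) (h1 : t ≤ 1) :
    x + t • (y - x) ∈ S := hS.add_smul_sub_mem hx hy ⟨h0, h1⟩

/-- the key emptiness lemma -/
lemma lemB (hp : Simple p) {i : ZMod n} (h : 0 < cr (dv p (i-1)) (dv p i)) {z : ℂ} (za : 0 < ca p i z)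
    (zb : 0 < cb p i z) (zg : ca p i z + cb p i z ≤ 1)
    (hv : ∀ k, k ≠ i → 0 ≤ ca p i (p k) → 0 ≤ cb p i (p k) → ca p i z + cb p i z ≤ ca p i (p k) + cb p i (p k))
    {s : ℝ} (hs : 0 < s) (hs1 : s < 1) : p i + s • (z - p i) ∉ Bd p := by
  intro hy
  set y := p i + s • (z - p i) with hyd
  have ya : ca p i y = s * ca p i z := by rw [hyd, ca_aff, ca_v]; ring
  have yb : cb p i y = s * cb p i z := by rw [hyd, cb_aff, cb_v]; ring
  have ya0 : 0 < ca p i y := by rw [ya]; positivity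
  have yb0 : 0 < cb p i y := by rw [yb]; positivity
  have yg : ca p i y + cb p i y < ca p i z + cb p i z := by rw [ya, yb]; nlinarith
  obtain ⟨k, hk⟩ := mem_iUnion.1 hy
  have hki : k ≠ i := by rintro rfl; have := E_i hk; linarith
  have hki' : k ≠ i - 1 := by rintro rfl; have := E_im hk; linarith
  -- an endpoint closer
  obtain ⟨j, hj, hji, hjg⟩ : ∃ j, p j ∈ E p k ∧ j ≠ i ∧ ca p i (p j) + cb p i (p j) ≤ ca p i y + cb p i y := by
    obtain ⟨t, ht0, ht1, ht⟩ := mem_E_aff hk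
    have e1 := (congrArg (ca p i) ht).trans (ca_aff _ _ _ _)
    have e2 := (congrArg (cb p i) ht).trans (cb_aff _ _ _ _)
    by_cases hc : ca p i (p k) + cb p i (p k) ≤ ca p i y + cb p i y
    · exact ⟨k, vert_mem k, hki, hc⟩
    · refine ⟨k+1, vert_mem' k, ?_, ?_⟩
      · intro h; apply hki'; rw [← h]; ring
      · by_contra hc2
        push Not at hc hc2
        rcases ht0.lt_or_eq with h | h
        · nlinarith
        · rw [← h] at e1 e2; linarith
  -- the crossing
  obtain ⟨τ, ⟨hτ0, hτ1⟩, hτ⟩ : ∃ τ ∈ Icc (0:ℝ) 1, min (ca p i (y + τ • (p j - y))) (cb p i (y + τ • (p j - y))) = 0 := by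
    have hcont : ContinuousOn (fun τ : ℝ => min (ca p i (y + τ • (p j - y))) (cb p i (y + τ • (p j - y)))) (Icc 0 1) := by
      simp only [ca_aff, cb_aff]; fun_prop
    have := intermediate_value_Icc' (zero_le_one) hcont
    refine this ⟨?_, ?_⟩
    · simp only [one_smul, add_sub_cancel]
      by_contra hc
      push Not at hc
      have h1 := lt_min_iff.1 hc
      have := hv j hji h1.1.le h1.2.le
      linarith
    · simp only [zero_smul, add_zero]
      exact le_min ya0.le yb0.le
  set x := y + τ • (p j - y) with hxd
  have hxE : x ∈ E p k := aff_mem E_convex hk hj hτ0 hτ1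
  have xg : ca p i x + cb p i x < 1 := by
    have e1 := (congrArg (ca p i) hxd).trans (ca_aff _ _ _ _)
    have e2 := (congrArg (cb p i) hxd).trans (cb_aff _ _ _ _)
    nlinarith
  have hx0 : 0 ≤ ca p i x ∧ 0 ≤ cb p i x := le_min_iff.1 hτ.ge
  have hx1 : ca p i x = 0 ∨ cb p i x = 0 := by
    rcases min_choice (ca p i x) (cb p i x) with h | h
    · left; rw [← h, hτ]
    · right; rw [← h, hτ]
  rcases hx1 with h1 | h1
  · have hx2 := mem_E_of h h1 hx0.2 (by linarith)
    by_cases hk2 : k = i + 1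
    · subst hk2
      have : x ∈ ({p (i+1)} : Set ℂ) := by rw [← hp.consec i]; exact ⟨hx2, hxE⟩
      have h3 : x = p (i+1) := this
      have := cb_w h
      rw [h3] at xg
      rw [ca_w] at xg
      linarith
    · have := hp.nonconsec i k hki hk2 (by intro h; apply hki'; rw [h]; ring)
      exact (this ▸ (⟨hx2, hxE⟩ : x ∈ E p i ∩ E p k) : x ∈ (∅ : Set ℂ))
  · have hx2 := mem_E_of' h h1 hx0.1 (by linarith)
    by_cases hk2 : i - 1 = k + 1
    · have hcon := hp.consec k
      rw [← hk2] at hcon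
      have : x ∈ ({p (i-1)} : Set ℂ) := by rw [← hcon]; exact ⟨hxE, hx2⟩
      have h3 : x = p (i-1) := this
      have := ca_u h
      rw [h3] at xg
      rw [cb_u] at xg
      linarith
    · have := hp.nonconsec (i-1) k hki' (by rw [sub_add_cancel]; exact hki) hk2
      exact (this ▸ (⟨hx2, hxE⟩ : x ∈ E p (i-1) ∩ E p k) : x ∈ (∅ : Set ℂ))

variable [NeZero n]

lemma lemB_In (hp : Simple p) (hP : Pos p) {i : ZMod n} (h : 0 < cr (dv p (i-1)) (dv p i)) {z : ℂ} (za : 0 < ca p i z)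
    (zb : 0 < cb p i z) (zg : ca p i z + cb p i z ≤ 1)
    (hv : ∀ k, k ≠ i → 0 ≤ ca p i (p k) → 0 ≤ cb p i (p k) → ca p i z + cb p i z ≤ ca p i (p k) + cb p i (p k))
    {s : ℝ} (hs : 0 < s) (hs1 : s < 1) : p i + s • (z - p i) ∈ In p := by
  obtain ⟨u, hu⟩ := exists_Off hp
  have hu' : Off 1 p (Function.update u i (z - p i)) := by
    intro k
    by_cases hk : k = i
    · subst hk
      rw [Function.update_self, one_mul, one_mul]
      unfold ca at za; unfold cb at zb
      exact ⟨(div_pos_iff_of_pos_right h).1 zb, (div_pos_iff_of_pos_right h).1 za⟩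
    · rw [Function.update_of_ne hk]; exact hu k
  have h1 := ev_left hp hP hu' i
  rw [Function.update_self] at h1
  have h2 : ∀ᶠ e : ℝ in 𝓝[>] 0, 0 < 1 + e * (-1) := ev_pos one_pos
  obtain ⟨e, ⟨he, he1⟩, he0⟩ := ((h1.and h2).and ev_gt).exists
  apply In_seg he
  rw [disjoint_left]
  intro x hx
  rw [segment_eq_image'] at hx
  obtain ⟨t, ⟨ht0, ht1⟩, rfl⟩ := hx
  have : p i + e • (z - p i) + t • (p i + s • (z - p i) - (p i + e • (z - p i))) = p i + (e + t * (s - e)) • (z - p i) := by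
    simp only [Complex.real_smul]; push_cast; ring
  simp only [this]
  have hc := (convex_Ioo (0:ℝ) 1).add_smul_sub_mem ⟨he0, by linarith⟩ ⟨hs, hs1⟩ ⟨ht0, ht1⟩
  exact lemB hp h za zb zg hv hc.1 hc.2

lemma open_mem {a b x : ℂ} (hx : x ∈ openSegment ℝ a b) : ∃ s : ℝ, 0 < s ∧ s < 1 ∧ x = a + s • (b - a) := by
  rw [openSegment_eq_image'] at hx
  obtain ⟨t, ⟨ht0, ht1⟩, rfl⟩ := hx
  exact ⟨t, ht0, ht1, rfl⟩

lemma exists_diag (hp : Simple p) (hP : Pos p) (hn : 4 ≤ n) :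
    ∃ i j, j ≠ i ∧ j ≠ i + 1 ∧ i ≠ j + 1 ∧ openSegment ℝ (p i) (p j) ⊆ In p := by
  classical
  obtain ⟨i, h⟩ := exists_convex hp hP
  let S : Finset (ZMod n) := {k | k ≠ i ∧ k ≠ i + 1 ∧ k ≠ i - 1 ∧ 0 ≤ ca p i (p k) ∧ 0 ≤ cb p i (p k) ∧
    ca p i (p k) + cb p i (p k) ≤ 1}
  have hS : ∀ k, k ∈ S ↔ k ≠ i ∧ k ≠ i + 1 ∧ k ≠ i - 1 ∧ 0 ≤ ca p i (p k) ∧ 0 ≤ cb p i (p k) ∧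
    ca p i (p k) + cb p i (p k) ≤ 1 := by intro k; simp [S]
  have h3 : (3 : ZMod n) ≠ 0 := by
    intro h
    have : ((3 : ℕ) : ZMod n) = 0 := by exact_mod_cast h
    rw [ZMod.natCast_eq_zero_iff] at this
    have := Nat.le_of_dvd (by norm_num) this
    omega
  by_cases hne : S.Nonempty
  · obtain ⟨k, hk, hmin⟩ := Finset.exists_min_image S (fun k => ca p i (p k) + cb p i (p k)) hne
    obtain ⟨k1, k2, k3, ka, kb, kg⟩ := (hS k).1 hk
    refine ⟨i, k, k1, k2, ?_, ?_⟩
    · intro h; apply k3; rw [h]; ring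
    have ka' : 0 < ca p i (p k) := by
      rcases ka.lt_or_eq with h' | h'
      · exact h'
      · exact ((hp.vert_in (mem_E_of h h'.symm kb (by linarith))).elim k1 k2).elim
    have kb' : 0 < cb p i (p k) := by
      rcases kb.lt_or_eq with h' | h'
      · exact h'
      · refine ((hp.vert_in (mem_E_of' h h'.symm ka (by linarith))).elim k3 ?_).elim
        rw [sub_add_cancel]; exact k1
    intro x hx
    obtain ⟨s, s0, s1, rfl⟩ := open_mem hx
    refine lemB_In hp hP h ka' kb' kg ?_ s0 s1
    intro m hm ma mb
    by_cases hm1 : m = i + 1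
    · rw [hm1, ca_w, cb_w h]; linarith
    by_cases hm2 : m = i - 1
    · rw [hm2, ca_u h, cb_u]; linarith
    by_cases hm3 : ca p i (p m) + cb p i (p m) ≤ 1
    · exact hmin m ((hS m).2 ⟨hm, hm1, hm2, ma, mb, hm3⟩)
    · linarith
  · have hv : ∀ k, k ≠ i → 0 ≤ ca p i (p k) → 0 ≤ cb p i (p k) → 1 ≤ ca p i (p k) + cb p i (p k) := by
      intro m hm ma mb
      by_cases hm1 : m = i + 1
      · rw [hm1, ca_w, cb_w h]; linarith
      by_cases hm2 : m = i - 1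
      · rw [hm2, ca_u h, cb_u]; linarith
      by_contra hm3
      exact hne ⟨m, (hS m).2 ⟨hm, hm1, hm2, ma, mb, by linarith⟩⟩
    have hI : ∀ z, 0 < ca p i z → 0 < cb p i z → ca p i z + cb p i z ≤ 1 → ∀ s : ℝ, 0 < s → s < 1 →
        p i + s • (z - p i) ∈ In p := fun z za zb zg s s0 s1 =>
      lemB_In hp hP h za zb zg (fun k hk ka kb => zg.trans (hv k hk ka kb)) s0 s1
    have hopen : ∀ z, 0 < ca p i z → 0 < cb p i z → ca p i z + cb p i z < 1 → z ∉ Bd p := by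
      intro z za zb zg
      set g := ca p i z + cb p i z with hg
      have hg0 : 0 < g := by linarith
      have e1 : z = p i + g • ((p i + (1/g) • (z - p i)) - p i) := by
        rw [add_sub_cancel_left, smul_smul, mul_one_div_cancel hg0.ne', one_smul]; ring
      have e2 : ca p i (p i + (1/g) • (z - p i)) = 1/g * ca p i z := by rw [ca_aff, ca_v]; ring
      have e3 : cb p i (p i + (1/g) • (z - p i)) = 1/g * cb p i z := by rw [cb_aff, cb_v]; ring
      rw [e1]
      refine (hI _ ?_ ?_ ?_ g hg0 zg).1
      · rw [e2]; positivity
      · rw [e3]; positivity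
      · rw [e2, e3, ← mul_add, ← hg, one_div_mul_cancel hg0.ne']
    have h20 := hp.two_ne
    have h10 := hp.one_ne
    refine ⟨i - 1, i + 1, ?_, ?_, ?_, ?_⟩
    · intro h; apply h20; linear_combination h
    · intro h; apply h10; linear_combination h
    · intro h; apply h3; linear_combination -h
    intro y hy
    obtain ⟨s, s0, s1, hys⟩ := open_mem hy
    have ya : ca p i y = 1 - s := by rw [hys, ca_aff, ca_u h, ca_w]; ring
    have yb : cb p i y = s := by rw [hys, cb_aff, cb_u, cb_w h]; ring
    have hyB : y ∉ Bd p := by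
      intro hyB
      obtain ⟨k, hk⟩ := mem_iUnion.1 hyB
      have hki : k ≠ i := by rintro rfl; have := E_i hk; linarith
      have hki' : k ≠ i - 1 := by rintro rfl; have := E_im hk; linarith
      have hki1 : k + 1 ≠ i := by intro h; apply hki'; rw [← h]; ring
      have hnot : ∀ j, p j ∈ E p k → 1 ≤ ca p i (p j) + cb p i (p j) := by
        intro j hj
        by_contra hc
        have f1 : ∀ᶠ e : ℝ in 𝓝[>] 0, 0 < ca p i y + e * (ca p i (p j) - ca p i y) := ev_pos (by linarith)
        have f2 : ∀ᶠ e : ℝ in 𝓝[>] 0, 0 < cb p i y + e * (cb p i (p j) - cb p i y) := ev_pos (by linarith)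
        have f3 : ∀ᶠ e : ℝ in 𝓝[>] 0, 0 < 1 + e * (-1) := ev_pos one_pos
        obtain ⟨e, ⟨⟨e1, e2⟩, e3⟩, e0⟩ := (((f1.and f2).and f3).and ev_gt).exists
        apply hopen (y + e • (p j - y))
        · rw [ca_aff]; exact e1
        · rw [cb_aff]; exact e2
        · rw [ca_aff, cb_aff]; nlinarith
        · exact E_sub k (aff_mem E_convex hk hj e0.le (by linarith))
      have g1 := hnot k (vert_mem k)
      have g2 := hnot (k+1) (vert_mem' k)
      obtain ⟨t, ht0, ht1, ht⟩ := mem_E_aff hk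
      have e1 := (congrArg (ca p i) ht).trans (ca_aff _ _ _ _)
      have e2 := (congrArg (cb p i) ht).trans (cb_aff _ _ _ _)
      -- t is interior or endpoints
      have hin : ∀ j, j ≠ i → ca p i (p j) + cb p i (p j) = 1 → cb p i (p j) ≤ 0 ∨ 1 ≤ cb p i (p j) := by
        intro j hj hg
        by_contra hc
        push Not at hc
        refine hne ⟨j, (hS j).2 ⟨hj, ?_, ?_, by linarith, by linarith, by linarith⟩⟩
        · rintro rfl; rw [cb_w h] at hc; linarith
        · rintro rfl; rw [cb_u] at hc; linarith
      have ht0' : 0 < t := by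
        rcases ht0.lt_or_eq with h' | h'
        · exact h'
        · rw [← h'] at e1 e2
          rcases hin k hki (by linarith) with h' | h' <;> linarith
      have ht1' : t < 1 := by
        rcases ht1.lt_or_eq with h' | h'
        · exact h'
        · rw [h'] at e1 e2
          rcases hin (k+1) hki1 (by linarith) with h' | h' <;> linarith
      have g1' : ca p i (p k) + cb p i (p k) = 1 := by nlinarith
      have g2' : ca p i (p (k+1)) + cb p i (p (k+1)) = 1 := by nlinarith
      have hmem : ∀ c : ℝ, (0 ≤ c ∧ c ≤ 1) → p i + ((1-c) • (-dv p (i-1)) + c • dv p i) ∈ E p k := by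
        intro c hc
        have hd : cb p i (p (k+1)) - cb p i (p k) ≠ 0 := by
          intro h0
          rw [h0, mul_zero, add_zero] at e2
          rcases hin k hki g1' with h' | h' <;> linarith
        rw [mem_E]
        refine ⟨(c - cb p i (p k)) / (cb p i (p (k+1)) - cb p i (p k)), ?_, ?_, ?_⟩
        · rcases hin k hki g1' with h1 | h1 <;> rcases hin (k+1) hki1 g2' with h2 | h2
          · nlinarith
          · apply div_nonneg <;> linarith
          · apply div_nonneg_of_nonpos <;> linarith
          · nlinarith
        · rcases hin k hki g1' with h1 | h1 <;> rcases hin (k+1) hki1 g2' with h2 | h2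
          · nlinarith
          · rw [div_le_one (by linarith)]; linarith
          · rw [div_le_one_of_neg (by linarith)]; linarith
          · nlinarith
        · set T := (c - cb p i (p k)) / (cb p i (p (k+1)) - cb p i (p k)) with hT
          have hTe : T * (cb p i (p (k+1)) - cb p i (p k)) = c - cb p i (p k) := div_mul_cancel₀ _ hd
          rw [cab h (p k + T • dv p k)]
          unfold dv
          rw [cb_aff, ca_aff]
          have a1 : ca p i (p k) + T * (ca p i (p (k+1)) - ca p i (p k)) = 1 - c := by
            have e1 : ca p i (p k) = 1 - cb p i (p k) := by linarith
            have e2 : ca p i (p (k+1)) = 1 - cb p i (p (k+1)) := by linarith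
            rw [e1, e2]; linarith
          have a2 : cb p i (p k) + T * (cb p i (p (k+1)) - cb p i (p k)) = c := by linarith
          rw [a1, a2]
      have hu0 : p (i-1) ∈ E p k := by
        have := hmem 0 (by norm_num)
        have e : p (i-1) = p i + ((1-(0:ℝ)) • (-dv p (i-1)) + (0:ℝ) • dv p i) := by
          rw [← dvm]; simp
        rwa [← e] at this
      have hw0 : p (i+1) ∈ E p k := by
        have := hmem 1 (by norm_num)
        have e : p (i+1) = p i + ((1-(1:ℝ)) • (-dv p (i-1)) + (1:ℝ) • dv p i) := by
          simp [dv]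
        rwa [← e] at this
      rcases hp.vert_in hu0 with h1 | h1 <;> rcases hp.vert_in hw0 with h2 | h2
      · exact hki' h1.symm
      · exact hki' h1.symm
      · apply h3; linear_combination h2 - h1
      · exact hki (add_right_cancel h2).symm
    -- interior
    have hm := hI y (by linarith) (by linarith) (by linarith) (1/2) (by norm_num) (by norm_num)
    apply In_seg hm
    rw [disjoint_left]
    intro x hx
    rw [segment_eq_image'] at hx
    obtain ⟨t, ⟨ht0, ht1⟩, rfl⟩ := hx
    have : p i + (1/2:ℝ) • (y - p i) + t • (y - (p i + (1/2:ℝ) • (y - p i))) = p i + (1/2 + t/2) • (y - p i) := by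
      simp only [Complex.real_smul]; push_cast; ring
    simp only [this]
    rcases ht1.lt_or_eq with h' | h'
    · exact (hI y (by linarith) (by linarith) (by linarith) _ (by linarith) (by linarith)).1
    · have : (1/2 + t/2) = 1 := by linarith
      rw [this, one_smul, add_sub_cancel]; exact hyB

end
end PD

open Set Metric
namespace PD
open Filter Topology

lemma sum_val {N : ℕ} [NeZero N] (g : ℕ → ℝ) : ∑ a : ZMod N, g a.val = ∑ m ∈ Finset.range N, g m := by
  cases N with
  | zero => exact absurd rfl (NeZero.ne 0)
  | succ N => exact Fin.sum_univ_eq_sum_range g (N+1)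

lemma val_cases {k : ℕ} (a : ZMod (k+1)) : (a.val < k ∧ (a+1).val = a.val + 1) ∨ (a.val = k ∧ (a+1).val = 0) := by
  have h := ZMod.val_lt a
  rcases Nat.lt_succ_iff_lt_or_eq.1 h with h | h
  · refine .inl ⟨h, ?_⟩
    have : a + 1 = ((a.val + 1 : ℕ) : ZMod (k+1)) := by push_cast; rw [ZMod.natCast_zmod_val]
    rw [this, ZMod.val_natCast_of_lt (by omega)]
  · refine .inr ⟨h, ?_⟩
    have : a + 1 = 0 := by
      rw [← ZMod.natCast_zmod_val a, h]; exact_mod_cast ZMod.natCast_self (k+1)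
    rw [this, ZMod.val_zero]

section
variable {n : ℕ} {p : ZMod n → ℂ}

/-- the sub-polygon with vertices `i, i+1, …, i+k` -/
def sub (p : ZMod n → ℂ) (i : ZMod n) (k : ℕ) : ZMod (k+1) → ℂ := fun a => p (i + (a.val : ZMod n))

lemma sub_E_lt {i : ZMod n} {k : ℕ} {a : ZMod (k+1)} (h : a.val < k) : E (sub p i k) a = E p (i + (a.val : ZMod n)) := by
  rcases val_cases a with h1 | h1
  · unfold E sub; rw [h1.2]; push_cast; rw [add_assoc]
  · omega

lemma sub_E_eq {i : ZMod n} {k : ℕ} {a : ZMod (k+1)} (h : a.val = k) :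
    E (sub p i k) a = segment ℝ (p (i + (k : ZMod n))) (p i) := by
  rcases val_cases a with h1 | h1
  · omega
  · unfold E sub; rw [h1.2, h]; simp

lemma sub_Bd {i : ZMod n} {k : ℕ} {x : ℂ} : x ∈ Bd (sub p i k) ↔
    (∃ m : ℕ, m < k ∧ x ∈ E p (i + (m : ZMod n))) ∨ x ∈ segment ℝ (p (i + (k : ZMod n))) (p i) := by
  unfold Bd
  rw [mem_iUnion]
  constructor
  · rintro ⟨a, ha⟩
    rcases val_cases a with h1 | h1
    · rw [sub_E_lt h1.1] at ha; exact .inl ⟨_, h1.1, ha⟩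
    · rw [sub_E_eq h1.1] at ha; exact .inr ha
  · rintro (⟨m, hm, hx⟩ | hx)
    · have hv : ((m : ℕ) : ZMod (k+1)).val = m := ZMod.val_natCast_of_lt (by omega)
      refine ⟨(m : ZMod (k+1)), ?_⟩
      rw [sub_E_lt (by rw [hv]; exact hm), hv]; exact hx
    · have hv : ((k : ℕ) : ZMod (k+1)).val = k := ZMod.val_natCast_of_lt (by omega)
      refine ⟨(k : ZMod (k+1)), ?_⟩
      rw [sub_E_eq hv]; exact hx

lemma cast_inj {a b : ℕ} (ha : a < n) (hb : b < n) (h : (a : ZMod n) = b) : a = b := by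
  have := congrArg ZMod.val h
  rwa [ZMod.val_natCast_of_lt ha, ZMod.val_natCast_of_lt hb] at this

lemma cast_ne {a b : ℕ} (ha : a < n) (hb : b < n) (h : a ≠ b) {i : ZMod n} : i + (a : ZMod n) ≠ i + b :=
  fun h' => h (cast_inj ha hb (add_left_cancel h'))

lemma seg_cases {a b x : ℂ} (h : x ∈ segment ℝ a b) : x = a ∨ x = b ∨ x ∈ openSegment ℝ a b := by
  rw [← insert_endpoints_openSegment] at h
  rcases h with h | h | h
  · exact .inl h
  · exact .inr (.inl h)
  · exact .inr (.inr h)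

/-- the diagonal meets an edge only in common vertices -/
lemma diag_E (hp : Simple p) {i : ZMod n} {k m : ℕ} (hk2 : k + 2 ≤ n) 
    (hD : Disjoint (openSegment ℝ (p (i + (k : ZMod n))) (p i)) (Bd p)) (hm : m < k) {x : ℂ}
    (hx : x ∈ segment ℝ (p (i + (k : ZMod n))) (p i)) (hxE : x ∈ E p (i + (m : ZMod n))) :
    (m + 1 = k ∧ x = p (i + (k : ZMod n))) ∨ (m = 0 ∧ x = p i) := by
  rcases seg_cases hx with h | h | h
  · subst h
    rcases hp.vert_in hxE with h1 | h1
    · exact absurd h1 (cast_ne (by omega) (by omega) (by omega))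
    · left
      refine ⟨?_, rfl⟩
      have : i + (k : ZMod n) = i + ((m + 1 : ℕ) : ZMod n) := by rw [h1]; push_cast; ring
      exact (cast_inj (by omega) (by omega) (add_left_cancel this)).symm
  · subst h
    right
    refine ⟨?_, rfl⟩
    rcases hp.vert_in hxE with h1 | h1
    · have : i + ((0:ℕ) : ZMod n) = i + (m : ZMod n) := by rw [← h1]; simp
      exact (cast_inj (by omega) (by omega) (add_left_cancel this)).symm
    · exfalso
      have : i + ((0:ℕ) : ZMod n) = i + ((m + 1 : ℕ) : ZMod n) := by
        push_cast; rw [← add_assoc, ← h1]; simp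
      exact cast_ne (by omega) (by omega) (by omega) this
  · exact absurd (E_sub _ hxE) (disjoint_left.1 hD h)

lemma Simple.sub (hp : Simple p) {i : ZMod n} {k : ℕ} (hk : 2 ≤ k) (hk2 : k + 2 ≤ n)
    (hD : Disjoint (openSegment ℝ (p (i + (k : ZMod n))) (p i)) (Bd p)) : Simple (sub p i k) := by
  have hval : ∀ a b : ZMod (k+1), a.val = b.val → a = b := fun a b h => ZMod.val_injective _ h
  have hlt : ∀ a : ZMod (k+1), a.val < k + 1 := fun a => ZMod.val_lt a
  refine ⟨by omega, ?_, ?_, ?_⟩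
  · intro a b h
    have h1 := add_left_cancel (hp.inj h)
    exact hval _ _ (cast_inj (by have := hlt a; omega) (by have := hlt b; omega) h1)
  · intro a
    apply Subset.antisymm
    · rintro x ⟨hx1, hx2⟩
      rcases val_cases a with h1 | h1
      · rw [sub_E_lt h1.1] at hx1
        rcases val_cases (a+1) with h2 | h2
        · rw [sub_E_lt h2.1, h1.2] at hx2
          have h3 := hp.consec (i + (a.val : ZMod n))
          push_cast at hx2
          rw [← add_assoc] at hx2
          have : x ∈ ({p (i + (a.val : ZMod n) + 1)} : Set ℂ) := by rw [← h3]; exact ⟨hx1, hx2⟩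
          unfold PD.sub
          rw [h1.2]; push_cast; rw [← add_assoc]; exact this
        · rw [sub_E_eq h2.1] at hx2
          rcases diag_E hp hk2 hD h1.1 hx2 hx1 with h3 | h3
          · unfold PD.sub; rw [h2.1]; exact h3.2
          · exfalso; omega
      · rw [sub_E_eq h1.1] at hx1
        have hv0 : (a+1).val < k := by omega
        rw [sub_E_lt hv0] at hx2
        rcases diag_E hp hk2 hD hv0 hx1 hx2 with h3 | h3
        · exfalso; omega
        · unfold PD.sub; rw [h1.2]; simpa using h3.2
    · rintro x rfl
      exact ⟨vert_mem' a, vert_mem (a+1)⟩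
  · intro a b h1 h2 h3
    have h1' : b.val ≠ a.val := fun h => h1 (hval _ _ h)
    have h2' : b.val ≠ (a+1).val := fun h => h2 (hval _ _ h)
    have h3' : a.val ≠ (b+1).val := fun h => h3 (hval _ _ h)
    rw [eq_empty_iff_forall_notMem]
    rintro x ⟨hx1, hx2⟩
    rcases val_cases a with ha | ha <;> rcases val_cases b with hb | hb
    · rw [sub_E_lt ha.1] at hx1
      rw [sub_E_lt hb.1] at hx2
      have := hp.nonconsec (i + (a.val : ZMod n)) (i + (b.val : ZMod n)) (cast_ne (by omega) (by omega) h1')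
        (by
          have := cast_ne (n := n) (i := i) (a := b.val) (b := a.val + 1) (by omega) (by omega) (by omega)
          push_cast at this; rwa [← add_assoc] at this)
        (by
          have := cast_ne (n := n) (i := i) (a := a.val) (b := b.val + 1) (by omega) (by omega) (by omega)
          push_cast at this; rwa [← add_assoc] at this)
      exact (this ▸ (⟨hx1, hx2⟩ : x ∈ E p (i + (a.val : ZMod n)) ∩ E p (i + (b.val : ZMod n))) : x ∈ (∅ : Set ℂ))
    · rw [sub_E_lt ha.1] at hx1
      rw [sub_E_eq hb.1] at hx2
      rcases diag_E hp hk2 hD ha.1 hx2 hx1 with h | h <;> omega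
    · rw [sub_E_eq ha.1] at hx1
      rw [sub_E_lt hb.1] at hx2
      rcases diag_E hp hk2 hD hb.1 hx1 hx2 with h | h <;> omega
    · omega

lemma W_range [NeZero n] (i : ZMod n) (x : ℂ) : W p x = ∑ m ∈ Finset.range n, ang (p (i + (m : ZMod n))) (p (i + ((m+1 : ℕ) : ZMod n))) x := by
  rw [← sum_val (N := n) (fun m : ℕ => ang (p (i + (m : ZMod n))) (p (i + ((m+1 : ℕ) : ZMod n))) x)]
  unfold W
  rw [← Equiv.sum_comp (Equiv.addLeft i)]
  apply Finset.sum_congr rfl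
  intro a _
  simp [add_assoc]

lemma W_sub (i : ZMod n) (k : ℕ) (x : ℂ) : W (sub p i k) x =
    ∑ m ∈ Finset.range k, ang (p (i + (m : ZMod n))) (p (i + ((m+1 : ℕ) : ZMod n))) x + ang (p (i + (k : ZMod n))) (p i) x := by
  have h := sum_val (N := k+1) (fun m : ℕ => if m < k then ang (p (i + (m : ZMod n))) (p (i + ((m+1 : ℕ) : ZMod n))) x
    else ang (p (i + (m : ZMod n))) (p i) x)
  rw [Finset.sum_range_succ, if_neg (lt_irrefl k)] at h
  rw [Finset.sum_congr rfl (fun m hm => if_pos (Finset.mem_range.1 hm))] at h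
  rw [← h]
  unfold W
  apply Finset.sum_congr rfl
  intro a _
  rcases val_cases a with h1 | h1
  · rw [if_pos h1.1]; unfold sub; rw [h1.2]
  · rw [if_neg (by omega)]; unfold sub; rw [h1.2]; simp

lemma W_add [NeZero n] {i : ZMod n} {k : ℕ} (hk : k ≤ n) {x : ℂ} (hx : x ∉ segment ℝ (p (i + (k : ZMod n))) (p i)) :
    W p x = W (sub p i k) x + W (sub p (i + (k : ZMod n)) (n - k)) x := by
  rw [W_range i x, W_sub, W_sub]
  have h1 := Finset.sum_range_add (fun m : ℕ => ang (p (i + (m : ZMod n))) (p (i + ((m+1 : ℕ) : ZMod n))) x) k (n-k)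
  rw [Nat.add_sub_cancel' hk] at h1
  have h2 : i + (k : ZMod n) + ((n - k : ℕ) : ZMod n) = i := by
    rw [add_assoc, ← Nat.cast_add, Nat.add_sub_cancel' hk]; simp
  rw [h1, h2, ang_swap hx]
  have h3 : ∀ m : ℕ, i + (k : ZMod n) + (m : ZMod n) = i + ((k + m : ℕ) : ZMod n) := by
    intro m; push_cast; ring
  simp only [h3]
  simp only [add_assoc]
  ring

end
end PD

open Set Metric
namespace PD
open Filter Topology

lemma ev_line {S : Set ℂ} (hS : IsOpen S) {y : ℂ} (hy : y ∈ S) (w : ℂ) : ∀ᶠ e : ℝ in 𝓝[>] 0, y + e • w ∈ S := by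
  have : Tendsto (fun e : ℝ => y + e • w) (𝓝 0) (𝓝 (y + (0:ℝ) • w)) := by
    apply Continuous.tendsto; fun_prop
  rw [zero_smul, add_zero] at this
  exact (this.mono_left nhdsWithin_le_nhds).eventually (hS.mem_nhds hy)

lemma cr_I {d : ℂ} (hd : d ≠ 0) : 0 < cr d (Complex.I * d) := by
  have := Complex.normSq_pos.2 hd
  rw [Complex.normSq_apply] at this
  unfold cr; simp; linarith

section
variable {n : ℕ} [NeZero n] {p : ZMod n → ℂ}

lemma In_open : IsOpen (In p) := by
  rw [isOpen_iff_eventually]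
  intro x hx
  have h1 : ∀ᶠ y in 𝓝 x, y ∉ Bd p := Bd_compact.isClosed.isOpen_compl.mem_nhds hx.1
  have h2 := (W_cont hx.1).eventually_ne hx.2
  filter_upwards [h1, h2] with y a b
  exact ⟨a, b⟩

lemma core_rel (hp : Simple p) : ∃ L : ℝ, (L = 0 ∨ L = 2 * Real.pi) ∧
    (∀ x, x ∉ Bd p → W p x = L ∨ W p x = L - 2 * Real.pi) ∧
    (∀ (i : ZMod n) (s : ℝ) (w : ℂ), 0 < s → s < 1 → 0 < cr (dv p i) w →
      ∀ᶠ e : ℝ in 𝓝[>] 0, p i + s • dv p i + e • w ∉ Bd p ∧ W p (p i + s • dv p i + e • w) = L) ∧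
    (∀ (i : ZMod n) (s : ℝ) (w : ℂ), 0 < s → s < 1 → cr (dv p i) w < 0 →
      ∀ᶠ e : ℝ in 𝓝[>] 0, p i + s • dv p i + e • w ∉ Bd p ∧ W p (p i + s • dv p i + e • w) = L - 2 * Real.pi) := by
  obtain ⟨u, hu⟩ := exists_Off hp
  obtain ⟨l, r, hl, hr, h1, h2, h3⟩ := core hp hu
  refine ⟨W p l, ?_, ?_, ?_, ?_⟩
  · rcases h3 with h | h
    · exact .inl h
    · right; rw [h1, h, zero_add]
  · intro x hx
    rcases h2 x hx with h | h
    · exact .inl (W_Jo h)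
    · right; rw [W_Jo h]; linarith
  · intro i s w h0 h1 hw
    filter_upwards [Anch.relint hp hl hu h0 h1 (by linarith)] with e he
    exact ⟨he.source_mem, W_Jo he⟩
  · intro i s w h0 h1 hw
    filter_upwards [Anch.relint hp hr (Off_neg hu) h0 h1 (by linarith)] with e he
    exact ⟨he.source_mem, by rw [W_Jo he]; linarith⟩

/-- a polygon with a diagonal -/
structure Split (p : ZMod n → ℂ) (i : ZMod n) (k : ℕ) : Prop where
  hp : Simple p
  hP : Pos p
  hk : 2 ≤ k
  hk2 : k + 2 ≤ n
  hD : openSegment ℝ (p (i + (k : ZMod n))) (p i) ⊆ In p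

variable {i : ZMod n} {k : ℕ}

lemma split_back (hk : k ≤ n) : i + (k : ZMod n) + ((n - k : ℕ) : ZMod n) = i := by
  rw [add_assoc, ← Nat.cast_add, Nat.add_sub_cancel' hk]; simp

lemma Split.symm (h : Split p i k) : Split p (i + (k : ZMod n)) (n - k) := by
  have h1 := h.hk
  have h2 := h.hk2
  refine ⟨h.hp, h.hP, by omega, by omega, ?_⟩
  rw [split_back (by omega), openSegment_symm]; exact h.hD

lemma Split.disj (h : Split p i k) : Disjoint (openSegment ℝ (p (i + (k : ZMod n))) (p i)) (Bd p) := by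
  rw [disjoint_left]; intro x hx; exact (h.hD hx).1

lemma Split.simple (h : Split p i k) : Simple (sub p i k) := h.hp.sub h.hk h.hk2 h.disj

lemma sub_last (p : ZMod n → ℂ) (i : ZMod n) (k : ℕ) : sub p i k (k : ZMod (k+1)) = p (i + (k : ZMod n)) ∧
    dv (sub p i k) (k : ZMod (k+1)) = p i - p (i + (k : ZMod n)) := by
  have hv : ((k : ℕ) : ZMod (k+1)).val = k := ZMod.val_natCast_of_lt (by omega)
  rcases val_cases (k : ZMod (k+1)) with h | h
  · omega
  · unfold dv sub
    rw [h.2, hv]; simp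

lemma Split.pos (h : Split p i k) : Pos (sub p i k) := by
  have hk := h.hk
  have hk2 := h.hk2
  have hpi := Real.pi_pos
  obtain ⟨L1, a1, b1, c1, -⟩ := core_rel h.simple
  obtain ⟨L2, a2, b2, -, d2⟩ := core_rel h.symm.simple
  obtain ⟨e1, f1⟩ := sub_last p i k
  obtain ⟨e2, f2⟩ := sub_last p (i + (k : ZMod n)) (n-k)
  rw [split_back (by omega)] at e2 f2
  set d := p i - p (i + (k : ZMod n)) with hd
  have hd0 : d ≠ 0 := by
    rw [← f1]; exact h.simple.dv_ne _
  have f2' : dv (sub p (i + (k : ZMod n)) (n-k)) ((n-k : ℕ) : ZMod (n-k+1)) = -d := by rw [f2, hd]; ring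
  have hc := cr_I hd0
  have g1 := c1 (k : ZMod (k+1)) (1/2) (Complex.I * d) (by norm_num) (by norm_num) (by rw [f1]; exact hc)
  have g2 := d2 ((n-k : ℕ) : ZMod (n-k+1)) (1/2) (Complex.I * d) (by norm_num) (by norm_num)
    (by rw [f2', cr_neg_left]; linarith)
  rw [e1, f1] at g1
  rw [e2, f2'] at g2
  set y := p (i + (k : ZMod n)) + (1/2 : ℝ) • d with hy
  have hy2 : p i + (1/2:ℝ) • (-d) = y := by
    rw [hy, hd]; simp only [Complex.real_smul]; push_cast; ring
  rw [hy2] at g2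
  have hyD : y ∈ openSegment ℝ (p (i + (k : ZMod n))) (p i) := by
    rw [openSegment_eq_image']
    exact ⟨1/2, ⟨by norm_num, by norm_num⟩, rfl⟩
  have g3 := ev_line In_open (h.hD hyD) (Complex.I * d)
  obtain ⟨e, ⟨⟨x1, x2⟩, x3, x4⟩, x5⟩ := ((g1.and g2).and g3).exists
  have hns : y + e • (Complex.I * d) ∉ segment ℝ (p (i + (k : ZMod n))) (p i) := fun hh => x1 (sub_Bd.2 (.inr hh))
  have hadd := W_add (by omega) hns
  rw [x2, x4, In_W h.hP x5] at hadd
  have hL : L1 = 2 * Real.pi := by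
    rcases a1 with a1 | a1
    · rcases a2 with a2 | a2 <;> linarith
    · exact a1
  intro x hx
  rcases b1 x hx with hh | hh
  · right; linarith
  · left; linarith

lemma Split.Bd_iff (h : Split p i k) {x : ℂ} (hx : x ∉ segment ℝ (p (i + (k : ZMod n))) (p i)) :
    x ∈ Bd p ↔ x ∈ Bd (sub p i k) ∨ x ∈ Bd (sub p (i + (k : ZMod n)) (n-k)) := by
  have hk := h.hk
  have hk2 := h.hk2
  rw [sub_Bd, sub_Bd, split_back (by omega), segment_symm ℝ (p i)]
  simp only [hx, or_false]
  constructor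
  · intro hB
    obtain ⟨j, hj⟩ := mem_iUnion.1 hB
    have hjv : j = i + (((j - i).val : ℕ) : ZMod n) := by rw [ZMod.natCast_zmod_val]; ring
    have hlt := ZMod.val_lt (j - i)
    rw [hjv] at hj
    by_cases hc : (j - i).val < k
    · exact .inl ⟨_, hc, hj⟩
    · refine .inr ⟨(j-i).val - k, by omega, ?_⟩
      rw [add_assoc, ← Nat.cast_add, Nat.add_sub_cancel' (by omega)]; exact hj
  · rintro (⟨m, -, hm⟩ | ⟨m, -, hm⟩) <;> exact E_sub _ hm

lemma Split.In_sub (h : Split p i k) : In (sub p i k) ⊆ In p := by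
  intro x hx
  have hk := h.hk
  have hk2 := h.hk2
  have hpi := Real.pi_pos
  have hseg : ∀ y, y ∉ Bd (sub p i k) → y ∉ segment ℝ (p (i + (k : ZMod n))) (p i) := fun y hy hh => hy (sub_Bd.2 (.inr hh))
  by_cases hB : x ∈ Bd (sub p (i + (k : ZMod n)) (n-k))
  · exfalso
    obtain ⟨a, ha⟩ := mem_iUnion.1 hB
    set q := sub p (i + (k : ZMod n)) (n-k) with hq
    obtain ⟨t, t0, t1, rfl⟩ := mem_E.1 ha
    -- a relative interior point
    obtain ⟨s, hs, s0, s1⟩ : ∃ s : ℝ, q a + s • dv q a ∈ In (sub p i k) ∧ 0 < s ∧ s < 1 := by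
      have hcont : Continuous (fun s : ℝ => q a + s • dv q a) := by fun_prop
      have hopen := (In_open (p := sub p i k)).preimage hcont
      have hcl : t ∈ closure (Ioo (0:ℝ) 1) := by
        rw [closure_Ioo (by norm_num)]; exact ⟨t0, t1⟩
      obtain ⟨s, hs, hs'⟩ := mem_closure_iff.1 hcl _ hopen hx
      exact ⟨s, hs, hs'.1, hs'.2⟩
    have g1 := ev_line In_open hs (Complex.I * dv q a)
    have g2 := ev_rel_left h.symm.simple h.symm.pos s0 s1 (cr_I (h.symm.simple.dv_ne a))
    obtain ⟨e, e1, e2⟩ := (g1.and g2).exists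
    have hadd := W_add (by omega) (hseg _ e1.1)
    rw [In_W h.pos e1, In_W h.symm.pos e2] at hadd
    have hnB : q a + s • dv q a + e • (Complex.I * dv q a) ∉ Bd p := by
      rw [h.Bd_iff (hseg _ e1.1)]
      rintro (hh | hh)
      · exact e1.1 hh
      · exact e2.1 hh
    rcases h.hP _ hnB with hh | hh <;> linarith
  · have hs := hseg x hx.1
    refine ⟨?_, ?_⟩
    · rw [h.Bd_iff hs]; rintro (hh | hh)
      · exact hx.1 hh
      · exact hB hh
    · rw [W_add (by omega) hs, In_W h.pos hx]
      rcases h.symm.pos x hB with hh | hh <;> rw [hh]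
      · linarith
      · linarith

lemma Split.In_cases (h : Split p i k) {x : ℂ} (hx : x ∈ In p) : x ∈ In (sub p i k) ∨
    x ∈ In (sub p (i + (k : ZMod n)) (n-k)) ∨ x ∈ openSegment ℝ (p (i + (k : ZMod n))) (p i) := by
  have hk := h.hk
  have hk2 := h.hk2
  by_cases hs : x ∈ segment ℝ (p (i + (k : ZMod n))) (p i)
  · rcases seg_cases hs with hh | hh | hh
    · exact absurd (hh ▸ vert_Bd _) hx.1
    · exact absurd (hh ▸ vert_Bd _) hx.1
    · exact .inr (.inr hh)
  · have hB := hx.1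
    rw [h.Bd_iff hs] at hB
    push Not at hB
    by_cases h1 : W (sub p i k) x = 0
    · right; left
      refine ⟨hB.2, fun h2 => hx.2 ?_⟩
      rw [W_add (by omega) hs, h1, h2, add_zero]
    · exact .inl ⟨hB.1, h1⟩

end
end PD

open Set Metric
namespace PD
open Filter Topology

/-- strictly positive convex combinations -/
def oTri (T : Finset ℂ) : Set ℂ := {x | ∃ w : ℂ → ℝ, (∀ y ∈ T, 0 < w y) ∧ ∑ y ∈ T, w y = 1 ∧ ∑ y ∈ T, w y • y = x}

def Has (x y : ℂ) (T : Finset ℂ) : Prop := x ∈ T ∧ y ∈ T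

section
variable {n : ℕ} [NeZero n] {p : ZMod n → ℂ}

def GS (p : ZMod n → ℂ) (x y : ℂ) : Prop :=
  (∃ i, (x = p i ∧ y = p (i+1)) ∨ (y = p i ∧ x = p (i+1))) ∨ openSegment ℝ x y ⊆ In p

structure GT (p : ZMod n → ℂ) (T : Finset ℂ) : Prop where
  card : T.card = 3
  vert : ∀ x ∈ T, x ∈ range p
  side : ∀ x ∈ T, ∀ y ∈ T, x ≠ y → GS p x y
  inn : oTri T ⊆ In p

/-- chains of triangles -/
inductive Chain (p : ZMod n → ℂ) : (Finset ℂ → Prop) → (Finset ℂ → Prop) → ℕ → Prop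
  | one {X Y : Finset ℂ → Prop} (T : Finset ℂ) (hT : GT p T) (hX : X T) (hY : Y T) : Chain p X Y 1
  | cons {X Y : Finset ℂ → Prop} {m : ℕ} (T : Finset ℂ) (hT : GT p T) (hX : X T) (x y : ℂ) (hxy : x ≠ y)
      (hx : x ∈ T) (hy : y ∈ T) (hs : openSegment ℝ x y ⊆ In p) (hc : Chain p (Has x y) Y m) : Chain p X Y (m+1)

lemma Chain.mono_left {X X' Y : Finset ℂ → Prop} {m : ℕ} (hX : ∀ T, X T → X' T) (h : Chain p X Y m) : Chain p X' Y m := by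
  cases h with
  | one T hT h1 h2 => exact .one T hT (hX _ h1) h2
  | cons T hT h1 x y hxy hx hy hs hc => exact .cons T hT (hX _ h1) x y hxy hx hy hs hc

lemma Chain.mono_right {X Y Y' : Finset ℂ → Prop} {m : ℕ} (hY : ∀ T, Y T → Y' T) (h : Chain p X Y m) : Chain p X Y' m := by
  induction h with
  | one T hT h1 h2 => exact .one T hT h1 (hY _ h2)
  | cons T hT h1 x y hxy hx hy hs hc ih => exact .cons T hT h1 x y hxy hx hy hs (ih hY)

lemma Chain.append {X Y Z : Finset ℂ → Prop} {m m' : ℕ} {x y : ℂ} (hxy : x ≠ y) (hs : openSegment ℝ x y ⊆ In p)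
    (h : Chain p X Z m) (hZ : ∀ T, Z T → Has x y T) (h' : Chain p (Has x y) Y m') : Chain p X Y (m + m') := by
  induction h with
  | one T hT h1 h2 => rw [add_comm]; exact .cons T hT h1 x y hxy (hZ _ h2).1 (hZ _ h2).2 hs h'
  | cons T hT h1 x' y' hxy' hx hy hs' hc ih =>
    rw [add_right_comm]
    exact .cons T hT h1 x' y' hxy' hx hy hs' (ih hZ)

lemma Chain.trans_poly {n' : ℕ} [NeZero n'] {q : ZMod n' → ℂ} (hGT : ∀ T, GT q T → GT p T) (hI : In q ⊆ In p)
    {X Y : Finset ℂ → Prop} {m : ℕ} (h : Chain q X Y m) : Chain p X Y m := by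
  induction h with
  | one T hT h1 h2 => exact .one T (hGT _ hT) h1 h2
  | cons T hT h1 x' y' hxy' hx hy hs' hc ih => exact .cons T (hGT _ hT) h1 x' y' hxy' hx hy (hs'.trans hI) ih

def Item (p : ZMod n → ℂ) (X : Finset ℂ → Prop) : Prop :=
  (∃ a ∈ In p, ∀ T : Finset ℂ, a ∈ convexHull ℝ (T : Set ℂ) → X T) ∨
  (∃ i, ∀ T, Has (p i) (p (i+1)) T → X T)

lemma In_hull {a : ℂ} (ha : a ∈ In p) : a ∈ convexHull ℝ (range p) := by
  by_contra hc
  obtain ⟨f, s, h1, h2⟩ := geometric_hahn_banach_point_closed (E := ℂ) (convex_convexHull ℝ (range p))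
    ((finite_range p).isCompact_convexHull ℝ).isClosed hc
  apply ha.2
  apply W_half (c := (f 1 : ℂ) - (f Complex.I : ℂ) * Complex.I)
  intro i
  have h3 := h2 (p i) (subset_convexHull _ _ ⟨i, rfl⟩)
  have h4 : ∀ z : ℂ, f z = z.re * f 1 + z.im * f Complex.I := by
    intro z
    have : z = z.re • (1:ℂ) + z.im • Complex.I := by simp
    conv_lhs => rw [this]
    rw [map_add, map_smul, map_smul]; simp
  have h5 : (((f 1 : ℂ) - (f Complex.I : ℂ) * Complex.I) * (p i - a)).re = f (p i) - f a := by
    rw [h4 (p i), h4 a]; simp; ring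
  rw [h5]; linarith

lemma zmod3 (i k : ZMod 3) : k = i ∨ k = i + 1 ∨ k = i - 1 := by
  revert i k; decide

lemma zmod3_univ (i : ZMod 3) : (Finset.univ : Finset (ZMod 3)) = {i, i+1, i-1} := by
  revert i; decide

lemma zmod3_a (i : ZMod 3) : i + 1 ∉ ({i - 1} : Finset (ZMod 3)) := by
  revert i; decide

lemma zmod3_b (i : ZMod 3) : i ∉ ({i + 1, i - 1} : Finset (ZMod 3)) := by
  revert i; decide

lemma sum3 {M : Type} [AddCommMonoid M] (i : ZMod 3) (g : ZMod 3 → M) :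
    ∑ y, g y = g i + g (i+1) + g (i-1) := by
  rw [zmod3_univ i, Finset.sum_insert (zmod3_b i), Finset.sum_insert (zmod3_a i), Finset.sum_singleton, add_assoc]

lemma hopen_of (hp : Simple p) (hP : Pos p) {i : ZMod n} (h : 0 < cr (dv p (i-1)) (dv p i))
    (hv : ∀ k, k ≠ i → 0 ≤ ca p i (p k) → 0 ≤ cb p i (p k) → 1 ≤ ca p i (p k) + cb p i (p k))
    {z : ℂ} (za : 0 < ca p i z) (zb : 0 < cb p i z) (zg : ca p i z + cb p i z < 1) : z ∈ In p := by
  set g := ca p i z + cb p i z with hg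
  have hg0 : 0 < g := by linarith
  have e1 : z = p i + g • ((p i + (1/g) • (z - p i)) - p i) := by
    rw [add_sub_cancel_left, smul_smul, mul_one_div_cancel hg0.ne', one_smul]; ring
  have e2 : ca p i (p i + (1/g) • (z - p i)) = 1/g * ca p i z := by rw [ca_aff, ca_v]; ring
  have e3 : cb p i (p i + (1/g) • (z - p i)) = 1/g * cb p i z := by rw [cb_aff, cb_v]; ring
  have e4 : ca p i (p i + (1/g) • (z - p i)) + cb p i (p i + (1/g) • (z - p i)) = 1 := by
    rw [e2, e3, ← mul_add, ← hg, one_div_mul_cancel hg0.ne']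
  rw [e1]
  refine lemB_In hp hP h ?_ ?_ e4.le ?_ hg0 zg
  · rw [e2]; positivity
  · rw [e3]; positivity
  · intro k hk ka kb; rw [e4]; exact hv k hk ka kb

end

lemma base3 {p : ZMod 3 → ℂ} (hp : Simple p) (hP : Pos p) {X Y : Finset ℂ → Prop} (hX : Item p X) (hY : Item p Y) :
    Chain p X Y 1 := by
  classical
  set T : Finset ℂ := Finset.univ.image p with hT
  have hTr : (T : Set ℂ) = range p := by simp [hT]
  have hmem : ∀ i, p i ∈ T := fun i => by simp [hT]
  have hIt : ∀ X : Finset ℂ → Prop, Item p X → X T := by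
    rintro X (⟨a, ha, h⟩ | ⟨i, h⟩)
    · exact h _ (by rw [hTr]; exact In_hull ha)
    · exact h _ ⟨hmem _, hmem _⟩
  refine .one T ⟨?_, ?_, ?_, ?_⟩ (hIt X hX) (hIt Y hY)
  · rw [hT, Finset.card_image_of_injective _ hp.inj, Finset.card_univ, ZMod.card]
  · intro x hx; rw [← hTr]; exact hx
  · intro x hx y hy hxy
    rw [← Finset.mem_coe, hTr] at hx hy
    obtain ⟨i, rfl⟩ := hx
    obtain ⟨j, rfl⟩ := hy
    left
    rcases zmod3 i j with h | h | h
    · exact absurd (by rw [h]) hxy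
    · exact ⟨i, .inl ⟨rfl, by rw [h]⟩⟩
    · exact ⟨j, .inr ⟨rfl, by rw [h, sub_add_cancel]⟩⟩
  · rintro x ⟨w, hw, hw1, rfl⟩
    obtain ⟨i, h⟩ := exists_convex hp hP
    have hsum : ∀ {M : Type} [AddCommMonoid M] (g : ℂ → M), ∑ y ∈ T, g y = g (p i) + g (p (i+1)) + g (p (i-1)) := by
      intro M _ g
      rw [hT, Finset.sum_image hp.inj.injOn]
      exact sum3 i (fun j => g (p j))
    rw [hsum] at hw1
    rw [hsum]
    have w0 := hw _ (hmem i)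
    have w1 := hw _ (hmem (i+1))
    have w2 := hw _ (hmem (i-1))
    have e0 : w (p i) = 1 - w (p (i+1)) - w (p (i-1)) := by linarith
    have ex : w (p i) • p i + w (p (i+1)) • p (i+1) + w (p (i-1)) • p (i-1)
        = p i + (w (p (i-1)) • (-dv p (i-1)) + w (p (i+1)) • dv p i) := by
      rw [e0, ← dvm]; unfold dv
      simp only [Complex.real_smul]; push_cast; ring
    have hca : ca p i (p i + (w (p (i-1)) • (-dv p (i-1)) + w (p (i+1)) • dv p i)) = w (p (i-1)) := by
      unfold ca
      rw [add_sub_cancel_left, cr_add, cr_smul, cr_smul, cr_self, cr_neg, cr_anti (dv p i)]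
      field_simp; ring
    have hcb : cb p i (p i + (w (p (i-1)) • (-dv p (i-1)) + w (p (i+1)) • dv p i)) = w (p (i+1)) := by
      unfold cb
      rw [add_sub_cancel_left, cr_add, cr_smul, cr_smul, cr_neg, cr_self]
      field_simp; ring
    rw [ex]
    apply hopen_of hp hP h
    · intro k hk ka kb
      rcases zmod3 i k with h' | h' | h'
      · exact absurd h' hk
      · rw [h', ca_w, cb_w h]; linarith
      · rw [h', ca_u h, cb_u]; linarith
    · rw [hca]; exact w2
    · rw [hcb]; exact w1
    · rw [hca, hcb]; linarith

section
variable {n : ℕ} [NeZero n] {p : ZMod n → ℂ} {i : ZMod n} {k : ℕ}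

lemma Split.GS (h : Split p i k) {x y : ℂ} (hs : GS (sub p i k) x y) : GS p x y := by
  rcases hs with ⟨a, ha⟩ | hs
  · rcases val_cases a with h1 | h1
    · have e1 : sub p i k a = p (i + (a.val : ZMod n)) := rfl
      have e2 : sub p i k (a+1) = p (i + (a.val : ZMod n) + 1) := by
        unfold sub; rw [h1.2]; push_cast; rw [add_assoc]
      rw [e1, e2] at ha
      exact .inl ⟨_, ha⟩
    · have e1 : sub p i k a = p (i + (k : ZMod n)) := by unfold sub; rw [h1.1]
      have e2 : sub p i k (a+1) = p i := by unfold sub; rw [h1.2]; simp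
      rw [e1, e2] at ha
      right
      rcases ha with ⟨rfl, rfl⟩ | ⟨rfl, rfl⟩
      · exact h.hD
      · rw [openSegment_symm]; exact h.hD
  · exact .inr (hs.trans h.In_sub)

lemma Split.GT (h : Split p i k) {T : Finset ℂ} (hT : GT (sub p i k) T) : GT p T := by
  refine ⟨hT.card, ?_, fun x hx y hy hxy => h.GS (hT.side x hx y hy hxy), hT.inn.trans h.In_sub⟩
  intro x hx
  obtain ⟨a, rfl⟩ := hT.vert x hx
  exact ⟨_, rfl⟩

lemma Split.chain (h : Split p i k) {X Y : Finset ℂ → Prop} {m : ℕ} (hc : Chain (sub p i k) X Y m) : Chain p X Y m :=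
  hc.trans_poly (fun _ hT => h.GT hT) h.In_sub

lemma hull_of_has {x y a : ℂ} (ha : a ∈ openSegment ℝ x y) {T : Finset ℂ} (hT : Has x y T) :
    a ∈ convexHull ℝ (T : Set ℂ) :=
  segment_subset_convexHull hT.1 hT.2 (openSegment_subset_segment _ _ _ ha)

/-- the diagonal as an item of the first part -/
lemma item_diag (p : ZMod n → ℂ) (i : ZMod n) (k : ℕ) : Item (sub p i k) (Has (p (i + (k : ZMod n))) (p i)) := by
  right
  refine ⟨(k : ZMod (k+1)), fun T hT => ?_⟩
  obtain ⟨e1, e2⟩ := sub_last p i k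
  have : sub p i k ((k : ZMod (k+1)) + 1) = p i := by
    unfold dv at e2; rw [e1] at e2; exact sub_left_injective e2
  rwa [e1, this] at hT

lemma Split.item (h : Split p i k) {X : Finset ℂ → Prop} (hX : Item p X) :
    Item (sub p i k) X ∨ Item (sub p (i + (k : ZMod n)) (n-k)) X := by
  have hk := h.hk
  have hk2 := h.hk2
  rcases hX with ⟨a, ha, hX⟩ | ⟨j, hX⟩
  · rcases h.In_cases ha with h1 | h1 | h1
    · exact .inl (.inl ⟨a, h1, hX⟩)
    · exact .inr (.inl ⟨a, h1, hX⟩)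
    · left
      rcases item_diag p i k with ⟨b, hb, hh⟩ | ⟨j, hj⟩
      · exact .inl ⟨b, hb, fun T hT => hX T (hull_of_has h1 (hh T hT))⟩
      · exact .inr ⟨j, fun T hT => hX T (hull_of_has h1 (hj T hT))⟩
  · have hjv : j = i + (((j - i).val : ℕ) : ZMod n) := by rw [ZMod.natCast_zmod_val]; ring
    have hlt := ZMod.val_lt (j - i)
    have key : ∀ (i' : ZMod n) (k' m : ℕ), m < k' → j = i' + (m : ZMod n) → Item (sub p i' k') X := by
      intro i' k' m hm hj
      have hv : ((m : ℕ) : ZMod (k'+1)).val = m := ZMod.val_natCast_of_lt (by omega)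
      right
      refine ⟨(m : ZMod (k'+1)), fun T hT => hX T ?_⟩
      rcases val_cases (m : ZMod (k'+1)) with h1 | h1
      · have e1 : sub p i' k' (m : ZMod (k'+1)) = p j := by unfold sub; rw [hv, hj]
        have e2 : sub p i' k' ((m : ZMod (k'+1)) + 1) = p (j+1) := by
          unfold sub; rw [h1.2, hv, hj]; push_cast; rw [add_assoc]
        rwa [e1, e2] at hT
      · omega
    by_cases hc : (j - i).val < k
    · exact .inl (key i k _ hc hjv)
    · refine .inr (key _ _ ((j-i).val - k) (by omega) ?_)
      rw [add_assoc, ← Nat.cast_add, Nat.add_sub_cancel' (by omega)]; exact hjv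

end

lemma chain_exists : ∀ (n : ℕ) [NeZero n] (p : ZMod n → ℂ), Simple p → Pos p →
    ∀ X Y : Finset ℂ → Prop, Item p X → Item p Y → ∃ m, m + 2 ≤ n ∧ Chain p X Y m := by
  intro n
  induction n using Nat.strong_induction_on with
  | _ n ih =>
  intro _ p hp hP X Y hX hY
  have hn := hp.three_le
  rcases hn.lt_or_eq with hn | hn
  · obtain ⟨i, j, h1, h2, h3, hD⟩ := exists_diag hp hP (by omega)
    have hjv : j = i + (((j - i).val : ℕ) : ZMod n) := by rw [ZMod.natCast_zmod_val]; ring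
    have hlt := ZMod.val_lt (j - i)
    set k := (j-i).val with hk
    have h : Split p i k := by
      refine ⟨hp, hP, ?_, ?_, ?_⟩
      · by_contra hc
        rcases (by omega : k = 0 ∨ k = 1) with h | h
        · apply h1; rw [hjv, h]; simp
        · apply h2; rw [hjv, h]; simp
      · by_contra hc
        have : k + 1 = n := by omega
        apply h3
        rw [hjv, add_assoc]
        have : ((k : ZMod n) + 1) = 0 := by
          have h4 : (((k + 1 : ℕ)) : ZMod n) = 0 := by rw [this]; simp
          exact_mod_cast h4
        rw [this, add_zero]
      · rw [← hjv, openSegment_symm]; exact hD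
    have hk1 := h.hk
    have hk2 := h.hk2
    have hne : p (i + (k : ZMod n)) ≠ p i := by
      rw [← hjv]; exact hp.inj.ne h1
    have d1 := item_diag p i k
    have d2 := item_diag p (i + (k : ZMod n)) (n-k)
    rw [split_back (by omega)] at d2
    have ih1 := ih (k+1) (by omega) (sub p i k) h.simple h.pos
    have ih2 := ih (n-k+1) (by omega) (sub p (i + (k : ZMod n)) (n-k)) h.symm.simple h.symm.pos
    have hD' : openSegment ℝ (p i) (p (i + (k : ZMod n))) ⊆ In p := by rw [openSegment_symm]; exact h.hD
    rcases h.item hX with hX | hX <;> rcases h.item hY with hY | hY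
    · obtain ⟨m, hm, hc⟩ := ih1 X Y hX hY
      exact ⟨m, by omega, h.chain hc⟩
    · obtain ⟨m, hm, hc⟩ := ih1 X _ hX d1
      obtain ⟨m', hm', hc'⟩ := ih2 _ Y d2 hY
      exact ⟨m + m', by omega, (h.chain hc).append hne.symm hD' (fun T hT => ⟨hT.2, hT.1⟩) (h.symm.chain hc')⟩
    · obtain ⟨m, hm, hc⟩ := ih2 X _ hX d2
      obtain ⟨m', hm', hc'⟩ := ih1 _ Y d1 hY
      exact ⟨m + m', by omega, (h.symm.chain hc).append hne h.hD (fun T hT => ⟨hT.2, hT.1⟩) (h.chain hc')⟩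
    · obtain ⟨m, hm, hc⟩ := ih2 X Y hX hY
      exact ⟨m, by omega, h.symm.chain hc⟩
  · subst hn
    exact ⟨1, by omega, base3 hp (by convert hP) hX hY⟩

end PD

open Set Metric
namespace PD
open Filter Topology

section
variable {n : ℕ} [NeZero n] {p : ZMod n → ℂ}

lemma tri_move {T : Finset ℂ} (hT : GT p T) {c d : ℂ} (hc : c ∈ In p) (hcT : c ∈ convexHull ℝ (T : Set ℂ))
    (hdT : d ∈ convexHull ℝ (T : Set ℂ)) {s : ℝ} (s0 : 0 ≤ s) (s1 : s < 1) : c + s • (d - c) ∈ In p := by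
  classical
  rcases s0.eq_or_lt with rfl | s0
  · simpa using hc
  rw [Finset.mem_convexHull'] at hcT hdT
  obtain ⟨w, w0, w1, wc⟩ := hcT
  obtain ⟨v, v0, v1, vd⟩ := hdT
  have t0 : 0 < 1 - s := by linarith
  by_cases hall : ∀ y ∈ T, 0 < (1 - s) * w y + s * v y
  · apply hT.inn
    refine ⟨fun y => (1 - s) * w y + s * v y, hall, ?_, ?_⟩
    · rw [Finset.sum_add_distrib, ← Finset.mul_sum, ← Finset.mul_sum, w1, v1]; ring
    · simp only [add_smul, mul_smul]
      rw [Finset.sum_add_distrib, ← Finset.smul_sum, ← Finset.smul_sum, wc, vd]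
      module
  · push Not at hall
    obtain ⟨z, hz, hle⟩ := hall
    have wz0 := w0 z hz
    have vz0 := v0 z hz
    have h1 := mul_nonneg t0.le wz0
    have h2 := mul_nonneg s0.le vz0
    have wz : w z = 0 := by
      have : (1 - s) * w z = 0 := by linarith
      exact (mul_eq_zero.1 this).resolve_left t0.ne'
    have vz : v z = 0 := by
      have : s * v z = 0 := by linarith
      exact (mul_eq_zero.1 this).resolve_left s0.ne'
    have hcard : (T.erase z).card = 2 := by rw [Finset.card_erase_of_mem hz, hT.card]
    obtain ⟨x, y, hxy, hTe⟩ := Finset.card_eq_two.1 hcard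
    have hx : x ∈ T := Finset.mem_of_mem_erase (a := z) (by rw [hTe]; simp)
    have hy : y ∈ T := Finset.mem_of_mem_erase (a := z) (by rw [hTe]; simp)
    rw [← Finset.sum_erase T wz, hTe, Finset.sum_pair hxy] at w1
    rw [← Finset.sum_erase T vz, hTe, Finset.sum_pair hxy] at v1
    rw [← Finset.sum_erase T (a := z) (by rw [wz, zero_smul]), hTe, Finset.sum_pair hxy] at wc
    rw [← Finset.sum_erase T (a := z) (by rw [vz, zero_smul]), hTe, Finset.sum_pair hxy] at vd
    have wx0 := w0 x hx
    have wy0 := w0 y hy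
    have vx0 := v0 x hx
    have vy0 := v0 y hy
    have hne : ∀ q ∈ T, c ≠ q := by
      rintro q hq rfl
      obtain ⟨i, hi⟩ := hT.vert _ hq
      apply hc.1; rw [← hi]; exact vert_Bd i
    have wx : 0 < w x := by
      refine wx0.lt_of_ne' fun h0 => hne y hy ?_
      rw [← wc, h0]
      have : w y = 1 := by linarith
      rw [this]; simp
    have wy : 0 < w y := by
      refine wy0.lt_of_ne' fun h0 => hne x hx ?_
      rw [← wc, h0]
      have : w x = 1 := by linarith
      rw [this]; simp
    have hcs : c ∈ segment ℝ x y := ⟨w x, w y, wx0, wy0, w1, wc⟩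
    rcases hT.side x hx y hy hxy with ⟨i, ⟨rfl, rfl⟩ | ⟨rfl, rfl⟩⟩ | h
    · exact absurd (E_sub i hcs) hc.1
    · rw [segment_symm] at hcs
      exact absurd (E_sub i hcs) hc.1
    · apply h
      refine ⟨(1-s) * w x + s * v x, (1-s) * w y + s * v y, by positivity, by positivity, ?_, ?_⟩
      · linear_combination (1 - s) * w1 + s * v1
      · rw [← wc, ← vd]; module

lemma tri_seg {T : Finset ℂ} (hT : GT p T) {c d : ℂ} (hc : c ∈ In p) (hcT : c ∈ convexHull ℝ (T : Set ℂ))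
    (hd : d ∈ In p) (hdT : d ∈ convexHull ℝ (T : Set ℂ)) : segment ℝ c d ⊆ In p := by
  rw [segment_eq_image']
  rintro _ ⟨s, ⟨s0, s1⟩, rfl⟩
  rcases s1.eq_or_lt with rfl | s1
  · simpa using hd
  · exact tri_move hT hc hcT hdT s0 s1

lemma tri_sees {T : Finset ℂ} (hT : GT p T) {c : ℂ} (hc : c ∈ In p) (hcT : c ∈ convexHull ℝ (T : Set ℂ))
    {i : ZMod n} (hi : p i ∈ T) : Sees p c i := by
  intro s s0 s1
  have := tri_move hT hc hcT (subset_convexHull ℝ _ hi) (s := 1 - s) (by linarith) (by linarith)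
  have e : p i + s • (c - p i) = c + (1 - s) • (p i - c) := by module
  rw [e]; exact this.1

lemma GS.toi (hp : Simple p) {i j : ZMod n} (h : GS p (p i) (p j)) : GSi p i j := by
  rcases h with ⟨k, ⟨h1, h2⟩ | ⟨h1, h2⟩⟩ | h
  · left; rw [hp.inj h1, hp.inj h2]
  · right; left; rw [hp.inj h1, hp.inj h2]
  · exact .inr (.inr h)

end

inductive PPath (S : Set ℂ) : ℂ → ℂ → ℕ → Prop
  | one {a b : ℂ} (h : segment ℝ a b ⊆ S) : PPath S a b 1
  | cons {a c b : ℂ} {k : ℕ} (h : segment ℝ a c ⊆ S) (t : PPath S c b k) : PPath S a b (k+1)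

def PL (S : Set ℂ) (a b : ℂ) (K : ℕ) : Prop := ∃ k ≤ K, PPath S a b k

lemma PL.cons {S : Set ℂ} {a b c : ℂ} {K : ℕ} (h : segment ℝ a c ⊆ S) (t : PL S c b K) : PL S a b (K+1) := by
  obtain ⟨k, hk, t⟩ := t
  exact ⟨k+1, by omega, .cons h t⟩

lemma PL.one {S : Set ℂ} {a b : ℂ} {K : ℕ} (h : segment ℝ a b ⊆ S) : PL S a b (K+1) :=
  ⟨1, by omega, .one h⟩

lemma PL.mono {S : Set ℂ} {a b : ℂ} {K : ℕ} (h : PL S a b K) : PL S a b (K+1) := by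
  obtain ⟨k, hk, t⟩ := h
  exact ⟨k, by omega, t⟩

lemma pairs_meet {T : Finset ℂ} (hT : T.card = 3) {x y x' y' : ℂ} (hxy : x ≠ y) (hxy' : x' ≠ y')
    (hx : x ∈ T) (hy : y ∈ T) (hx' : x' ∈ T) (hy' : y' ∈ T) : (x = x' ∨ x = y') ∨ (y = x' ∨ y = y') := by
  classical
  by_contra hc
  push Not at hc
  obtain ⟨⟨h1, h2⟩, h3, h4⟩ := hc
  have hs : ({x, y, x', y'} : Finset ℂ) ⊆ T := by
    intro z hz
    simp only [Finset.mem_insert, Finset.mem_singleton] at hz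
    rcases hz with rfl | rfl | rfl | rfl <;> assumption
  have := Finset.card_le_card hs
  rw [Finset.card_insert_of_notMem (by simp [*]), Finset.card_insert_of_notMem (by simp [*]),
    Finset.card_insert_of_notMem (by simp [*]), Finset.card_singleton] at this
  omega

section
variable {n : ℕ} [NeZero n] {p : ZMod n → ℂ}

lemma mid_open (x y : ℂ) : midpoint ℝ x y ∈ openSegment ℝ x y := by
  refine ⟨1/2, 1/2, by norm_num, by norm_num, by norm_num, ?_⟩
  rw [midpoint_eq_smul_add]
  rw [← smul_add]; norm_num

lemma chain_path (hp : Simple p) (hP : Pos p) {u : ZMod n → ℂ} (hu : Off 1 p u) {b : ℂ} (hb : b ∈ In p) :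
    ∀ (m : ℕ) (X : Finset ℂ → Prop), Chain p X (fun T => b ∈ convexHull ℝ (T : Set ℂ)) m →
      ∃ T, GT p T ∧ X T ∧ (∀ c ∈ In p, c ∈ convexHull ℝ (T : Set ℂ) → PL (In p) c b (m/2+1)) ∧
        (∀ i, p i ∈ T → ∀ᶠ e in 𝓝[>] (0:ℝ), PL (In p) (p i + e • u i) b (m/2+1)) := by
  intro m
  induction m using Nat.strong_induction_on with
  | _ m ih =>
  intro X h
  cases h with
  | one T hT hX hY =>
    refine ⟨T, hT, hX, fun c hc hcT => .one (tri_seg hT hc hcT hb hY), fun i hi => ?_⟩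
    filter_upwards [In_move hp hP hu hb (tri_sees hT hb hY hi)] with e he
    rw [segment_symm] at he
    exact .one he
  | cons T hT hX x y hxy hx hy hs hc =>
    refine ⟨T, hT, hX, ?_⟩
    cases hc with
    | one T' hT' hX' hY =>
      have hz := hs (mid_open x y)
      have zT := hull_of_has (mid_open x y) (T := T) ⟨hx, hy⟩
      have zT' := hull_of_has (mid_open x y) hX'
      have hzb := tri_seg hT' hz zT' hb hY
      refine ⟨fun c hc hcT => .cons (tri_seg hT hc hcT hz zT) (.one hzb), fun i hi => ?_⟩
      filter_upwards [In_move hp hP hu hz (tri_sees hT hz zT hi)] with e he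
      rw [segment_symm] at he
      exact .cons he (.one hzb)
    | @cons _ _ m T' hT' hX' x' y' hxy' hx' hy' hs' hc' =>
      obtain ⟨T'', hT'', hX'', -, hB⟩ := ih m (by omega) _ hc'
      have hw : ∃ w, w ∈ T ∧ w ∈ T'' := by
        rcases pairs_meet hT'.card hxy hxy' hX'.1 hX'.2 hx' hy' with (h | h) | (h | h)
        · exact ⟨x, hx, h ▸ hX''.1⟩
        · exact ⟨x, hx, h ▸ hX''.2⟩
        · exact ⟨y, hy, h ▸ hX''.1⟩
        · exact ⟨y, hy, h ▸ hX''.2⟩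
      obtain ⟨w, wT, wT''⟩ := hw
      obtain ⟨j, rfl⟩ := hT.vert w wT
      have hBj := hB j wT''
      have em : (m+1+1)/2+1 = (m/2+1)+1 := by omega
      rw [em]
      constructor
      · intro c hc hcT
        obtain ⟨e, h1, h2⟩ := ((In_move hp hP hu hc (tri_sees hT hc hcT wT)).and hBj).exists
        exact .cons h1 h2
      · intro i hi
        by_cases hij : i = j
        · subst hij
          filter_upwards [hBj] with e he using he.mono
        · have hg := GS.toi hp (hT.side _ hi _ wT (hp.inj.ne hij))
          obtain ⟨e, ⟨h1, h2⟩, h3⟩ := ((GSi.sees hp hP hu hij hg).and (ev_left hp hP hu j) |>.and hBj).exists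
          filter_upwards [In_move hp hP hu h2 h1] with e' he'
          rw [segment_symm] at he'
          exact .cons he' h3

lemma main_pos (hp : Simple p) (hP : Pos p) {a b : ℂ} (ha : a ∈ In p) (hb : b ∈ In p) : PL (In p) a b (n/2) := by
  obtain ⟨u, hu⟩ := exists_Off hp
  obtain ⟨m, hm, hc⟩ := chain_exists n p hp hP (fun T => a ∈ convexHull ℝ (T : Set ℂ))
    (fun T => b ∈ convexHull ℝ (T : Set ℂ)) (.inl ⟨a, ha, fun T h => h⟩) (.inl ⟨b, hb, fun T h => h⟩)
  obtain ⟨T, hT, haT, h, -⟩ := chain_path hp hP hu hb m _ hc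
  obtain ⟨k, hk, t⟩ := h a ha haT
  exact ⟨k, by omega, t⟩

lemma In_rev : In (rev p) = In p := by
  ext x
  unfold In
  simp only [mem_setOf_eq, rev_Bd]
  refine and_congr_right fun hx => ?_
  rw [rev_W hx]; simp

lemma main_all (hp : Simple p) {a b : ℂ} (ha : a ∈ In p) (hb : b ∈ In p) : PL (In p) a b (n/2) := by
  rcases pos_or hp with h | h
  · exact main_pos hp h ha hb
  · rw [← In_rev] at ha hb ⊢
    exact main_pos hp.rev h ha hb

lemma Jo_all (hp : Simple p) {x y : ℂ} (hx : x ∉ Bd p) (hy : y ∉ Bd p) (h : W p x = 0 ↔ W p y = 0) : Jo p x y := by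
  have key : ∀ {q : ZMod n → ℂ}, Simple q → Pos q → x ∉ Bd q → y ∉ Bd q → (W q x = 0 ↔ W q y = 0) → Jo q x y := by
    intro q hq hQ hx hy h
    apply Jo_of_W hq hQ hx hy
    rcases hQ x hx with h1 | h1 <;> rcases hQ y hy with h2 | h2
    · rw [h1, h2]
    · rw [h1, h.1 h1]
    · rw [h2, h.2 h2]
    · rw [h1, h2]
  rcases pos_or hp with hQ | hQ
  · exact key hp hQ hx hy h
  · have := key hp.rev hQ (by rwa [rev_Bd]) (by rwa [rev_Bd]) (by rw [rev_W hx, rev_W hy]; simpa using h)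
    unfold Jo at this ⊢
    rwa [rev_Bd] at this

end
end PD

namespace PD
open Filter Topology

lemma PPath.poly (φ : ℂ →ₗ[ℝ] Plane) {S : Set ℂ} {S' : Set Plane} (hS : ∀ z ∈ S, φ z ∈ S') {a b : ℂ} {k : ℕ}
    (h : PPath S a b k) : PolyPath S' (φ a) (φ b) k := by
  have hseg : ∀ {a c : ℂ}, segment ℝ a c ⊆ S → segment ℝ (φ a) (φ c) ⊆ S' := by
    intro a c h
    have : segment ℝ (φ a) (φ c) = φ '' segment ℝ a c := (image_segment ℝ φ.toAffineMap a c).symm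
    rw [this]
    rintro _ ⟨z, hz, rfl⟩
    exact hS z (h hz)
  induction h with
  | @one a b h =>
    refine ⟨![φ a, φ b], rfl, rfl, ?_⟩
    intro i
    fin_cases i
    exact hseg h
  | @cons a c b k h t ih =>
    obtain ⟨x, x0, x1, hx⟩ := ih
    refine ⟨Fin.cons (φ a) x, rfl, ?_, ?_⟩
    · rw [← Fin.succ_last, Fin.cons_succ, x1]
    · intro i
      refine Fin.cases ?_ (fun j => ?_) i
      · rw [Fin.castSucc_zero, Fin.cons_zero, Fin.cons_succ, x0]
        exact hseg h
      · rw [← Fin.succ_castSucc, Fin.cons_succ, Fin.cons_succ]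
        exact hx j

end PD

theorem stmt16 {n : ℕ} (p : ZMod n → Plane) (hP : IsSimplePolygon p) :
    ∀ a ∈ intP (polyBody p), ∀ b ∈ intP (polyBody p),
      ∃ k ≤ n / 2, PolyPath (intP (polyBody p)) a b k := by
  haveI : NeZero n := ⟨by have := hP.three_le; omega⟩
  let φ : ℂ ≃ₗᵢ[ℝ] Plane := Complex.orthonormalBasisOneI.repr
  set q : ZMod n → ℂ := fun i => φ.symm (p i) with hq
  have hφq : ∀ i, φ (q i) = p i := fun i => φ.apply_symm_apply _
  have hE : ∀ i, polyEdge p i = φ '' PD.E q i := by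
    intro i
    unfold polyEdge PD.E
    have := image_segment ℝ φ.toLinearEquiv.toLinearMap.toAffineMap (q i) (q (i+1))
    rw [← hφq i, ← hφq (i+1)]
    exact this.symm
  have hB : polyBody p = φ '' PD.Bd q := by
    unfold polyBody PD.Bd
    rw [image_iUnion]
    exact iUnion_congr hE
  have hBm : ∀ z, φ z ∈ polyBody p ↔ z ∈ PD.Bd q := by
    intro z; rw [hB]; exact φ.injective.mem_set_image
  have hs : PD.Simple q := by
    refine ⟨hP.three_le, φ.symm.injective.comp hP.inj, ?_, ?_⟩
    · intro i
      apply φ.injective.image_injective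
      rw [image_inter φ.injective, ← hE, ← hE, hP.consec, image_singleton, hφq]
    · intro i j h1 h2 h3
      apply φ.injective.image_injective
      rw [image_inter φ.injective, ← hE, ← hE, hP.nonconsec i j h1 h2 h3, image_empty]
  have hcomp : ∀ x y : ℂ, PD.Jo q x y → φ y ∈ connectedComponentIn (polyBody p)ᶜ (φ x) := by
    intro x y h
    obtain ⟨γ, hγ⟩ := h
    have hc : IsPreconnected (range fun t => φ (γ t)) :=
      isPreconnected_range (φ.continuous.comp γ.continuous)
    refine hc.subset_connectedComponentIn (x := φ x) ⟨0, by simp⟩ ?_ ⟨1, by simp⟩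
    rintro _ ⟨t, rfl⟩
    exact fun hm => hγ t ((hBm _).1 hm)
  have hin : ∀ x : ℂ, φ x ∈ intP (polyBody p) → x ∈ PD.In q := by
    intro x hx
    have hxB : x ∉ PD.Bd q := fun h => hx.1 ((hBm x).2 h)
    refine ⟨hxB, fun h0 => ?_⟩
    obtain ⟨R, hR⟩ := PD.W_far q
    obtain ⟨R', hR'⟩ := hx.2.exists_norm_le
    set y : ℂ := ((|R| + |R'| + 1 : ℝ) : ℂ) with hy
    have hyn : ‖y‖ = |R| + |R'| + 1 := by
      rw [hy, Complex.norm_real, Real.norm_of_nonneg (by positivity)]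
    have h1 := hR y (by rw [hyn]; have := le_abs_self R; have := abs_nonneg R'; linarith)
    have h2 := hR' _ (hcomp x y (PD.Jo_all hs hxB h1.1 (by simp [h0, h1.2])))
    rw [φ.norm_map, hyn] at h2
    have := le_abs_self R'
    have := abs_nonneg R
    linarith
  intro a ha b hb
  obtain ⟨x, rfl⟩ := φ.surjective a
  obtain ⟨y, rfl⟩ := φ.surjective b
  have hx := hin x ha
  have hy := hin y hb
  obtain ⟨k, hk, t⟩ := PD.main_all hs hx hy
  refine ⟨k, hk, t.poly φ.toLinearEquiv.toLinearMap ?_⟩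
  intro z hz
  have hJ := hcomp x z (PD.Jo_all hs hx.1 hz.1 (by simp [hx.2, hz.2]))
  refine ⟨fun h => hz.1 ((hBm z).1 h), ?_⟩
  have := connectedComponentIn_eq hJ
  change Bornology.IsBounded (connectedComponentIn (polyBody p)ᶜ (φ z))
  rw [← this]
  exact ha.2
end
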